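/- arXiv:2201.01345 — 2 statements merged into one kernel-verified Lean document; each statement's English description precedes it below -/
import Mathlib

section
/- (Theorem C, Second Quaternionic Nullstellensatz) For any p₁, …, p_m, q ∈ ℍ[x₁, …, x_d] the following are equivalent: (1) for every a ∈ ℍ^d such that p₁(a) = ⋯ = p_m(a) = 0 one has q(a) = 0; (2) q belongs to every real left ideal of ℍ[x₁, …, x_d] that contains p₁, …, p_m. -/
local notation "ℍ" => Quaternion ℝ

/-- Auxiliary quaternion units. -/
def qI : ℍ := ⟨0,1,0,0⟩
def qJ : ℍ := ⟨0,0,1,0⟩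
def qK : ℍ := ⟨0,0,0,1⟩

lemma quat_star_add_star (q : ℍ) :
    star q + star q = -(q + qI * q * qI + qJ * q * qJ + qK * q * qK) := by
  ext <;>
    simp [Quaternion.re_mul, Quaternion.imI_mul, Quaternion.imJ_mul,
      Quaternion.imK_mul] <;>
    simp [qI, qJ, qK]

lemma quat_star_eq (q : ℍ) :
    star q = -(2⁻¹ : ℍ) * (q + qI * q * qI + qJ * q * qJ + qK * q * qK) := by
  have h : q + qI * q * qI + qJ * q * qJ + qK * q * qK = -(star q + star q) :=
    neg_eq_iff_eq_neg.mp (quat_star_add_star q).symm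
  rw [h, neg_mul, mul_neg, neg_neg, ← two_mul, ← mul_assoc,
    inv_mul_cancel₀ (by
      intro h2
      have h3 : (2 : Quaternion ℝ).re = (0 : Quaternion ℝ).re := congrArg QuaternionAlgebra.re h2
      have h4 : (2 : ℝ) = 0 := h3
      norm_num at h4 : (2:ℍ) ≠ 0), one_mul]

/-- The ring `ℍ[x₁,…,x_d]` of all polynomial functions from `ℍ^d` to `ℍ`: the subring of
the ring of all functions `ℍ^d → ℍ` generated by the constant functions and the coordinate
functions. -/
def HPoly (d : ℕ) : Subring ((Fin d → ℍ) → ℍ) :=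
  Subring.closure
    ((Set.range fun c : ℍ => Function.const (Fin d → ℍ) c) ∪
      (Set.range fun i : Fin d => fun a : Fin d → ℍ => a i))

lemma star_mem_HPoly {d : ℕ} {f : (Fin d → ℍ) → ℍ} (hf : f ∈ HPoly d) :
    star f ∈ HPoly d := by
  induction hf using Subring.closure_induction with
  | mem g hg =>
      rcases hg with ⟨c, rfl⟩ | ⟨i, rfl⟩
      · have : star (Function.const (Fin d → ℍ) c) = Function.const (Fin d → ℍ) (star c) :=
          funext fun a => rfl
        rw [this]
        exact Subring.subset_closure (Or.inl ⟨star c, rfl⟩)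
      · have hX : (fun a : Fin d → ℍ => a i) ∈ HPoly d :=
          Subring.subset_closure (Or.inr ⟨i, rfl⟩)
        have hC : ∀ c : ℍ, Function.const (Fin d → ℍ) c ∈ HPoly d := fun c =>
          Subring.subset_closure (Or.inl ⟨c, rfl⟩)
        have hstar : star (fun a : Fin d → ℍ => a i) =
            Function.const (Fin d → ℍ) (-(2⁻¹ : ℍ)) *
              ((fun a : Fin d → ℍ => a i) +
                Function.const (Fin d → ℍ) qI * (fun a : Fin d → ℍ => a i) *
                  Function.const (Fin d → ℍ) qI +
                Function.const (Fin d → ℍ) qJ * (fun a : Fin d → ℍ => a i) *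
                  Function.const (Fin d → ℍ) qJ +
                Function.const (Fin d → ℍ) qK * (fun a : Fin d → ℍ => a i) *
                  Function.const (Fin d → ℍ) qK) :=
          funext fun a => quat_star_eq (a i)
        rw [hstar]
        exact mul_mem (hC _)
          (add_mem (add_mem (add_mem hX (mul_mem (mul_mem (hC _) hX) (hC _)))
            (mul_mem (mul_mem (hC _) hX) (hC _))) (mul_mem (mul_mem (hC _) hX) (hC _)))
  | one => rw [star_one]; exact one_mem _
  | mul x y hx hy ihx ihy => rw [star_mul]; exact mul_mem ihy ihx
  | add x y hx hy ihx ihy => rw [star_add]; exact add_mem ihx ihy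
  | neg x hx ihx => rw [star_neg]; exact neg_mem ihx
  | zero => rw [star_zero]; exact zero_mem _

noncomputable instance HPoly.instStarRing (d : ℕ) : StarRing (HPoly d) where
  star x := ⟨star x.1, star_mem_HPoly x.2⟩
  star_involutive x := Subtype.ext (star_star x.1)
  star_mul x y := Subtype.ext (star_mul x.1 y.1)
  star_add x y := Subtype.ext (star_add x.1 y.1)

/-- A left ideal `I` of a ring `A` with involution `star` is *real* if whenever
`star (a 0) * a 0 + ⋯ + star (a (k-1)) * a (k-1) ∈ I`, each `a i` lies in `I`.
(In Mathlib, `Ideal A` means a left ideal of `A`.) -/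
def Ideal.IsRealLeftIdeal {A : Type*} [Ring A] [StarRing A] (I : Ideal A) : Prop :=
  ∀ (k : ℕ) (a : Fin k → A), (∑ i, star (a i) * a i) ∈ I → ∀ i, a i ∈ I

/-!
A real left ideal `I` contains a polynomial `f` as soon as it contains `star f * f = |f|²`, and
`|f|²` is a real polynomial in the `4 * d` real coordinates of `ℍ^d` with the same zeros as `f`.
The real polynomials in `I` form a real ideal, so the theorem reduces to the real Nullstellensatz.

For the latter, a real ideal not containing `f` lies in a real prime not containing `f`, whose
residue field embeds into a real closed field `M`. The ideal then has a zero in `M` at which `f`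
does not vanish, and this sign condition has to be brought down to the ground field. Following
Cohen and Hörmander, the signs that a finite family of polynomials in one variable takes
simultaneously are determined by finitely many signs of coefficients: reducing a polynomial of
maximal degree modulo the others gives its signs at their roots, and between consecutive roots it is
monotone. Thom's lemma, that a root is determined by the signs of all derivatives, keeps the roots
over the two fields in the same order.
-/

section IntermediateValue

open Polynomial Set SignType

/-- The intermediate value property for polynomials over an ordered field `K`. It is equivalent to
`K` being real closed. -/
class HasPolynomialIVP (K : Type*) [Field K] [LinearOrder K] : Prop where
  exists_root_of_mul_neg (p : K[X]) {a b : K} (hab : a < b) (h : p.eval a * p.eval b < 0) :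
    ∃ c ∈ Ioo a b, p.eval c = 0

instance instHasPolynomialIVPReal : HasPolynomialIVP ℝ where
  exists_root_of_mul_neg p a b hab h := by
    have hp : ContinuousOn (fun x => p.eval x) (Icc a b) := p.continuousOn
    rcases mul_neg_iff.1 h with ⟨ha, hb⟩ | ⟨ha, hb⟩
    · exact intermediate_value_Ioo' hab.le hp ⟨hb, ha⟩
    · exact intermediate_value_Ioo hab.le hp ⟨ha, hb⟩

variable {K : Type*} [Field K] [LinearOrder K]

lemma exists_consecutive_root {p : K[X]} (hp : p ≠ 0) {a b : K} (hab : a < b)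
    (hb : p.eval b = 0) :
    ∃ c ∈ Ioc a b, p.eval c = 0 ∧ ∀ x ∈ Ioo a c, p.eval x ≠ 0 := by
  obtain ⟨c, ⟨hc, hc0⟩, hmin⟩ := exists_min_image ({x | x ∈ Ioc a b ∧ p.eval x = 0}) id
    ((finite_setOfPred_isRoot hp).subset fun x hx => hx.2) ⟨b, ⟨hab, le_rfl⟩, hb⟩
  exact ⟨c, hc, hc0, fun x hx hx0 =>
    (hmin x ⟨⟨hx.1, hx.2.le.trans hc.2⟩, hx0⟩).not_gt hx.2⟩

lemma exists_eq_pow_mul_pow_mul {K : Type*} [Field K] {p : K[X]} (hp : p ≠ 0) {a b : K}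
    (hab : a ≠ b) (ha : p.eval a = 0) (hb : p.eval b = 0) :
    ∃ (m n : ℕ) (q : K[X]), p = (X - C a) ^ (m + 1) * (X - C b) ^ (n + 1) * q ∧
      q.eval a ≠ 0 ∧ q.eval b ≠ 0 := by
  obtain ⟨r, hr, hra⟩ := exists_eq_pow_rootMultiplicity_mul_and_not_dvd p hp a
  obtain ⟨m, hm⟩ := Nat.exists_eq_succ_of_ne_zero ((rootMultiplicity_pos hp).2 ha).ne'
  have hr0 : r ≠ 0 := by rintro rfl; simp at hra
  have hrb : r.eval b = 0 := by
    rw [hr] at hb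
    simpa [sub_eq_zero, hab.symm] using hb
  obtain ⟨q, hq, hqb⟩ := exists_eq_pow_rootMultiplicity_mul_and_not_dvd r hr0 b
  obtain ⟨n, hn⟩ := Nat.exists_eq_succ_of_ne_zero ((rootMultiplicity_pos hr0).2 hrb).ne'
  refine ⟨m, n, q, ?_, fun h => hra ?_, fun h => hqb (dvd_iff_isRoot.2 h)⟩
  · rw [hr, hm, mul_assoc]
    nth_rw 1 [hq]
    rw [hn]
  · rw [hq]
    exact (dvd_iff_isRoot.2 h).mul_left _

variable [IsStrictOrderedRing K] [HasPolynomialIVP K] {p : K[X]} {a b x : K}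

lemma exists_derivative_root_of_factorization {m n : ℕ} {q : K[X]} (hab : a < b)
    (hp : p = (X - C a) ^ (m + 1) * (X - C b) ^ (n + 1) * q) (hq : 0 < q.eval a * q.eval b) :
    ∃ c ∈ Ioo a b, (derivative p).eval c = 0 := by
  -- The derivative is `(X - a) ^ m * (X - b) ^ n * r`, and `r` changes sign between `a` and `b`.
  set r : K[X] := C (m + 1 : K) * (X - C b) * q + C (n + 1 : K) * (X - C a) * q +
    (X - C a) * (X - C b) * derivative q with hr
  have hderiv : derivative p = (X - C a) ^ m * (X - C b) ^ n * r := by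
    rw [hp, hr]
    simp only [derivative_mul, derivative_X_sub_C_pow, Nat.cast_add, Nat.cast_one,
      add_tsub_cancel_right, map_add, map_one, map_natCast]
    ring
  have hra : r.eval a * r.eval b = -((m + 1) * (n + 1) * (b - a) ^ 2 * (q.eval a * q.eval b)) := by
    simp only [hr, eval_add, eval_mul, eval_sub, eval_X, eval_C]
    ring
  have hneg : r.eval a * r.eval b < 0 := by
    have : 0 < b - a := sub_pos.2 hab
    rw [hra]
    exact neg_neg_of_pos (by positivity)
  obtain ⟨c, hc, hc0⟩ := HasPolynomialIVP.exists_root_of_mul_neg r hab hneg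
  exact ⟨c, hc, by rw [hderiv, eval_mul, hc0, mul_zero]⟩

theorem exists_derivative_root (hab : a < b) (ha : p.eval a = 0) (hb : p.eval b = 0) :
    ∃ c ∈ Ioo a b, (derivative p).eval c = 0 := by
  rcases eq_or_ne p 0 with rfl | hp
  · obtain ⟨c, hc⟩ := exists_between hab
    exact ⟨c, hc, by simp⟩
  obtain ⟨d, hd, hd0, hroot⟩ := exists_consecutive_root hp hab hb
  obtain ⟨m, n, q, hpq, hqa, hqd⟩ := exists_eq_pow_mul_pow_mul hp hd.1.ne ha hd0
  have hq : 0 < q.eval a * q.eval d := by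
    refine (mul_ne_zero hqa hqd).lt_or_gt.resolve_left fun hneg => ?_
    obtain ⟨c, hc, hc0⟩ := HasPolynomialIVP.exists_root_of_mul_neg q hd.1 hneg
    exact hroot c hc (by rw [hpq, eval_mul, hc0, mul_zero])
  obtain ⟨c, hc, hc0⟩ := exists_derivative_root_of_factorization hd.1 hpq hq
  exact ⟨c, Ioo_subset_Ioo_right hd.2 hc, hc0⟩

theorem exists_eval_sub_eval_eq (p : K[X]) (hab : a < b) :
    ∃ c ∈ Ioo a b, p.eval b - p.eval a = (derivative p).eval c * (b - a) := by
  have hba : b - a ≠ 0 := (sub_pos.2 hab).ne'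
  set s := (p.eval b - p.eval a) / (b - a) with hs
  obtain ⟨c, hc, hc0⟩ := exists_derivative_root (p := p - C (p.eval a) - C s * (X - C a)) hab
    (by simp) (by simp [hs, hba])
  refine ⟨c, hc, ?_⟩
  have hcs : (derivative p).eval c = s := by simpa [sub_eq_zero] using hc0
  rw [hcs, hs, div_mul_cancel₀ _ hba]

lemma eval_le_eval_of_derivative_nonneg (hab : a ≤ b)
    (h : ∀ x ∈ Ioo a b, 0 ≤ (derivative p).eval x) : p.eval a ≤ p.eval b := by
  rcases hab.eq_or_lt with rfl | hab
  · rfl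
  obtain ⟨c, hc, hpc⟩ := exists_eval_sub_eval_eq p hab
  exact sub_nonneg.1 (hpc ▸ mul_nonneg (h c hc) (sub_pos.2 hab).le)

lemma eval_lt_eval_of_derivative_pos (hab : a < b)
    (h : ∀ x ∈ Ioo a b, 0 < (derivative p).eval x) : p.eval a < p.eval b := by
  obtain ⟨c, hc, hpc⟩ := exists_eval_sub_eval_eq p hab
  exact sub_pos.1 (hpc ▸ mul_pos (h c hc) (sub_pos.2 hab))

lemma eval_eq_eval_of_derivative_eq_zero (hab : a < b)
    (h : ∀ x ∈ Ioo a b, (derivative p).eval x = 0) : p.eval a = p.eval b := by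
  obtain ⟨c, hc, hpc⟩ := exists_eval_sub_eval_eq p hab
  rw [h c hc, zero_mul, sub_eq_zero] at hpc
  exact hpc.symm

lemma sign_eval_eq_of_forall_ne_zero {s : Set K} (hs : s.OrdConnected)
    (h : ∀ x ∈ s, p.eval x ≠ 0) (ha : a ∈ s) (hb : b ∈ s) :
    sign (p.eval a) = sign (p.eval b) := by
  wlog hab : a < b generalizing a b
  · rcases (not_lt.1 hab).eq_or_lt with rfl | hba
    exacts [rfl, (this hb ha hba).symm]
  rcases (mul_ne_zero (h a ha) (h b hb)).lt_or_gt with hneg | hpos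
  · obtain ⟨c, hc, hc0⟩ := HasPolynomialIVP.exists_root_of_mul_neg p hab hneg
    exact absurd hc0 (h c (hs.out ha hb (Ioo_subset_Icc_self hc)))
  · rcases mul_pos_iff.1 hpos with ⟨h1, h2⟩ | ⟨h1, h2⟩
    · rw [sign_pos h1, sign_pos h2]
    · rw [sign_neg h1, sign_neg h2]

lemma exists_right_sign_eval_eq (hab : a < b) (hp : p.eval a ≠ 0) :
    ∃ c ∈ Ioo a b, sign (p.eval c) = sign (p.eval a) := by
  have hp0 : p ≠ 0 := by rintro rfl; simp at hp
  obtain ⟨d, hd, hd0⟩ : ∃ d ∈ Ioc a b, ∀ x ∈ Ioo a d, p.eval x ≠ 0 := by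
    obtain ⟨d, hd, -, hx⟩ := exists_consecutive_root (p := p * (X - C b))
      (mul_ne_zero hp0 (X_sub_C_ne_zero b)) hab (by simp)
    exact ⟨d, hd, fun x hx' hx0 => hx x hx' (by simp [hx0])⟩
  obtain ⟨c, hc⟩ := exists_between hd.1
  refine ⟨c, ⟨hc.1, hc.2.trans_le hd.2⟩, ?_⟩
  refine sign_eval_eq_of_forall_ne_zero (s := Ico a d) ordConnected_Ico (fun x hx => ?_)
    ⟨hc.1.le, hc.2⟩ ⟨le_rfl, hd.1⟩
  rcases hx.1.eq_or_lt with rfl | hax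
  exacts [hp, hd0 x ⟨hax, hx.2⟩]

lemma exists_left_sign_eval_eq (hab : a < b) (hp : p.eval b ≠ 0) :
    ∃ c ∈ Ioo a b, sign (p.eval c) = sign (p.eval b) := by
  obtain ⟨c, hc, hs⟩ := exists_right_sign_eval_eq (p := p.comp (-X)) (neg_lt_neg hab)
    (by simpa using hp)
  exact ⟨-c, ⟨lt_neg_of_lt_neg hc.2, neg_lt_of_neg_lt hc.1⟩, by simpa using hs⟩

end IntermediateValue

section Thom

open Polynomial Set SignType

variable {K : Type*} [Field K] [LinearOrder K] [IsStrictOrderedRing K] [HasPolynomialIVP K]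
  {p : K[X]} {x y z : K}

lemma sign_eval_eq_of_iterate_derivative
    (h : ∀ k, sign ((derivative^[k] p).eval x) = sign ((derivative^[k] p).eval y))
    (hz : z ∈ Icc x y) : sign (p.eval z) = sign (p.eval x) := by
  induction hn : p.natDegree using Nat.strong_induction_on generalizing p z with | _ n ih
  have h0 : sign (p.eval x) = sign (p.eval y) := h 0
  rcases Nat.eq_zero_or_pos n with rfl | hpos
  · rw [eq_C_of_natDegree_eq_zero hn, eval_C, eval_C]
  have hderiv : ∀ t ∈ Icc x y, sign ((derivative p).eval t) = sign ((derivative p).eval x) :=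
    fun t ht => ih _ (hn ▸ natDegree_derivative_lt (hn.trans_ne hpos.ne')) (fun k => h (k + 1))
      ht rfl
  have mono : ∀ q : K[X], (∀ t ∈ Icc x y, 0 ≤ (derivative q).eval t) →
      q.eval x ≤ q.eval z ∧ q.eval z ≤ q.eval y := fun q hq =>
    ⟨eval_le_eval_of_derivative_nonneg hz.1 fun t ht => hq t ⟨ht.1.le, ht.2.le.trans hz.2⟩,
      eval_le_eval_of_derivative_nonneg hz.2 fun t ht => hq t ⟨hz.1.trans ht.1.le, ht.2.le⟩⟩
  rcases le_total 0 ((derivative p).eval x) with hx | hx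
  · obtain ⟨h1, h2⟩ := mono p fun t ht =>
      sign_nonneg_iff.1 ((hderiv t ht).symm ▸ sign_nonneg_iff.2 hx)
    exact le_antisymm (h0 ▸ sign.monotone h2) (sign.monotone h1)
  · obtain ⟨h1, h2⟩ := mono (-p) fun t ht => by
      simpa using sign_nonpos_iff.1 ((hderiv t ht).symm ▸ sign_nonpos_iff.2 hx)
    simp only [eval_neg, neg_le_neg_iff] at h1 h2
    exact le_antisymm (sign.monotone h1) (h0 ▸ sign.monotone h2)

theorem eq_of_root_of_iterate_derivative (hp : p ≠ 0) (hx : p.eval x = 0)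
    (h : ∀ k, sign ((derivative^[k] p).eval x) = sign ((derivative^[k] p).eval y)) : x = y := by
  have hy : p.eval y = 0 := by
    have h0 : sign (p.eval x) = sign (p.eval y) := h 0
    rwa [hx, sign_zero, eq_comm, sign_eq_zero_iff] at h0
  wlog hxy : x ≤ y generalizing x y
  · exact (this hy (fun k => (h k).symm) hx (le_of_not_ge hxy)).symm
  by_contra hne
  refine Icc_infinite (hxy.lt_of_ne hne) ((finite_setOfPred_isRoot hp).subset fun z hz => ?_)
  rw [mem_ofPred_eq, IsRoot.def, ← sign_eq_zero_iff, sign_eval_eq_of_iterate_derivative h hz,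
    hx, sign_zero]

lemma exists_eval_sub_eval_eq_of_iterate_derivative
    (h : ∀ k, sign ((derivative^[k + 1] p).eval x) = sign ((derivative^[k + 1] p).eval y)) :
    ∃ d, sign d = sign ((derivative p).eval x) ∧ p.eval y - p.eval x = d * (y - x) := by
  rcases lt_trichotomy x y with hxy | rfl | hxy
  · obtain ⟨c, hc, hpc⟩ := exists_eval_sub_eval_eq p hxy
    exact ⟨_, sign_eval_eq_of_iterate_derivative h (Ioo_subset_Icc_self hc), hpc⟩
  · exact ⟨_, rfl, by simp⟩
  · obtain ⟨c, hc, hpc⟩ := exists_eval_sub_eval_eq p hxy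
    refine ⟨(derivative p).eval c, ?_, by linear_combination -hpc⟩
    exact (sign_eval_eq_of_iterate_derivative (fun k => (h k).symm)
      (Ioo_subset_Icc_self hc)).trans (h 0).symm

theorem lt_iff_of_iterate_derivative (h0 : sign (p.eval x) ≠ sign (p.eval y))
    (h : ∀ k, sign ((derivative^[k + 1] p).eval x) = sign ((derivative^[k + 1] p).eval y)) :
    x < y ↔ (sign (p.eval x) < sign (p.eval y) ↔ sign ((derivative p).eval x) = 1) := by
  obtain ⟨d, hd, hpd⟩ := exists_eval_sub_eval_eq_of_iterate_derivative h
  have hsign : sign (p.eval x) < sign (p.eval y) ↔ p.eval x < p.eval y :=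
    ⟨sign.monotone.reflect_lt, fun hlt => (sign.monotone hlt.le).lt_of_ne h0⟩
  have hne : d * (y - x) ≠ 0 := by
    rw [← hpd, sub_ne_zero]
    exact fun h => h0 (by rw [h])
  rw [← hd, hsign, ← sub_pos, ← sub_pos (a := p.eval y), hpd, sign_eq_one_iff]
  rcases (left_ne_zero_of_mul hne).lt_or_gt with hd | hd
  · rcases (right_ne_zero_of_mul hne).lt_or_gt with hyx | hyx
    · simp [hyx.not_gt, mul_pos_of_neg_of_neg hd hyx, hd.not_gt]
    · simp [hyx, (mul_neg_of_neg_of_pos hd hyx).not_gt, hd.not_gt]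
  · simp only [mul_pos_iff_of_pos_left hd, hd, iff_true]

end Thom

section SignAttainment

open Polynomial Set SignType

variable {R S : Type*} [Field R] [LinearOrder R] [IsStrictOrderedRing R] [HasPolynomialIVP R]
  [Field S] [LinearOrder S] [IsStrictOrderedRing S] [HasPolynomialIVP S]
  {p : R[X]} {q : S[X]} {a b z : R} {a' b' w : S}

lemma exists_sign_eval_eq_of_derivative_pos (hz : z ∈ Ioo a b) (hab' : a' < b')
    (ha : sign (p.eval a) = sign (q.eval a')) (hb : sign (p.eval b) = sign (q.eval b'))
    (hp : ∀ x ∈ Ioo a b, 0 < (derivative p).eval x) :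
    ∃ w ∈ Ioo a' b', sign (q.eval w) = sign (p.eval z) := by
  have haz : p.eval a < p.eval z :=
    eval_lt_eval_of_derivative_pos hz.1 fun x hx => hp x ⟨hx.1, hx.2.trans hz.2⟩
  have hzb : p.eval z < p.eval b :=
    eval_lt_eval_of_derivative_pos hz.2 fun x hx => hp x ⟨hz.1.trans hx.1, hx.2⟩
  rcases lt_trichotomy (p.eval z) 0 with hz0 | hz0 | hz0
  · rw [sign_neg (haz.trans hz0), eq_comm, sign_eq_neg_one_iff] at ha
    obtain ⟨w, hw, hqw⟩ := exists_right_sign_eval_eq hab' ha.ne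
    exact ⟨w, hw, by rw [hqw, sign_neg ha, sign_neg hz0]⟩
  · rw [sign_neg (haz.trans_eq hz0), eq_comm, sign_eq_neg_one_iff] at ha
    rw [sign_pos (hz0.symm.trans_lt hzb), eq_comm, sign_eq_one_iff] at hb
    obtain ⟨w, hw, hqw⟩ :=
      HasPolynomialIVP.exists_root_of_mul_neg q hab' (mul_neg_of_neg_of_pos ha hb)
    exact ⟨w, hw, by rw [hqw, hz0, sign_zero, sign_zero]⟩
  · rw [sign_pos (hz0.trans hzb), eq_comm, sign_eq_one_iff] at hb
    obtain ⟨w, hw, hqw⟩ := exists_left_sign_eval_eq hab' hb.ne'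
    exact ⟨w, hw, by rw [hqw, sign_pos hb, sign_pos hz0]⟩

lemma exists_sign_eval_eq (hz : z ∈ Ioo a b) (hw : w ∈ Ioo a' b')
    (ha : sign (p.eval a) = sign (q.eval a')) (hb : sign (p.eval b) = sign (q.eval b'))
    (hp : ∀ x ∈ Ioo a b, sign ((derivative p).eval x) = sign ((derivative p).eval z))
    (hq : ∀ x ∈ Ioo a' b', sign ((derivative q).eval x) = sign ((derivative p).eval z)) :
    ∃ w ∈ Ioo a' b', sign (q.eval w) = sign (p.eval z) := by
  have hab' : a' < b' := hw.1.trans hw.2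
  rcases lt_trichotomy ((derivative p).eval z) 0 with h | h | h
  · obtain ⟨w, hw, hqw⟩ := exists_sign_eval_eq_of_derivative_pos (p := -p) (q := -q) hz hab'
      (by simp [Left.sign_neg, ha]) (by simp [Left.sign_neg, hb]) fun x hx => by
        simpa [sign_neg h, sign_eq_neg_one_iff] using hp x hx
    exact ⟨w, hw, by simpa [Left.sign_neg] using hqw⟩
  · simp only [h, sign_zero, sign_eq_zero_iff] at hp hq
    refine ⟨w, hw, ?_⟩
    rw [← eval_eq_eval_of_derivative_eq_zero hw.1 fun x hx => hq x ⟨hx.1, hx.2.trans hw.2⟩,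
      ← eval_eq_eval_of_derivative_eq_zero hz.1 fun x hx => hp x ⟨hx.1, hx.2.trans hz.2⟩, ha]
  · exact exists_sign_eval_eq_of_derivative_pos hz hab' ha hb fun x hx => by
      simpa [sign_pos h, sign_eq_one_iff] using hp x hx

lemma exists_isolating_Ioo_of_finite {α : Type*} [LinearOrder α] {s : Set α} (hs : s.Finite)
    {l u z : α} (hl : l ∈ s) (hu : u ∈ s) (hz : z ∈ Ioo l u) (hzs : z ∉ s) :
    ∃ a ∈ s, ∃ b ∈ s, l ≤ a ∧ b ≤ u ∧ z ∈ Ioo a b ∧ ∀ x ∈ Ioo a b, x ∉ s := by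
  obtain ⟨a, ⟨ha, haz⟩, hmax⟩ := exists_max_image (s ∩ Iio z) id (hs.inter_of_left _)
    ⟨l, hl, hz.1⟩
  obtain ⟨b, ⟨hb, hzb⟩, hmin⟩ := exists_min_image (s ∩ Ioi z) id (hs.inter_of_left _)
    ⟨u, hu, hz.2⟩
  refine ⟨a, ha, b, hb, hmax l ⟨hl, hz.1⟩, hmin u ⟨hu, hz.2⟩, ⟨haz, hzb⟩, fun x hx hxs => ?_⟩
  rcases lt_trichotomy x z with h | rfl | h
  exacts [(hmax x ⟨hxs, h⟩).not_gt hx.1, hzs hxs, (hmin x ⟨hxs, h⟩).not_gt hx.2]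

end SignAttainment

section Elimination

open Polynomial Set SignType

universe u

/-- The ring homomorphisms `i` and `j` into ordered rings give the same sign to every element of
`G`. For `i = eval₂RingHom i₀ z` and `j = eval₂RingHom j₀ w` this compares the signs of the
polynomials in `G` at the points `z` and `w`. -/
def SignsAgreeOn {A R S : Type*} [CommRing A] [CommRing R] [LinearOrder R] [CommRing S]
    [LinearOrder S] (G : Set A) (i : A →+* R) (j : A →+* S) : Prop :=
  ∀ c ∈ G, sign (i c) = sign (j c)

namespace SignsAgreeOn

variable {A R S : Type*} [CommRing A] [CommRing R] [LinearOrder R] [CommRing S] [LinearOrder S]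
  {G H : Set A} {i : A →+* R} {j : A →+* S}

lemma symm (h : SignsAgreeOn G i j) : SignsAgreeOn G j i := fun c hc => (h c hc).symm

lemma mono (hGH : G ⊆ H) (h : SignsAgreeOn H i j) : SignsAgreeOn G i j :=
  fun c hc => h c (hGH hc)

lemma trans {T : Type*} [CommRing T] [LinearOrder T] {k : A →+* T} (h : SignsAgreeOn G i j)
    (h' : SignsAgreeOn G j k) : SignsAgreeOn G i k := fun c hc => (h c hc).trans (h' c hc)

lemma apply_eq_zero_iff (h : SignsAgreeOn G i j) {c : A} (hc : c ∈ G) : i c = 0 ↔ j c = 0 := by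
  rw [← sign_eq_zero_iff, h c hc, sign_eq_zero_iff]

end SignsAgreeOn

variable {A R S : Type*} [CommRing A] [Field R] [LinearOrder R] [Field S] [LinearOrder S]
  {F : Set A[X]} {f g : A[X]} {i : A →+* R} {j : A →+* S} {x y : R} {x' y' : S}

/-- The coefficients of the polynomials in `F`. -/
def coeffSet (F : Set A[X]) : Set A := {c | ∃ g ∈ F, ∃ k, g.coeff k = c}

/-- The roots of the members of `F` that `i` does not map to the zero polynomial. -/
def properRoots (i : A →+* R) (F : Set A[X]) : Set R :=
  {x | ∃ g ∈ F, g.map i ≠ 0 ∧ g.eval₂ i x = 0}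

lemma finite_coeffSet (hF : F.Finite) : (coeffSet F).Finite := by
  have hcoeff (g : A[X]) : (range g.coeff).Finite :=
    ((g.support.finite_toSet.image g.coeff).union (finite_singleton 0)).subset <| by
      rintro _ ⟨k, rfl⟩
      by_cases hk : g.coeff k = 0
      · exact Or.inr hk
      · exact Or.inl ⟨k, mem_support_iff.2 hk, rfl⟩
  exact (hF.biUnion fun g _ => hcoeff g).subset fun c ⟨g, hg, hc⟩ => mem_biUnion hg hc

lemma SignsAgreeOn.map_eq_zero_iff (h : SignsAgreeOn (coeffSet F) i j) (hg : g ∈ F) :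
    g.map i = 0 ↔ g.map j = 0 := by
  simp only [Polynomial.ext_iff, coeff_map, coeff_zero]
  exact forall_congr' fun k => h.apply_eq_zero_iff ⟨g, hg, k, rfl⟩

lemma SignsAgreeOn.mem_properRoots_iff (h : SignsAgreeOn (coeffSet F) i j)
    (hx : SignsAgreeOn F (eval₂RingHom i x) (eval₂RingHom j x')) :
    x ∈ properRoots i F ↔ x' ∈ properRoots j F :=
  exists_congr fun _ => and_congr_right fun hg =>
    and_congr (h.map_eq_zero_iff hg).not (hx.apply_eq_zero_iff hg)

lemma finite_properRoots {R : Type*} [Field R] {i : A →+* R} (hF : F.Finite) :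
    (properRoots i F).Finite := by
  refine (hF.biUnion fun g _ => (g.map i).rootSet_finite R).subset ?_
  rintro x ⟨g, hg, hg0, hx⟩
  exact mem_biUnion hg ((mem_rootSet.2 ⟨hg0, by simpa [eval₂_eq_eval_map] using hx⟩))

/-- A single step of pseudo-division of `f` by the truncation of `g` to degree `e`. For `f` of
degree at most `n` it has degree less than `n`, and it takes the value `g.coeff e * f` at the roots
of `g` wherever the coefficients of `g` beyond `e` vanish. -/
noncomputable def reduction (n : ℕ) (f g : A[X]) (e : ℕ) : A[X] :=
  C (g.coeff e) * f -
    C (f.coeff n) * X ^ (n - e) * ∑ k ∈ Finset.range (e + 1), monomial k (g.coeff k)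

/-- All reductions of `f` by members of `F`. -/
def reductions (n : ℕ) (f : A[X]) (F : Set A[X]) : Set A[X] :=
  {r | ∃ g ∈ F, ∃ e ≤ n, reduction n f g e = r}

lemma finite_reductions (n : ℕ) (f : A[X]) (hF : F.Finite) : (reductions n f F).Finite := by
  refine (hF.biUnion fun g _ => (finite_Iic n).image (reduction n f g)).subset ?_
  rintro _ ⟨g, hg, e, he, rfl⟩
  exact mem_biUnion hg ⟨e, he, rfl⟩

lemma natDegree_reduction_le {n e : ℕ} (hf : f.natDegree ≤ n + 1) (he : e ≤ n + 1) :
    (reduction (n + 1) f g e).natDegree ≤ n := by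
  set t := ∑ k ∈ Finset.range (e + 1), monomial k (g.coeff k) with ht
  have ht_coeff : t.coeff e = g.coeff e := by simp [ht, coeff_monomial]
  have ht_natDegree : t.natDegree ≤ e := natDegree_sum_le_of_forall_le _ _ fun k hk =>
    (natDegree_monomial_le _).trans (Nat.lt_succ_iff.1 (Finset.mem_range.1 hk))
  have hdeg : (reduction (n + 1) f g e).natDegree ≤ n + 1 := by
    refine (natDegree_sub_le_of_le ((natDegree_C_mul_le _ _).trans hf) ?_).trans_eq (max_self _)
    rw [mul_assoc]
    refine (natDegree_C_mul_le _ _).trans (natDegree_mul_le_of_le (natDegree_X_pow_le _)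
      ht_natDegree |>.trans_eq (Nat.sub_add_cancel he))
  refine natDegree_le_iff_coeff_eq_zero.2 fun k hk => ?_
  rcases Nat.lt_iff_add_one_le.1 hk |>.eq_or_lt with rfl | hk
  · rw [reduction, coeff_sub, coeff_C_mul, mul_assoc, coeff_C_mul, coeff_X_pow_mul', ← ht,
      if_pos (Nat.sub_le _ _), Nat.sub_sub_self he, ht_coeff, mul_comm, sub_self]
  · exact coeff_eq_zero_of_natDegree_lt (hdeg.trans_lt hk)

lemma eval₂_reduction {B : Type*} [CommRing B] {i : A →+* B} {x : B} (n : ℕ) {e : ℕ}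
    (he : ∀ k, e < k → i (g.coeff k) = 0) (hg : g.eval₂ i x = 0) :
    (reduction n f g e).eval₂ i x = i (g.coeff e) * f.eval₂ i x := by
  have htrunc : (∑ k ∈ Finset.range (e + 1), monomial k (g.coeff k)).map i = g.map i := by
    ext k
    by_cases hk : k ≤ e
    · simp [coeff_monomial, hk]
    · simp [coeff_monomial, hk, he k (not_le.1 hk)]
  rw [reduction, eval₂_sub, eval₂_mul, eval₂_C, eval₂_mul, eval₂_eq_eval_map (p := ∑ k ∈ _, _),
    htrunc, ← eval₂_eq_eval_map, hg, mul_zero, sub_zero]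

/-- Every point of `[-1, 1]` in `R` has a counterpart in `S` at which the members of `F` have the
same signs. -/
def TransfersSigns (F : Set A[X]) (i : A →+* R) (j : A →+* S) : Prop :=
  ∀ x ∈ Icc (-1) 1, ∃ y, SignsAgreeOn F (eval₂RingHom i x) (eval₂RingHom j y)

lemma TransfersSigns.mono {H : Set A[X]} (hFH : F ⊆ H) (h : TransfersSigns H i j) :
    TransfersSigns F i j := fun x hx => (h x hx).imp fun _ hy => hy.mono hFH

variable [IsStrictOrderedRing R] [IsStrictOrderedRing S]

lemma SignsAgreeOn.sign_eval₂_eq_of_root {n : ℕ} (hn : ∀ g ∈ F, g.natDegree ≤ n)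
    (hc : SignsAgreeOn (coeffSet F) i j)
    (hx : SignsAgreeOn (F ∪ reductions n f F) (eval₂RingHom i x) (eval₂RingHom j x'))
    (hroot : x ∈ properRoots i F) : sign (f.eval₂ i x) = sign (f.eval₂ j x') := by
  obtain ⟨g, hg, hg0, hgx⟩ := hroot
  have hgx' : g.eval₂ j x' = 0 := (hx.apply_eq_zero_iff (Or.inl hg)).1 hgx
  set e := (g.map i).natDegree
  have hlead : i (g.coeff e) ≠ 0 := by
    rw [← coeff_map]
    exact leadingCoeff_ne_zero.2 hg0
  have hi : ∀ k, e < k → i (g.coeff k) = 0 := fun k hk => by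
    rw [← coeff_map]
    exact coeff_eq_zero_of_natDegree_lt hk
  have hj : ∀ k, e < k → j (g.coeff k) = 0 := fun k hk =>
    (hc.apply_eq_zero_iff ⟨g, hg, k, rfl⟩).1 (hi k hk)
  have hred := hx _ (Or.inr ⟨g, hg, e, natDegree_map_le.trans (hn g hg), rfl⟩)
  rw [coe_eval₂RingHom, coe_eval₂RingHom, eval₂_reduction n hi hgx, eval₂_reduction n hj hgx',
    sign_mul, sign_mul, ← hc _ ⟨g, hg, e, rfl⟩] at hred
  exact mul_left_cancel₀ (sign_ne_zero.2 hlead) hred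

lemma SignsAgreeOn.mem_Icc (h : SignsAgreeOn F (eval₂RingHom i x) (eval₂RingHom j x'))
    (hX : X - 1 ∈ F ∧ X + 1 ∈ F) (hx : x ∈ Icc (-1) 1) : x' ∈ Icc (-1) 1 := by
  have h1 := h _ hX.1
  have h2 := h _ hX.2
  simp only [coe_eval₂RingHom, eval₂_sub, eval₂_add, eval₂_X, eval₂_one] at h1 h2
  constructor
  · rw [neg_le_iff_add_nonneg, ← sign_nonneg_iff, ← h2, sign_nonneg_iff]
    exact neg_le_iff_add_nonneg.1 hx.1
  · rw [← sub_nonpos, ← sign_nonpos_iff, ← h1, sign_nonpos_iff]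
    exact sub_nonpos.2 hx.2

lemma neg_one_mem_properRoots {R : Type*} [Field R] {i : A →+* R} (hX : X + 1 ∈ F) :
    -1 ∈ properRoots i F :=
  ⟨_, hX, by simpa using X_add_C_ne_zero (1 : R), by simp⟩

lemma one_mem_properRoots {R : Type*} [Field R] {i : A →+* R} (hX : X - 1 ∈ F) :
    1 ∈ properRoots i F :=
  ⟨_, hX, by simpa using X_sub_C_ne_zero (1 : R), by simp⟩

lemma transfersSigns_of_natDegree_eq_zero (hF : ∀ f ∈ F, f.natDegree = 0)
    (h : SignsAgreeOn (coeffSet F) i j) : TransfersSigns (F ∪ {X - 1, X + 1}) i j := by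
  intro z hz
  obtain ⟨w, hw⟩ : ∃ w : S, sign (z - 1) = sign (w - 1) ∧ sign (z + 1) = sign (w + 1) := by
    rcases hz.1.eq_or_lt with rfl | hz1
    · exact ⟨-1, by simp [show (-1 - 1 : R) < 0 by norm_num, show (-1 - 1 : S) < 0 by norm_num]⟩
    rcases hz.2.eq_or_lt with rfl | hz2
    · exact ⟨1, by simp [show (0 : R) < 1 + 1 by norm_num, show (0 : S) < 1 + 1 by norm_num]⟩
    · refine ⟨0, ?_⟩
      rw [sign_neg (sub_neg.2 hz2), sign_pos (neg_lt_iff_pos_add.1 hz1)]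
      simp
  refine ⟨w, ?_⟩
  rintro f (hf | rfl | rfl)
  · rw [eq_C_of_natDegree_eq_zero (hF f hf)]
    simpa using h _ ⟨f, hf, 0, rfl⟩
  · simpa using hw.1
  · simpa using hw.2

variable [HasPolynomialIVP R] [HasPolynomialIVP S]

lemma signsAgreeOn_of_disjoint_properRoots {s : Set R} (hs : s.OrdConnected)
    (h : ∀ t ∈ s, t ∉ properRoots i F) (hx : x ∈ s) (hy : y ∈ s) :
    SignsAgreeOn F (eval₂RingHom i x) (eval₂RingHom i y) := by
  intro g hg
  rw [coe_eval₂RingHom, coe_eval₂RingHom, eval₂_eq_eval_map, eval₂_eq_eval_map]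
  by_cases hg0 : g.map i = 0
  · simp [hg0]
  · exact sign_eval_eq_of_forall_ne_zero hs
      (fun t ht ht0 => h t ht ⟨g, hg, hg0, by rwa [eval₂_eq_eval_map]⟩) hx hy

lemma iterate_derivative_mem (hF : ∀ g ∈ F, derivative g ∈ F) (hg : g ∈ F) (k : ℕ) :
    derivative^[k] g ∈ F := by
  induction k with
  | zero => exact hg
  | succ k ih => exact Function.iterate_succ_apply' derivative k g ▸ hF _ ih

lemma SignsAgreeOn.iterate_derivative_or_lt_iff_lt (hF : ∀ g ∈ F, derivative g ∈ F)
    (hx : SignsAgreeOn F (eval₂RingHom i x) (eval₂RingHom j x'))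
    (hy : SignsAgreeOn F (eval₂RingHom i y) (eval₂RingHom j y')) (hg : g ∈ F) :
    (∀ k, sign ((derivative^[k] g).eval₂ i x) = sign ((derivative^[k] g).eval₂ i y)) ∨
      (x < y ↔ x' < y') := by
  induction hn : g.natDegree using Nat.strong_induction_on generalizing g with | _ n ih
  have hderiv : (∀ k, sign ((derivative^[k + 1] g).eval₂ i x) =
      sign ((derivative^[k + 1] g).eval₂ i y)) ∨ (x < y ↔ x' < y') := by
    rcases Nat.eq_zero_or_pos n with rfl | hpos
    · left
      intro k
      simp [Function.iterate_succ_apply, derivative_of_natDegree_zero hn]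
    · exact ih _ (hn ▸ natDegree_derivative_lt (hn.trans_ne hpos.ne')) (hF g hg) rfl
  refine hderiv.elim (fun h => or_iff_not_imp_left.2 fun hne => ?_) Or.inr
  have h0 : sign (g.eval₂ i x) ≠ sign (g.eval₂ i y) := fun h0 => hne fun k => by
    cases k with
    | zero => exact h0
    | succ k => exact h k
  have hS0 : sign (g.eval₂ j x') ≠ sign (g.eval₂ j y') :=
    (hx g hg).symm.trans_ne (h0.trans_eq (hy g hg))
  have hS : ∀ k, sign ((derivative^[k + 1] g).eval₂ j x') =
      sign ((derivative^[k + 1] g).eval₂ j y') := fun k =>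
    (hx _ (iterate_derivative_mem hF hg _)).symm.trans
      ((h k).trans (hy _ (iterate_derivative_mem hF hg _)))
  have hsign : sign ((derivative g).eval₂ i x) = sign ((derivative g).eval₂ j x') :=
    hx _ (hF g hg)
  have hgx : sign (g.eval₂ i x) = sign (g.eval₂ j x') := hx g hg
  have hgy : sign (g.eval₂ i y) = sign (g.eval₂ j y') := hy g hg
  simp only [eval₂_eq_eval_map, ← iterate_derivative_map, ← derivative_map]
    at h h0 hS hS0 hsign hgx hgy
  rw [lt_iff_of_iterate_derivative h0 h, lt_iff_of_iterate_derivative hS0 hS, hgx, hgy, hsign]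

theorem SignsAgreeOn.lt_iff_lt (hF : ∀ g ∈ F, derivative g ∈ F)
    (hc : SignsAgreeOn (coeffSet F) i j)
    (hx : SignsAgreeOn F (eval₂RingHom i x) (eval₂RingHom j x'))
    (hy : SignsAgreeOn F (eval₂RingHom i y) (eval₂RingHom j y')) (hroot : x ∈ properRoots i F) :
    (x < y ↔ x' < y') ∧ (y < x ↔ y' < x') := by
  obtain ⟨g, hg, hg0, hgx⟩ := hroot
  by_cases h : ∀ k, sign ((derivative^[k] g).eval₂ i x) = sign ((derivative^[k] g).eval₂ i y)
  · have h' : ∀ k, sign ((derivative^[k] g).eval₂ j x') = sign ((derivative^[k] g).eval₂ j y') :=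
      fun k => (hx _ (iterate_derivative_mem hF hg k)).symm.trans
        ((h k).trans (hy _ (iterate_derivative_mem hF hg k)))
    have hgx' : g.eval₂ j x' = 0 := (hx.apply_eq_zero_iff hg).1 hgx
    simp only [eval₂_eq_eval_map, ← iterate_derivative_map] at h h' hgx hgx'
    rw [eq_of_root_of_iterate_derivative hg0 hgx h,
      eq_of_root_of_iterate_derivative ((hc.map_eq_zero_iff hg).not.1 hg0) hgx' h']
    simp only [lt_irrefl, and_self]
  · exact ⟨(hx.iterate_derivative_or_lt_iff_lt hF hy hg).resolve_left h,
      (hy.iterate_derivative_or_lt_iff_lt hF hx hg).resolve_left fun h' => h fun k => (h' k).symm⟩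

lemma TransfersSigns.disjoint_properRoots (hji : TransfersSigns F j i)
    (hF : ∀ g ∈ F, derivative g ∈ F) (hX : X - 1 ∈ F ∧ X + 1 ∈ F)
    (hc : SignsAgreeOn (coeffSet F) i j)
    (hx : SignsAgreeOn F (eval₂RingHom i x) (eval₂RingHom j x'))
    (hy : SignsAgreeOn F (eval₂RingHom i y) (eval₂RingHom j y'))
    (hx_root : x ∈ properRoots i F) (hy_root : y ∈ properRoots i F)
    (hx_mem : x ∈ Icc (-1) 1) (hy_mem : y ∈ Icc (-1) 1)
    (hxy : ∀ t ∈ Ioo x y, t ∉ properRoots i F) : ∀ t ∈ Ioo x' y', t ∉ properRoots j F := by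
  intro t' ht' ht'_root
  obtain ⟨t, ht⟩ := hji t'
    ⟨(hx.mem_Icc hX hx_mem).1.trans ht'.1.le, ht'.2.le.trans (hy.mem_Icc hX hy_mem).2⟩
  replace ht := ht.symm
  exact hxy t ⟨(hc.lt_iff_lt hF hx ht hx_root).1.2 ht'.1, (hc.lt_iff_lt hF hy ht hy_root).2.2 ht'.2⟩
    ((hc.mem_properRoots_iff ht).2 ht'_root)

lemma TransfersSigns.exists_isolating_Ioo {n : ℕ} (hfin : F.Finite)
    (hF : ∀ g ∈ F, derivative g ∈ F) (hX : X - 1 ∈ F ∧ X + 1 ∈ F) (hn : ∀ g ∈ F, g.natDegree ≤ n)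
    (hc : SignsAgreeOn (coeffSet F) i j) (hij : TransfersSigns (F ∪ reductions n f F) i j)
    (hji : TransfersSigns F j i) {z : R} {w : S} (hz : z ∈ Icc (-1) 1)
    (hz_root : z ∉ properRoots i F) (hw : SignsAgreeOn F (eval₂RingHom i z) (eval₂RingHom j w)) :
    ∃ a b a' b', z ∈ Ioo a b ∧ w ∈ Ioo a' b' ∧
      sign (f.eval₂ i a) = sign (f.eval₂ j a') ∧ sign (f.eval₂ i b) = sign (f.eval₂ j b') ∧
      (∀ t ∈ Ioo a b, SignsAgreeOn F (eval₂RingHom i t) (eval₂RingHom i z)) ∧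
      ∀ t ∈ Ioo a' b', SignsAgreeOn F (eval₂RingHom i z) (eval₂RingHom j t) := by
  have hz' : z ∈ Ioo (-1) 1 :=
    ⟨hz.1.lt_of_ne fun h => hz_root (h ▸ neg_one_mem_properRoots hX.2),
      hz.2.lt_of_ne fun h => hz_root (h ▸ one_mem_properRoots hX.1)⟩
  obtain ⟨a, ha, b, hb, hla, hbu, hzab, hab⟩ := exists_isolating_Ioo_of_finite
    (finite_properRoots hfin) (neg_one_mem_properRoots hX.2) (one_mem_properRoots hX.1) hz' hz_root
  have ha_mem : a ∈ Icc (-1) 1 := ⟨hla, hzab.1.le.trans hz.2⟩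
  have hb_mem : b ∈ Icc (-1) 1 := ⟨hz.1.trans hzab.2.le, hbu⟩
  obtain ⟨a', ha'⟩ := hij a ha_mem
  obtain ⟨b', hb'⟩ := hij b hb_mem
  have haF := ha'.mono subset_union_left
  have hbF := hb'.mono subset_union_left
  have hw' : w ∈ Ioo a' b' :=
    ⟨(hc.lt_iff_lt hF haF hw ha).1.1 hzab.1, (hc.lt_iff_lt hF hbF hw hb).2.1 hzab.2⟩
  have hab' := hji.disjoint_properRoots hF hX hc haF hbF ha hb ha_mem hb_mem hab
  exact ⟨a, b, a', b', hzab, hw', hc.sign_eval₂_eq_of_root hn ha' ha,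
    hc.sign_eval₂_eq_of_root hn hb' hb,
    fun t ht => signsAgreeOn_of_disjoint_properRoots ordConnected_Ioo hab ht hzab,
    fun t ht => hw.trans (signsAgreeOn_of_disjoint_properRoots ordConnected_Ioo hab' hw' ht)⟩

theorem TransfersSigns.insert_of_reductions {n : ℕ} (hfin : F.Finite)
    (hF : ∀ g ∈ F, derivative g ∈ F) (hX : X - 1 ∈ F ∧ X + 1 ∈ F) (hn : ∀ g ∈ F, g.natDegree ≤ n)
    (hf : derivative f ∈ F) (hc : SignsAgreeOn (coeffSet F) i j)
    (hij : TransfersSigns (F ∪ reductions n f F) i j) (hji : TransfersSigns F j i) :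
    TransfersSigns (insert f F) i j := by
  intro z hz
  obtain ⟨w, hw⟩ := hij z hz
  by_cases hz_root : z ∈ properRoots i F
  · exact ⟨w, forall_mem_insert.2
      ⟨hc.sign_eval₂_eq_of_root hn hw hz_root, hw.mono subset_union_left⟩⟩
  obtain ⟨a, b, a', b', hz_mem, hw_mem, hfa, hfb, hz_const, hw_const⟩ :=
    hij.exists_isolating_Ioo hfin hF hX hn hc hji hz hz_root (hw.mono subset_union_left)
  obtain ⟨t, ht, hft⟩ := exists_sign_eval_eq (p := f.map i) (q := f.map j) hz_mem hw_mem
    (by simpa only [eval_map] using hfa) (by simpa only [eval_map] using hfb)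
    (fun t ht => by
      simpa only [derivative_map, eval_map, coe_eval₂RingHom] using hz_const t ht _ hf)
    (fun t ht => by
      simpa only [derivative_map, eval_map, coe_eval₂RingHom] using (hw_const t ht _ hf).symm)
  refine ⟨t, forall_mem_insert.2 ⟨?_, hw_const t ht⟩⟩
  simpa only [eval_map, coe_eval₂RingHom] using hft.symm

/-- The signs that the members of `F` take simultaneously on `[-1, 1]` depend, uniformly over all
ordered fields with the intermediate value property, only on the signs of finitely many elements of
the coefficient ring. This is the form in which one variable is eliminated. -/
def Eliminable {A : Type*} [CommRing A] (F : Set A[X]) : Prop :=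
  ∃ G : Set A, G.Finite ∧ ∀ (R S : Type u) [Field R] [LinearOrder R] [IsStrictOrderedRing R]
    [HasPolynomialIVP R] [Field S] [LinearOrder S] [IsStrictOrderedRing S] [HasPolynomialIVP S]
    (i : A →+* R) (j : A →+* S), SignsAgreeOn G i j → TransfersSigns F i j

namespace Eliminable

variable {A : Type*} [CommRing A] {F H : Set A[X]} {f : A[X]} {n : ℕ}

lemma mono (hFH : F ⊆ H) : Eliminable.{u} H → Eliminable.{u} F := fun ⟨G, hG, hR⟩ =>
  ⟨G, hG, fun R S _ _ _ _ _ _ _ _ i j h => (hR R S i j h).mono hFH⟩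

lemma insert_of_reductions (hfin : F.Finite) (hF : ∀ g ∈ F, derivative g ∈ F)
    (hX : X - 1 ∈ F ∧ X + 1 ∈ F) (hn : ∀ g ∈ F, g.natDegree ≤ n) (hf : derivative f ∈ F)
    (h : Eliminable.{u} (F ∪ reductions n f F)) : Eliminable.{u} (insert f F) := by
  obtain ⟨G, hG, hR⟩ := h
  refine ⟨G ∪ coeffSet F, hG.union (finite_coeffSet hfin), fun R S _ _ _ _ _ _ _ _ i j hij => ?_⟩
  have hGij : SignsAgreeOn G i j := hij.mono subset_union_left
  exact (hR R S i j hGij).insert_of_reductions hfin hF hX hn hf (hij.mono subset_union_right)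
    ((hR S R j i hGij.symm).mono subset_union_left)

end Eliminable

/-- The closure of `F` under derivatives. -/
def iterateDerivatives (F : Set A[X]) : Set A[X] := {h | ∃ g ∈ F, ∃ k, derivative^[k] g = h}

lemma subset_iterateDerivatives : F ⊆ iterateDerivatives F := fun g hg => ⟨g, hg, 0, rfl⟩

lemma derivative_mem_iterateDerivatives :
    ∀ g ∈ iterateDerivatives F, derivative g ∈ iterateDerivatives F := by
  rintro _ ⟨g, hg, k, rfl⟩
  exact ⟨g, hg, k + 1, Function.iterate_succ_apply' _ _ _⟩

lemma finite_iterateDerivatives (hF : F.Finite) : (iterateDerivatives F).Finite := by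
  have hderiv (g : A[X]) : (range fun k => derivative^[k] g).Finite :=
    (((finite_Iic g.natDegree).image fun k => derivative^[k] g).union
      (finite_singleton 0)).subset <| by
      rintro _ ⟨k, rfl⟩
      rcases le_or_gt k g.natDegree with hk | hk
      · exact Or.inl ⟨k, hk, rfl⟩
      · exact Or.inr (iterate_derivative_eq_zero hk)
  exact (hF.biUnion fun g _ => hderiv g).subset fun c ⟨g, hg, hc⟩ => mem_biUnion hg hc

lemma natDegree_le_or_mem_of_mem_iterateDerivatives {n : ℕ} (hF : ∀ g ∈ F, g.natDegree ≤ n + 1)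
    (hg : g ∈ iterateDerivatives F) : g.natDegree ≤ n ∨ g ∈ F := by
  obtain ⟨g, hg, k | k, rfl⟩ := hg
  · exact Or.inr hg
  · exact Or.inl ((natDegree_iterate_derivative g (k + 1)).trans (by have := hF g hg; omega))

lemma Eliminable.insert_of_natDegree_le {n : ℕ} (hF : F.Finite)
    (hX : X - 1 ∈ F ∧ X + 1 ∈ F) (hn : ∀ g ∈ F, g.natDegree ≤ n + 1) (hf : f.natDegree ≤ n + 1)
    (h : ∀ L : Set A[X], L.Finite → (∀ g ∈ L, g.natDegree ≤ n) → Eliminable.{u} (F ∪ L)) :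
    Eliminable.{u} (insert f F) := by
  set H := insert (derivative f) F
  have hf' : (derivative f).natDegree ≤ n := (natDegree_derivative_le f).trans (by omega)
  have hHn : ∀ g ∈ H, g.natDegree ≤ n + 1 := forall_mem_insert.2 ⟨hf'.trans n.le_succ, hn⟩
  set D := iterateDerivatives H
  have hD_fin : D.Finite := finite_iterateDerivatives (hF.insert _)
  have hHD : H ⊆ D := subset_iterateDerivatives
  have hFD : F ⊆ D := (subset_insert _ _).trans hHD
  have hDn : ∀ g ∈ D, g.natDegree ≤ n + 1 := fun g hg =>
    (natDegree_le_or_mem_of_mem_iterateDerivatives hHn hg).elim (·.trans n.le_succ) (hHn g)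
  set L := {g ∈ D ∪ reductions (n + 1) f D | g.natDegree ≤ n}
  have hL_fin : L.Finite := (hD_fin.union (finite_reductions _ _ hD_fin)).subset (sep_subset _ _)
  have hred : D ∪ reductions (n + 1) f D ⊆ F ∪ L := by
    intro g hg
    by_cases hgn : g.natDegree ≤ n
    · exact Or.inr ⟨hg, hgn⟩
    rcases hg with hg | ⟨g, -, e, he, rfl⟩
    · rcases (natDegree_le_or_mem_of_mem_iterateDerivatives hHn hg).resolve_left hgn with rfl | hg
      · exact absurd hf' hgn
      · exact Or.inl hg
    · exact absurd (natDegree_reduction_le hf he) hgn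
  have hD_elim : Eliminable.{u} (insert f D) :=
    insert_of_reductions hD_fin derivative_mem_iterateDerivatives ⟨hFD hX.1, hFD hX.2⟩ hDn
      (hHD (mem_insert _ _)) ((h L hL_fin fun g hg => hg.2).mono hred)
  exact hD_elim.mono (insert_subset_insert hFD)

lemma natDegree_le_of_mem_X_sub_one_X_add_one (n : ℕ) :
    ∀ g ∈ ({X - 1, X + 1} : Set A[X]), g.natDegree ≤ n + 1 := by
  rintro g (rfl | rfl)
  · exact (natDegree_X_sub_C_le (1 : A)).trans (by omega)
  · exact natDegree_add_le_of_degree_le (natDegree_X_le.trans (by omega)) (by simp)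

theorem eliminable_union_of_finite {n : ℕ}
    (h : ∀ L : Set A[X], L.Finite → (∀ g ∈ L, g.natDegree ≤ n) →
      Eliminable.{u} (L ∪ {X - 1, X + 1}))
    (hF : F.Finite) (hn : ∀ g ∈ F, g.natDegree ≤ n + 1) (L : Set A[X]) (hL : L.Finite)
    (hLn : ∀ g ∈ L, g.natDegree ≤ n) : Eliminable.{u} (F ∪ L ∪ {X - 1, X + 1}) := by
  induction F, hF using Set.Finite.induction_on generalizing L with
  | empty => simpa using h L hL hLn
  | @insert f F _ hF ih =>
    rw [forall_mem_insert] at hn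
    rw [insert_union, insert_union]
    refine Eliminable.insert_of_natDegree_le (n := n) ((hF.union hL).union (by simp)) (by simp) ?_
      hn.1 fun L' hL' hL'n => ?_
    · rintro g ((hg | hg) | hg)
      · exact hn.2 g hg
      · exact (hLn g hg).trans n.le_succ
      · exact natDegree_le_of_mem_X_sub_one_X_add_one n g hg
    · rw [union_right_comm, union_assoc F]
      exact ih hn.2 (L ∪ L') (hL.union hL') (fun g hg => hg.elim (hLn g) (hL'n g))

theorem eliminable_union_X_sub_one_X_add_one (hF : F.Finite) :
    Eliminable.{u} (F ∪ {X - 1, X + 1}) := by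
  obtain ⟨n, hn⟩ : ∃ n, ∀ g ∈ F, g.natDegree ≤ n := by
    obtain ⟨n, hn⟩ := (hF.image natDegree).bddAbove
    exact ⟨n, fun g hg => hn (mem_image_of_mem _ hg)⟩
  induction n generalizing F with
  | zero =>
    exact ⟨coeffSet F, finite_coeffSet hF, fun R S _ _ _ _ _ _ _ _ i j h =>
      transfersSigns_of_natDegree_eq_zero (fun f hf => Nat.le_zero.1 (hn f hf)) h⟩
  | succ n ih =>
    simpa using eliminable_union_of_finite (fun L hL hLn => ih hL hLn) hF hn ∅ finite_empty
      (by simp)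

lemma sign_eval₂_inv_eq {R : Type*} [Field R] [LinearOrder R] [IsStrictOrderedRing R] {i : A →+* R}
    {x : R} (hx : x ≠ 0) :
    sign (f.eval₂ i x⁻¹) = sign (f.reverse.eval₂ i x) * sign x ^ f.natDegree := by
  have hx_sign : sign x⁻¹ = sign x := by
    rcases hx.lt_or_gt with hx | hx
    · rw [sign_neg hx, sign_neg (inv_lt_zero.2 hx)]
    · rw [sign_pos hx, sign_pos (inv_pos.2 hx)]
  let _ := invertibleOfNonzero (inv_ne_zero hx)
  rw [← eval₂_reverse_mul_pow, invOf_eq_inv, inv_inv, sign_mul, sign_pow, hx_sign]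

theorem exists_finite_forall_exists_signsAgreeOn (hF : F.Finite) :
    ∃ G : Set A, G.Finite ∧ ∀ (R S : Type u) [Field R] [LinearOrder R] [IsStrictOrderedRing R]
      [HasPolynomialIVP R] [Field S] [LinearOrder S] [IsStrictOrderedRing S] [HasPolynomialIVP S]
      (i : A →+* R) (j : A →+* S), SignsAgreeOn G i j →
      ∀ x : R, ∃ y : S, SignsAgreeOn F (eval₂RingHom i x) (eval₂RingHom j y) := by
  obtain ⟨G, hG, h⟩ := eliminable_union_X_sub_one_X_add_one.{u}
    ((hF.union (hF.image reverse)).insert X)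
  refine ⟨G, hG, fun R S _ _ _ _ _ _ _ _ i j hij x => ?_⟩
  replace h := (h R S i j hij).mono subset_union_left
  by_cases hx : x ∈ Icc (-1) 1
  · exact (h x hx).imp fun y hy => hy.mono (subset_union_left.trans (subset_insert _ _))
  -- Outside `[-1, 1]` pass to the inverse point and the reversed polynomials.
  have hx_inv : x⁻¹ ∈ Icc (-1) 1 := by
    rw [mem_Icc, ← abs_le] at hx ⊢
    rw [abs_inv]
    exact inv_le_one_of_one_le₀ (not_le.1 hx).le
  have hx0 : x⁻¹ ≠ 0 := by
    rintro hx0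
    rw [inv_eq_zero] at hx0
    simp [hx0] at hx
  obtain ⟨y, hy⟩ := h x⁻¹ hx_inv
  have hX : X ∈ insert X (F ∪ reverse '' F) := mem_insert _ _
  have hy0 : y ≠ 0 := by simpa using (hy.apply_eq_zero_iff hX).not.1 (by simpa using hx0)
  refine ⟨y⁻¹, fun f hf => ?_⟩
  have hrev := hy f.reverse (Or.inr (Or.inr ⟨f, hf, rfl⟩))
  have hsign := hy X hX
  simp only [coe_eval₂RingHom, eval₂_X] at hrev hsign ⊢
  rw [← inv_inv x, sign_eval₂_inv_eq hx0, sign_eval₂_inv_eq hy0, hrev, hsign]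

lemma eval₂Hom_eq_eval₂RingHom_finSuccEquiv {A B : Type*} [CommRing A] [CommRing B] (i : A →+* B)
    {n : ℕ} (x : Fin (n + 1) → B) (f : MvPolynomial (Fin (n + 1)) A) :
    MvPolynomial.eval₂Hom i x f = eval₂RingHom (MvPolynomial.eval₂Hom i (Fin.tail x)) (x 0)
      (MvPolynomial.finSuccEquiv A n f) := by
  induction f using MvPolynomial.induction_on with
  | C a => simp [MvPolynomial.finSuccEquiv_apply]
  | add p q hp hq => rw [map_add, hp, hq, map_add, map_add]
  | mul_X p k hp =>
    rw [map_mul, hp, map_mul, map_mul]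
    cases k using Fin.cases <;> simp [MvPolynomial.finSuccEquiv_apply, Fin.tail]

lemma exists_finite_forall_exists_signsAgreeOn_mvPolynomial_fin {A : Type*} [CommRing A] {n : ℕ}
    {F : Set (MvPolynomial (Fin n) A)} (hF : F.Finite) :
    ∃ G : Set A, G.Finite ∧ ∀ (R S : Type u) [Field R] [LinearOrder R] [IsStrictOrderedRing R]
      [HasPolynomialIVP R] [Field S] [LinearOrder S] [IsStrictOrderedRing S] [HasPolynomialIVP S]
      (i : A →+* R) (j : A →+* S), SignsAgreeOn G i j → ∀ x : Fin n → R, ∃ y : Fin n → S,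
      SignsAgreeOn F (MvPolynomial.eval₂Hom i x) (MvPolynomial.eval₂Hom j y) := by
  induction n with
  | zero =>
    refine ⟨MvPolynomial.coeff 0 '' F, hF.image _, fun R S _ _ _ _ _ _ _ _ i j hij x =>
      ⟨Fin.elim0, fun f hf => ?_⟩⟩
    rw [MvPolynomial.eq_C_of_isEmpty f]
    simpa using hij _ ⟨f, hf, rfl⟩
  | succ n ih =>
    obtain ⟨G, hG, h⟩ := exists_finite_forall_exists_signsAgreeOn.{u}
      (hF.image (MvPolynomial.finSuccEquiv A n))
    obtain ⟨G', hG', h'⟩ := ih hG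
    refine ⟨G', hG', fun R S _ _ _ _ _ _ _ _ i j hij x => ?_⟩
    obtain ⟨y, hy⟩ := h' R S i j hij (Fin.tail x)
    obtain ⟨y₀, hy₀⟩ := h R S _ _ hy (x 0)
    refine ⟨Fin.cons y₀ y, fun f hf => ?_⟩
    rw [eval₂Hom_eq_eval₂RingHom_finSuccEquiv, eval₂Hom_eq_eval₂RingHom_finSuccEquiv,
      Fin.tail_cons, Fin.cons_zero]
    exact hy₀ _ (mem_image_of_mem _ hf)

theorem exists_finite_forall_exists_signsAgreeOn_mvPolynomial {A : Type*} [CommRing A]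
    {σ : Type*} [Finite σ] {F : Set (MvPolynomial σ A)} (hF : F.Finite) :
    ∃ G : Set A, G.Finite ∧ ∀ (R S : Type u) [Field R] [LinearOrder R] [IsStrictOrderedRing R]
      [HasPolynomialIVP R] [Field S] [LinearOrder S] [IsStrictOrderedRing S] [HasPolynomialIVP S]
      (i : A →+* R) (j : A →+* S), SignsAgreeOn G i j → ∀ x : σ → R, ∃ y : σ → S,
      SignsAgreeOn F (MvPolynomial.eval₂Hom i x) (MvPolynomial.eval₂Hom j y) := by
  obtain ⟨n, ⟨e⟩⟩ := Finite.exists_equiv_fin σ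
  obtain ⟨G, hG, h⟩ := exists_finite_forall_exists_signsAgreeOn_mvPolynomial_fin.{u}
    (hF.image (MvPolynomial.rename e))
  refine ⟨G, hG, fun R S _ _ _ _ _ _ _ _ i j hij x => ?_⟩
  obtain ⟨y, hy⟩ := h R S i j hij (x ∘ e.symm)
  refine ⟨y ∘ e, fun f hf => ?_⟩
  simpa [MvPolynomial.eval₂_rename, Function.comp_assoc] using hy _ (mem_image_of_mem _ hf)

end Elimination

section RealClosure

open Polynomial

variable {A K : Type*} [CommRing A] [Field K]

lemma isSumSq_map {B : Type*} [CommRing B] (φ : A →+* B) {x : A} (hx : IsSumSq x) :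
    IsSumSq (φ x) := by
  induction hx with
  | zero => simp
  | sq_add a _ ih => simpa using (IsSumSq.mul_self (φ a)).add ih

lemma isSemireal_of_ringHom {B : Type*} [CommRing B] [IsSemireal B] (φ : A →+* B) :
    IsSemireal A :=
  .of_not_isSumSq_neg_one fun h => IsSemireal.not_isSumSq_neg_one B (by simpa using isSumSq_map φ h)

lemma exists_root_of_mul_neg_of_natDegree_le_one [LinearOrder K] [IsStrictOrderedRing K]
    {p : K[X]} (hp : p.natDegree ≤ 1) {a b : K} (hab : a < b)
    (h : p.eval a * p.eval b < 0) : ∃ c ∈ Set.Ioo a b, p.eval c = 0 := by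
  obtain ⟨u, v, rfl⟩ := exists_eq_X_add_C_of_natDegree_le_one hp
  simp only [eval_add, eval_mul, eval_C, eval_X] at h ⊢
  rcases lt_trichotomy u 0 with hu | rfl | hu
  · refine ⟨-v / u, ⟨?_, ?_⟩, by rw [mul_div_cancel₀ _ hu.ne, neg_add_cancel]⟩
    · rw [lt_div_iff_of_neg hu]; rcases mul_neg_iff.1 h with h | h <;> nlinarith
    · rw [div_lt_iff_of_neg hu]; rcases mul_neg_iff.1 h with h | h <;> nlinarith
  · exact absurd h (by simpa using mul_self_nonneg v)
  · refine ⟨-v / u, ⟨?_, ?_⟩, by rw [mul_div_cancel₀ _ hu.ne', neg_add_cancel]⟩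
    · rw [lt_div_iff₀ hu]; rcases mul_neg_iff.1 h with h | h <;> nlinarith
    · rw [div_lt_iff₀ hu]; rcases mul_neg_iff.1 h with h | h <;> nlinarith

/-- Sums of squares of polynomials of degree less than `n`. -/
noncomputable def natDegreeLTSumSq (A : Type*) [CommRing A] (n : ℕ) : AddSubmonoid A[X] :=
  AddSubmonoid.closure {x | ∃ g : A[X], g.natDegree < n ∧ g * g = x}

lemma exists_eq_of_mem_natDegreeLTSumSq_two {G : A[X]} (hG : G ∈ natDegreeLTSumSq A 2) :
    ∃ s r t : A, IsSumSq s ∧ IsSumSq t ∧ G = C s + C r * X + C t * X ^ 2 := by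
  induction hG using AddSubmonoid.closure_induction with
  | mem x hx =>
    obtain ⟨g, hg, rfl⟩ := hx
    obtain ⟨a, b, rfl⟩ := exists_eq_X_add_C_of_natDegree_le_one (Nat.lt_succ_iff.1 hg)
    refine ⟨b * b, 2 * a * b, a * a, .mul_self _, .mul_self _, ?_⟩
    simp only [C_mul, map_ofNat]
    ring
  | zero => exact ⟨0, 0, 0, .zero, .zero, by simp⟩
  | add x y _ _ ihx ihy =>
    obtain ⟨s, r, t, hs, ht, rfl⟩ := ihx
    obtain ⟨s', r', t', hs', ht', rfl⟩ := ihy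
    refine ⟨s + s', r + r', t + t', hs.add hs', ht.add ht', ?_⟩
    simp only [C_add]
    ring

lemma isSumSq_of_mem_natDegreeLTSumSq {n : ℕ} {G : A[X]} (hG : G ∈ natDegreeLTSumSq A n) :
    IsSumSq G := by
  refine (AddSubmonoid.closure_le (S := AddSubmonoid.sumSq A[X])).2 ?_ hG
  rintro _ ⟨g, -, rfl⟩
  exact .mul_self g

lemma natDegree_le_of_mem_natDegreeLTSumSq {n : ℕ} {G : A[X]}
    (hG : G ∈ natDegreeLTSumSq A (n + 1)) : G.natDegree ≤ n + n := by
  induction hG using AddSubmonoid.closure_induction with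
  | mem x hx =>
    obtain ⟨g, hg, rfl⟩ := hx
    exact natDegree_mul_le_of_le (Nat.lt_succ_iff.1 hg) (Nat.lt_succ_iff.1 hg)
  | zero => simp
  | add x y _ _ ihx ihy => exact natDegree_add_le_of_degree_le ihx ihy

lemma exists_mk_eq_of_isSumSq {q : K[X]} (hq : q.natDegree ≠ 0) {x : AdjoinRoot q}
    (hx : IsSumSq x) : ∃ G ∈ natDegreeLTSumSq K q.natDegree, AdjoinRoot.mk q G = x := by
  induction hx with
  | zero => exact ⟨0, zero_mem _, map_zero _⟩
  | sq_add a _ ih =>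
    obtain ⟨G, hG, rfl⟩ := ih
    obtain ⟨g, rfl⟩ := AdjoinRoot.mk_surjective a
    refine ⟨g % q * (g % q) + G,
      add_mem (AddSubmonoid.subset_closure ⟨g % q, natDegree_mod_lt g hq, rfl⟩) hG, ?_⟩
    have hmod : AdjoinRoot.mk q (g % q) = AdjoinRoot.mk q g :=
      AdjoinRoot.mk_eq_mk.2 ⟨-(g / q), by
        linear_combination EuclideanDomain.mod_add_div g q⟩
    rw [map_add, map_mul, hmod]

/-- A formally real field without formally real proper simple algebraic extensions. By the
Artin–Schreier theorem these are the real closed fields. -/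
class IsMaximalSemireal (K : Type*) [Field K] : Prop extends IsSemireal K where
  not_isSemireal_adjoinRoot (q : K[X]) (hq : Irreducible q) (hdeg : 2 ≤ q.natDegree) :
    ¬ IsSemireal (AdjoinRoot q)

section IsMaximalSemireal

variable [IsMaximalSemireal K]

lemma exists_dvd_one_add_sumSq {q : K[X]} (hq : Irreducible q) (hdeg : 2 ≤ q.natDegree) :
    ∃ G ∈ natDegreeLTSumSq K q.natDegree, q ∣ 1 + G := by
  have h := IsMaximalSemireal.not_isSemireal_adjoinRoot q hq hdeg
  rw [isSemireal_iff_not_isSumSq_neg_one, not_not] at h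
  obtain ⟨G, hG, h⟩ := exists_mk_eq_of_isSumSq (by omega) h
  exact ⟨G, hG, AdjoinRoot.mk_eq_zero.1 (by rw [map_add, map_one, h, add_neg_cancel])⟩

lemma isSumSq_neg_of_not_isSquare {a : K} (ha : ¬ IsSquare a) : IsSumSq (-a) := by
  have hdeg : (X ^ 2 - C a).natDegree = 2 := natDegree_X_pow_sub_C
  have hirr : Irreducible (X ^ 2 - C a) :=
    X_pow_sub_C_irreducible_of_prime Nat.prime_two fun b hb => ha ⟨b, by rw [← hb, sq]⟩
  obtain ⟨G, hG, hdvd⟩ := exists_dvd_one_add_sumSq hirr hdeg.ge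
  obtain ⟨s, r, t, hs, ht, rfl⟩ := exists_eq_of_mem_natDegreeLTSumSq_two (hdeg ▸ hG)
  have hmod : 1 + (C s + C r * X + C t * X ^ 2) - C t * (X ^ 2 - C a) =
      C r * X + C (1 + s + t * a) := by
    simp only [C_add, C_mul, C_1]
    ring
  have hzero : C r * X + C (1 + s + t * a) = 0 :=
    eq_zero_of_dvd_of_natDegree_lt (hmod ▸ dvd_sub hdvd (dvd_mul_left _ _))
      ((natDegree_linear_le.trans_lt one_lt_two).trans_eq hdeg.symm)
  have hsta : 1 + s + t * a = 0 := by simpa using congrArg (coeff · 0) hzero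
  have ht0 : t ≠ 0 := by
    rintro rfl
    exact IsSemireal.one_add_ne_zero hs (by simpa using hsta)
  have hneg : -a = (1 + s) * t * (t⁻¹ * t⁻¹) := by
    field_simp
    linear_combination -hsta
  rw [hneg]
  exact ((IsSumSq.one.add hs).mul ht).mul (.mul_self _)

variable [LinearOrder K] [IsStrictOrderedRing K]

lemma exists_mul_eval_pos_of_irreducible {p : K[X]} (hp : Irreducible p) (hdeg : 2 ≤ p.natDegree) :
    ∃ k : K[X], k.natDegree < p.natDegree ∧ ∀ x, 0 < p.eval x * k.eval x := by
  obtain ⟨G, hG, k, hk⟩ := exists_dvd_one_add_sumSq hp hdeg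
  have hpos (x : K) : 0 < p.eval x * k.eval x := by
    rw [← eval_mul, ← hk, eval_add, eval_one]
    exact zero_lt_one.trans_le (le_add_of_nonneg_right
      (isSumSq_map (evalRingHom x) (isSumSq_of_mem_natDegreeLTSumSq hG)).nonneg)
  have hk0 : k ≠ 0 := by
    rintro rfl
    simpa using hpos 0
  obtain ⟨n, hn⟩ := Nat.exists_eq_add_one_of_ne_zero (show p.natDegree ≠ 0 by omega)
  have hdeg_mul : (p * k).natDegree ≤ n + n := by
    rw [← hk]
    exact natDegree_add_le_of_degree_le (by simp)
      (natDegree_le_of_mem_natDegreeLTSumSq (hn ▸ hG))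
  rw [natDegree_mul hp.ne_zero hk0] at hdeg_mul
  exact ⟨k, by omega, hpos⟩

instance hasPolynomialIVP_of_isMaximalSemireal : HasPolynomialIVP K where
  exists_root_of_mul_neg p a b hab h := by
    induction hn : p.natDegree using Nat.strong_induction_on generalizing p with | _ n ih
    subst hn
    rcases le_or_gt p.natDegree 1 with hdeg | hdeg
    · exact exists_root_of_mul_neg_of_natDegree_le_one hdeg hab h
    by_cases hirr : Irreducible p
    · obtain ⟨k, hk_deg, hk⟩ := exists_mul_eval_pos_of_irreducible hirr hdeg
      have hk_neg : k.eval a * k.eval b < 0 := by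
        refine neg_of_mul_pos_right (a := p.eval a * p.eval b) ?_ h.le
        rw [mul_mul_mul_comm]
        exact mul_pos (hk a) (hk b)
      obtain ⟨c, -, hc⟩ := ih _ hk_deg k hk_neg rfl
      exact absurd (hk c) (by simp [hc])
    · have hp0 : p ≠ 0 := by rintro rfl; simp at hdeg
      obtain ⟨q, r, hq, hr, rfl⟩ : ∃ q r : K[X], ¬ IsUnit q ∧ ¬ IsUnit r ∧ p = q * r := by
        have hunit : ¬ IsUnit p := fun hu => by
          simp [natDegree_eq_zero_of_isUnit hu] at hdeg
        simpa [irreducible_iff, hunit, and_assoc, and_comm, and_left_comm] using hirr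
      obtain ⟨hq0, hr0⟩ := mul_ne_zero_iff.1 hp0
      have hq_deg := natDegree_pos_iff_degree_pos.2 (degree_pos_of_ne_zero_of_nonunit hq0 hq)
      have hr_deg := natDegree_pos_iff_degree_pos.2 (degree_pos_of_ne_zero_of_nonunit hr0 hr)
      rw [natDegree_mul hq0 hr0] at ih
      simp only [eval_mul, mul_eq_zero] at h ⊢
      rw [mul_mul_mul_comm] at h
      rcases mul_neg_iff.1 h with ⟨-, h⟩ | ⟨h, -⟩
      · exact (ih _ (by omega) r h rfl).imp fun c hc => ⟨hc.1, Or.inr hc.2⟩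
      · exact (ih _ (by omega) q h rfl).imp fun c hc => ⟨hc.1, Or.inl hc.2⟩

end IsMaximalSemireal

/-- The nonnegative cone of the ordering of a formally real field whose nonnegative elements are
the sums of squares. -/
def sumSqCone (K : Type*) [Field K] [IsSemireal K] : RingCone K where
  __ := Subsemiring.sumSq K
  eq_zero_of_mem_of_neg_mem' {a} ha hna := by
    by_contra ha0
    refine IsSemireal.not_isSumSq_neg_one K ?_
    have h := ((Subsemiring.mem_sumSq.1 ha).mul (Subsemiring.mem_sumSq.1 hna)).mul
      (IsSumSq.mul_self a⁻¹)
    rwa [show a * -a * (a⁻¹ * a⁻¹) = -1 by field_simp] at h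

lemma exists_isStrictOrderedRing (K : Type*) [Field K] [IsMaximalSemireal K] :
    ∃ _ : LinearOrder K, IsStrictOrderedRing K := by
  classical
  have : HasMemOrNegMem (sumSqCone K) :=
    ⟨fun a => (em (IsSquare a)).imp (Subsemiring.mem_sumSq.2 ·.isSumSq)
      (Subsemiring.mem_sumSq.2 <| isSumSq_neg_of_not_isSquare ·)⟩
  let _ : LinearOrder K := .mkOfAddGroupCone (sumSqCone K)
  have : IsOrderedRing K := .mkOfCone (sumSqCone K)
  exact ⟨_, IsOrderedRing.toIsStrictOrderedRing K⟩

lemma exists_isSumSq_of_isSumSq_sSup {c : Set (Subfield K)} (hc : c.Nonempty)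
    (hchain : IsChain (· ≤ ·) c) {x : (sSup c : Subfield K)} (hx : IsSumSq x) :
    ∃ S ∈ c, ∃ y : S, IsSumSq y ∧ (y : K) = x := by
  induction hx with
  | zero => exact hc.imp fun S hS => ⟨hS, 0, .zero, rfl⟩
  | sq_add a _ ih =>
    obtain ⟨S, hS, y, hy, hyx⟩ := ih
    obtain ⟨T, hT, ha⟩ := (Subfield.mem_sSup_of_directedOn hc hchain.directedOn).1 a.2
    obtain ⟨U, hU, hSU, hTU⟩ := hchain.directedOn S hS T hT
    refine ⟨U, hU, ⟨a, hTU ha⟩ * ⟨a, hTU ha⟩ + Subfield.inclusion hSU y,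
      (IsSumSq.mul_self _).add (isSumSq_map _ hy), ?_⟩
    simp only [Subfield.coe_add, Subfield.coe_mul, ← hyx]
    rfl

lemma exists_maximal_isSemireal_subfield {S₀ : Subfield K} (hS₀ : IsSemireal S₀) :
    ∃ S, S₀ ≤ S ∧ Maximal (fun S : Subfield K => IsSemireal S) S := by
  refine zorn_le_nonempty₀ {S : Subfield K | IsSemireal S} (fun c hc hchain S hS => ?_) S₀ hS₀
  refine ⟨sSup c, .of_not_isSumSq_neg_one fun h => ?_, fun _ => le_sSup⟩
  obtain ⟨T, hT, y, hy, hyx⟩ := exists_isSumSq_of_isSumSq_sSup ⟨S, hS⟩ hchain h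
  have : IsSemireal T := hc hT
  have hy1 : y = -1 := Subtype.ext (by simpa using hyx)
  exact IsSemireal.not_isSumSq_neg_one T (hy1 ▸ hy)

lemma isMaximalSemireal_of_maximal [IsAlgClosed K] {S : Subfield K}
    (hS : Maximal (fun S : Subfield K => IsSemireal S) S) : IsMaximalSemireal S where
  toIsSemireal := hS.prop
  not_isSemireal_adjoinRoot q hq hdeg hreal := by
    have := Fact.mk hq
    obtain ⟨x, hx⟩ := IsAlgClosed.exists_aeval_eq_zero K q (degree_pos_of_irreducible hq).ne'
    let φ : AdjoinRoot q →+* K := AdjoinRoot.lift (algebraMap S K) x hx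
    have hSφ : S ≤ φ.fieldRange := fun y hy => ⟨AdjoinRoot.of q ⟨y, hy⟩, AdjoinRoot.lift_of hx⟩
    have hφ : IsSemireal φ.fieldRange :=
      isSemireal_of_ringHom φ.rangeRestrictFieldEquiv.symm.toRingHom
    have hxS : x ∈ S := hS.le_of_ge hφ hSφ ⟨AdjoinRoot.root q, AdjoinRoot.lift_root hx⟩
    have hroot : q.IsRoot ⟨x, hxS⟩ := by
      refine (algebraMap S K).injective ?_
      rw [← aeval_algebraMap_apply_eq_algebraMap_eval, map_zero]
      exact hx
    rw [natDegree_eq_of_degree_eq_some (degree_eq_one_of_irreducible_of_root hq hroot)] at hdeg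
    exact absurd hdeg (by norm_num)

universe u in
theorem exists_hasPolynomialIVP_extension (K : Type u) [Field K] [IsSemireal K] :
    ∃ (M : Type u) (_ : Field M) (_ : LinearOrder M) (_ : IsStrictOrderedRing M),
      HasPolynomialIVP M ∧ Nonempty (K →+* M) := by
  let φ := algebraMap K (AlgebraicClosure K)
  have hφ : IsSemireal φ.fieldRange :=
    isSemireal_of_ringHom φ.rangeRestrictFieldEquiv.symm.toRingHom
  obtain ⟨S, hφS, hS⟩ := exists_maximal_isSemireal_subfield hφ
  have := isMaximalSemireal_of_maximal hS
  obtain ⟨_, _⟩ := exists_isStrictOrderedRing S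
  exact ⟨S, inferInstance, _, ‹_›, inferInstance, ⟨φ.codRestrict S fun x => hφS ⟨x, rfl⟩⟩⟩

end RealClosure

section RealNullstellensatz

open Polynomial

section RealIdeal

variable {A : Type*} [CommRing A]

/-- Real ideals of a commutative ring, in the sense of the real Nullstellensatz: an ideal containing
`a₁² + ⋯ + aₖ²` contains every `aᵢ`. -/
def IsRealIdeal (J : Ideal A) : Prop :=
  ∀ ⦃a s : A⦄, IsSumSq s → a * a + s ∈ J → a ∈ J

lemma IsRealIdeal.comap_mulLeft {P : Ideal A} (hP : IsRealIdeal P) (a : A) :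
    IsRealIdeal (Submodule.comap (LinearMap.mulLeft A a) P) := by
  intro b s hs h
  refine hP (s := a * a * s) ((IsSumSq.mul_self a).mul hs) ?_
  convert P.mul_mem_left a (Submodule.mem_comap.1 h) using 1
  simp only [LinearMap.mulLeft_apply]
  ring

lemma IsRealIdeal.mem_of_mul_self_mem {P : Ideal A} (hP : IsRealIdeal P) {a : A}
    (ha : a * a ∈ P) : a ∈ P :=
  hP .zero (by simpa using ha)

lemma IsRealIdeal.sSup {c : Set (Ideal A)} (hc : c.Nonempty) (hchain : IsChain (· ≤ ·) c)
    (h : ∀ I ∈ c, IsRealIdeal I) : IsRealIdeal (sSup c) := by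
  intro a s hs has
  obtain ⟨I, hI, hIas⟩ := (Submodule.mem_sSup_of_directed hc hchain.directedOn).1 has
  exact le_sSup hI (h I hI hs hIas)

lemma exists_maximal_isRealIdeal_notMem {J : Ideal A} (hJ : IsRealIdeal J) {f : A} (hf : f ∉ J) :
    ∃ P, J ≤ P ∧ Maximal (fun I : Ideal A => IsRealIdeal I ∧ f ∉ I) P := by
  refine zorn_le_nonempty₀ {I : Ideal A | IsRealIdeal I ∧ f ∉ I} (fun c hc hchain I hI => ?_) J
    ⟨hJ, hf⟩
  refine ⟨sSup c, ⟨.sSup ⟨I, hI⟩ hchain fun I hI => (hc hI).1, fun hfc => ?_⟩, fun _ => le_sSup⟩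
  obtain ⟨I, hI, hfI⟩ := (Submodule.mem_sSup_of_directed ⟨I, hI⟩ hchain.directedOn).1 hfc
  exact (hc hI).2 hfI

lemma isPrime_of_maximal_isRealIdeal_notMem {f : A} {P : Ideal A}
    (hP : Maximal (fun I : Ideal A => IsRealIdeal I ∧ f ∉ I) P) : P.IsPrime := by
  have mul_mem_of_mul_mem {a x : A} (hax : a * x ∈ P) (hx : x ∉ P) : a * f ∈ P := by
    by_contra haf
    exact hx (hP.le_of_ge ⟨hP.prop.1.comap_mulLeft a, haf⟩ (fun z => P.mul_mem_left a) hax)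
  refine ⟨fun h => hP.prop.2 (h ▸ trivial), fun {a b} hab => ?_⟩
  by_contra! h
  have hfa : f * a ∈ P := mul_comm a f ▸ mul_mem_of_mul_mem hab h.2
  exact hP.prop.2 (hP.prop.1.mem_of_mul_self_mem (mul_mem_of_mul_mem hfa h.1))

lemma exists_isSumSq_of_isSumSq_div {D : Type*} [CommRing D] [IsDomain D] {F : Type*} [Field F]
    [Algebra D F] [IsFractionRing D F] {x : F} (hx : IsSumSq x) :
    ∃ b s : D, b ≠ 0 ∧ IsSumSq s ∧ algebraMap D F (b * b) * x = algebraMap D F s := by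
  induction hx with
  | zero => exact ⟨1, 0, one_ne_zero, .zero, by simp⟩
  | sq_add a _ ih =>
    obtain ⟨b, s, hb, hs, hbs⟩ := ih
    obtain ⟨n, d, hd, rfl⟩ := IsFractionRing.div_surjective (A := D) a
    have hd0 := nonZeroDivisors.ne_zero hd
    have hd0' : algebraMap D F d ≠ 0 := by simpa using hd0
    refine ⟨b * d, b * n * (b * n) + d * d * s, mul_ne_zero hb hd0,
      (IsSumSq.mul_self _).add ((IsSumSq.mul_self d).mul hs), ?_⟩
    simp only [map_add, map_mul] at hbs ⊢
    rw [← hbs]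
    field_simp

lemma exists_isSumSq_mk_eq {J : Ideal A} {x : A ⧸ J} (hx : IsSumSq x) :
    ∃ s, IsSumSq s ∧ Ideal.Quotient.mk J s = x := by
  induction hx with
  | zero => exact ⟨0, .zero, map_zero _⟩
  | sq_add a _ ih =>
    obtain ⟨s, hs, rfl⟩ := ih
    obtain ⟨a, rfl⟩ := Ideal.Quotient.mk_surjective a
    exact ⟨a * a + s, (IsSumSq.mul_self a).add hs, by simp⟩

lemma IsRealIdeal.isSemireal_fractionRing {P : Ideal A} [P.IsPrime] (hP : IsRealIdeal P) :
    IsSemireal (FractionRing (A ⧸ P)) := by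
  refine .of_not_isSumSq_neg_one fun h => ?_
  obtain ⟨b, s, hb, hs, hbs⟩ := exists_isSumSq_of_isSumSq_div (D := A ⧸ P) h
  obtain ⟨t, ht, rfl⟩ := exists_isSumSq_mk_eq hs
  obtain ⟨b, rfl⟩ := Ideal.Quotient.mk_surjective b
  refine hb (Ideal.Quotient.eq_zero_iff_mem.2 (hP ht (Ideal.Quotient.eq_zero_iff_mem.1 ?_)))
  apply IsFractionRing.injective (A ⧸ P) (FractionRing (A ⧸ P))
  simp only [map_add, map_mul, map_zero] at hbs ⊢
  linear_combination -hbs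

end RealIdeal

lemma exists_mul_self_eq_of_hasPolynomialIVP {R : Type*} [Field R] [LinearOrder R]
    [IsStrictOrderedRing R] [HasPolynomialIVP R] {r : R} (hr : 0 < r) : ∃ c, 0 < c ∧ c * c = r := by
  obtain ⟨c, hc, hcr⟩ := HasPolynomialIVP.exists_root_of_mul_neg (X * X - C r)
    (a := 0) (b := r + 1) (by positivity)
    (by simp only [eval_sub, eval_mul, eval_X, eval_C]; nlinarith [pow_pos hr 3])
  exact ⟨c, hc.1, by simpa [sub_eq_zero] using hcr⟩

lemma strictMono_ringHom_of_hasPolynomialIVP {R M : Type*} [Field R] [LinearOrder R]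
    [IsStrictOrderedRing R] [HasPolynomialIVP R] [Ring M] [LinearOrder M] [IsStrictOrderedRing M]
    (i : R →+* M) : StrictMono i := by
  intro r s hrs
  obtain ⟨c, hc, hcr⟩ := exists_mul_self_eq_of_hasPolynomialIVP (sub_pos.2 hrs)
  rw [← sub_pos, ← map_sub, ← hcr, map_mul]
  exact mul_self_pos.2 ((map_ne_zero_iff i i.injective).2 hc.ne')

universe u in
lemma IsRealIdeal.exists_hasPolynomialIVP_ringHom {A : Type u} [CommRing A] {J : Ideal A}
    (hJ : IsRealIdeal J) {f : A} (hf : f ∉ J) :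
    ∃ (M : Type u) (_ : Field M) (_ : LinearOrder M) (_ : IsStrictOrderedRing M)
      (_ : HasPolynomialIVP M) (ψ : A →+* M), (∀ g ∈ J, ψ g = 0) ∧ ψ f ≠ 0 := by
  obtain ⟨P, hJP, hP⟩ := exists_maximal_isRealIdeal_notMem hJ hf
  have := isPrime_of_maximal_isRealIdeal_notMem hP
  have := hP.prop.1.isSemireal_fractionRing
  obtain ⟨M, _, _, _, hM, ⟨φ⟩⟩ := exists_hasPolynomialIVP_extension (FractionRing (A ⧸ P))
  let ψ : A →+* M := φ.comp ((algebraMap (A ⧸ P) _).comp (Ideal.Quotient.mk P))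
  have hψ (a : A) : ψ a = 0 ↔ a ∈ P := by
    simp only [ψ, RingHom.comp_apply]
    rw [map_eq_zero, IsFractionRing.to_map_eq_zero_iff, Ideal.Quotient.eq_zero_iff_mem]
  exact ⟨M, inferInstance, _, ‹_›, hM, ψ, fun g hg => (hψ g).2 (hJP hg),
    fun h => hP.prop.2 ((hψ f).1 h)⟩

universe u in
theorem real_nullstellensatz {R σ : Type u} [Field R] [LinearOrder R] [IsStrictOrderedRing R]
    [HasPolynomialIVP R] [Finite σ] {J : Ideal (MvPolynomial σ R)} (hJ : IsRealIdeal J)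
    {f : MvPolynomial σ R}
    (hf : ∀ x : σ → R, (∀ g ∈ J, MvPolynomial.eval x g = 0) → MvPolynomial.eval x f = 0) :
    f ∈ J := by
  by_contra hfJ
  obtain ⟨M, _, _, _, _, ψ, hψJ, hψf⟩ := hJ.exists_hasPolynomialIVP_ringHom hfJ
  obtain ⟨T, rfl⟩ : J.FG := IsNoetherian.noetherian J
  obtain ⟨G, -, hG⟩ := exists_finite_forall_exists_signsAgreeOn_mvPolynomial
    (T.finite_toSet.insert f)
  obtain ⟨y, hy⟩ := hG M R (ψ.comp MvPolynomial.C) (RingHom.id R)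
    (fun r _ => (strictMono_ringHom_of_hasPolynomialIVP _).sign_comp r)
    fun k => ψ (MvPolynomial.X k)
  have hψ : MvPolynomial.eval₂Hom (ψ.comp MvPolynomial.C) (fun k => ψ (MvPolynomial.X k)) = ψ := by
    ext <;> simp
  rw [hψ] at hy
  have eval_y_eq_zero : Ideal.span T ≤ RingHom.ker (MvPolynomial.eval y) :=
    Ideal.span_le.2 fun g hg =>
      (hy.apply_eq_zero_iff (.inr hg)).1 (hψJ g (Ideal.subset_span hg))
  exact hψf ((hy.apply_eq_zero_iff (.inl rfl)).2 (hf y eval_y_eq_zero))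

end RealNullstellensatz

section QuaternionicPolynomials

section RealLeftIdeal

variable {A : Type*} [Ring A] [StarRing A]

lemma mem_of_star_mul_self_mem {I : Ideal A} (hI : I.IsRealLeftIdeal) {a : A}
    (ha : star a * a ∈ I) : a ∈ I :=
  hI 1 (fun _ => a) (by simpa using ha) 0

lemma exists_eq_sum_mul_self_of_isSumSq {B : Type*} [CommRing B] {s : B} (hs : IsSumSq s) :
    ∃ (k : ℕ) (b : Fin k → B), s = ∑ i, b i * b i := by
  induction hs with
  | zero => exact ⟨0, Fin.elim0, by simp⟩
  | sq_add a _ ih =>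
    obtain ⟨k, b, rfl⟩ := ih
    exact ⟨k + 1, Fin.cons a b, by simp [Fin.sum_univ_succ]⟩

lemma isRealIdeal_comap {I : Ideal A} (hI : I.IsRealLeftIdeal) {B : Type*} [CommRing B]
    {φ : B →+* A} (hφ : ∀ b, star (φ b) = φ b) : IsRealIdeal (I.comap φ) := by
  intro a s hs has
  obtain ⟨k, b, rfl⟩ := exists_eq_sum_mul_self_of_isSumSq hs
  refine hI (k + 1) (Fin.cons (φ a) (φ ∘ b)) ?_ 0
  simpa [Fin.sum_univ_succ, hφ] using has

lemma isRealLeftIdeal_ker_of_quaternion {R : Type*} [CommRing R] [LinearOrder R]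
    [IsStrictOrderedRing R] {φ : A →+* Quaternion R} (hφ : ∀ a, φ (star a) = star (φ a)) :
    (RingHom.ker φ).IsRealLeftIdeal := by
  intro k a ha i
  simp only [RingHom.mem_ker, map_sum, map_mul, hφ, Quaternion.star_mul_self] at ha
  have hsum : ∑ i, Quaternion.normSq (φ (a i)) = 0 :=
    Quaternion.coe_injective ((map_sum (algebraMap R (Quaternion R)) _ _).trans ha)
  rw [Finset.sum_eq_zero_iff_of_nonneg fun _ _ => Quaternion.normSq_nonneg] at hsum
  exact Quaternion.normSq_eq_zero.1 (hsum i (Finset.mem_univ i))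

end RealLeftIdeal

section QuaternionMap

variable {R S : Type*} [CommRing R] [CommRing S]

/-- The map between quaternion rings that applies `φ` to the four coordinates. -/
@[simps]
def quaternionMapFun (φ : R → S) (q : Quaternion R) : Quaternion S :=
  ⟨φ q.re, φ q.imI, φ q.imJ, φ q.imK⟩

/-- The ring homomorphism between quaternion rings that applies the ring homomorphism `φ` to the
four coordinates. -/
@[simps]
def quaternionMap (φ : R →+* S) : Quaternion R →+* Quaternion S where
  toFun := quaternionMapFun φ
  map_one' := by ext <;> first | exact map_one φ | exact map_zero φ
  map_zero' := by ext <;> exact map_zero φ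
  map_add' p q := by ext <;> simp
  map_mul' p q := by ext <;> simp

lemma normSq_quaternionMap (φ : R →+* S) (q : Quaternion R) :
    Quaternion.normSq (quaternionMap φ q) = φ (Quaternion.normSq q) := by
  simp [Quaternion.normSq_def']

end QuaternionMap

variable {d : ℕ}

lemma const_mem_HPoly (c : ℍ) : (fun _ => c) ∈ HPoly d :=
  Subring.subset_closure (.inl ⟨c, rfl⟩)

lemma coe_re_mem_HPoly {f : (Fin d → ℍ) → ℍ} (hf : f ∈ HPoly d) :
    (fun a => ((f a).re : ℍ)) ∈ HPoly d := by
  have h : (fun a => ((f a).re : ℍ)) = (fun _ => ((2⁻¹ : ℝ) : ℍ)) * (f + star f) := by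
    funext a
    rw [Pi.mul_apply, Pi.add_apply, Pi.star_apply, Quaternion.self_add_star',
      ← Quaternion.coe_mul, inv_mul_cancel_left₀ two_ne_zero]
  rw [h]
  exact mul_mem (const_mem_HPoly _) (add_mem hf (star_mem_HPoly hf))

/-- The identification of `ℍ^d` with real affine space of dimension `4 * d`. -/
def realCoords (d : ℕ) : (Fin d → ℍ) ≃ (Fin d × Fin 4 → ℝ) :=
  (Equiv.piCongrRight fun _ => Quaternion.equivTuple ℝ).trans (Equiv.curry _ _ _).symm

lemma coe_realCoords_mem_HPoly (k : Fin d × Fin 4) :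
    (fun a => (realCoords d a k : ℍ)) ∈ HPoly d := by
  obtain ⟨i, k⟩ := k
  have hre (c : ℍ) : (fun a : Fin d → ℍ => ((c * a i).re : ℍ)) ∈ HPoly d :=
    coe_re_mem_HPoly (mul_mem (const_mem_HPoly c) (Subring.subset_closure (.inr ⟨i, rfl⟩)))
  fin_cases k
  · convert hre 1 using 4; simp [realCoords]
  · convert hre (-qI) using 4
    simp only [neg_mul, Quaternion.re_neg, Quaternion.re_mul]
    simp [realCoords, qI]
  · convert hre (-qJ) using 4
    simp only [neg_mul, Quaternion.re_neg, Quaternion.re_mul]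
    simp [realCoords, qJ]
  · convert hre (-qK) using 4
    simp only [neg_mul, Quaternion.re_neg, Quaternion.re_mul]
    simp [realCoords, qK]

lemma coe_eval_realCoords_mem_HPoly (P : MvPolynomial (Fin d × Fin 4) ℝ) :
    (fun a => (MvPolynomial.eval (realCoords d a) P : ℍ)) ∈ HPoly d := by
  induction P using MvPolynomial.induction_on with
  | C c => simpa using const_mem_HPoly (c : ℍ)
  | add P Q hP hQ =>
    simp only [map_add, Quaternion.coe_add]
    exact add_mem hP hQ
  | mul_X P k hP =>
    simp only [map_mul, MvPolynomial.eval_X, Quaternion.coe_mul]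
    exact mul_mem hP (coe_realCoords_mem_HPoly k)

/-- The embedding of the real polynomials in the `4 * d` real coordinates of `ℍ^d` as the
real-valued elements of `HPoly d`. -/
noncomputable def ofRealPolynomial (d : ℕ) : MvPolynomial (Fin d × Fin 4) ℝ →+* HPoly d :=
  (RingHom.pi fun a => (algebraMap ℝ ℍ).comp (MvPolynomial.eval (realCoords d a))).codRestrict
    (HPoly d) coe_eval_realCoords_mem_HPoly

lemma star_ofRealPolynomial (P : MvPolynomial (Fin d × Fin 4) ℝ) :
    star (ofRealPolynomial d P) = ofRealPolynomial d P :=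
  Subtype.ext (funext fun _ => Quaternion.star_coe _)

lemma exists_quaternionMap_eval_eq {f : (Fin d → ℍ) → ℍ} (hf : f ∈ HPoly d) :
    ∃ P : Quaternion (MvPolynomial (Fin d × Fin 4) ℝ), ∀ a,
      quaternionMap (MvPolynomial.eval (realCoords d a)) P = f a := by
  suffices HPoly d ≤ (RingHom.pi fun a : Fin d → ℍ =>
      quaternionMap (MvPolynomial.eval (realCoords d a))).range from
    (this hf).imp fun P hP => congrFun hP
  refine Subring.closure_le.2 (Set.union_subset ?_ ?_)
  · rintro _ ⟨c, rfl⟩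
    exact ⟨quaternionMap MvPolynomial.C c, funext fun a => by ext <;> simp [quaternionMap]⟩
  · rintro _ ⟨i, rfl⟩
    exact ⟨⟨.X (i, 0), .X (i, 1), .X (i, 2), .X (i, 3)⟩,
      funext fun a => by ext <;> exact MvPolynomial.eval_X _⟩

lemma exists_ofRealPolynomial_eq_star_mul_self (f : HPoly d) :
    ∃ N : MvPolynomial (Fin d × Fin 4) ℝ, ofRealPolynomial d N = star f * f ∧
      ∀ a, MvPolynomial.eval (realCoords d a) N = Quaternion.normSq (f.1 a) := by
  obtain ⟨P, hP⟩ := exists_quaternionMap_eval_eq f.2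
  have hN (a) : MvPolynomial.eval (realCoords d a) (Quaternion.normSq P) =
      Quaternion.normSq (f.1 a) := by
    rw [← hP, normSq_quaternionMap]
  refine ⟨_, Subtype.ext <| funext fun a => ?_, hN⟩
  exact (congrArg _ (hN a)).trans (Quaternion.star_mul_self _).symm

lemma exists_isRealLeftIdeal_forall_mem_iff (a : Fin d → ℍ) :
    ∃ I : Ideal (HPoly d), I.IsRealLeftIdeal ∧ ∀ f : HPoly d, f ∈ I ↔ f.1 a = 0 :=
  ⟨RingHom.ker ((Pi.evalRingHom (fun _ => ℍ) a).comp (HPoly d).subtype),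
    isRealLeftIdeal_ker_of_quaternion fun _ => rfl, fun _ => Iff.rfl⟩

end QuaternionicPolynomials

theorem quaternionic_nullstellensatz_general {d : ℕ} {ι : Type*} (p : ι → HPoly d) (q : HPoly d) :
    (∀ a : Fin d → ℍ, (∀ i, (p i : (Fin d → ℍ) → ℍ) a = 0) → (q : (Fin d → ℍ) → ℍ) a = 0) ↔
      (∀ I : Ideal (HPoly d), I.IsRealLeftIdeal → (∀ i, p i ∈ I) → q ∈ I) := by
  refine ⟨fun h I hI hp => ?_, fun h a ha => ?_⟩
  · choose N hN hN_eval using exists_ofRealPolynomial_eq_star_mul_self (d := d)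
    suffices N q ∈ I.comap (ofRealPolynomial d) from
      mem_of_star_mul_self_mem hI (hN q ▸ this)
    refine real_nullstellensatz (isRealIdeal_comap hI star_ofRealPolynomial) fun x hx => ?_
    obtain ⟨a, rfl⟩ := (realCoords d).surjective x
    have hN_mem (i : ι) : N (p i) ∈ I.comap (ofRealPolynomial d) :=
      Ideal.mem_comap.2 (hN (p i) ▸ I.mul_mem_left _ (hp i))
    have hpa (i : ι) : (p i : (Fin d → ℍ) → ℍ) a = 0 :=
      Quaternion.normSq_eq_zero.1 (hN_eval (p i) a ▸ hx _ (hN_mem i))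
    rw [hN_eval, h a hpa, map_zero]
  · obtain ⟨I, hI, hmem⟩ := exists_isRealLeftIdeal_forall_mem_iff a
    exact (hmem q).1 (h I hI fun i => (hmem (p i)).2 (ha i))

/-- **Second Quaternionic Nullstellensatz (Theorem C).** -/
theorem quaternionic_nullstellensatz (d m : ℕ) (p : Fin m → HPoly d) (q : HPoly d) :
    (∀ a : Fin d → ℍ, (∀ i, (p i : (Fin d → ℍ) → ℍ) a = 0) → (q : (Fin d → ℍ) → ℍ) a = 0) ↔
      (∀ I : Ideal (HPoly d), I.IsRealLeftIdeal → (∀ i, p i ∈ I) → q ∈ I) :=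
  quaternionic_nullstellensatz_general p q
end

section
/- (Theorem D, Matricial Real Nullstellensatz) For any matrix polynomials P₁, …, P_m, Q ∈ M_n(ℝ[x₁, …, x_d]) the following are equivalent: (1) for every a ∈ ℝ^d and every vector v ∈ ℝ^n such that P₁(a)v = ⋯ = P_m(a)v = 0, one has Q(a)v = 0; (2) Q belongs to every real left ideal of M_n(ℝ[x₁, …, x_d]) that contains P₁, …, P_m. -/
open MvPolynomial Matrix

/-- A left ideal `I` of the matrix ring `Mₙ(ℝ[x₁,…,x_d])`, equipped with the transpose
involution, is *real* if whenever `(A 0)ᵀ * A 0 + ⋯ + (A (k-1))ᵀ * A (k-1) ∈ I`,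
each `A i` lies in `I`.  (In Mathlib, `Ideal` means left ideal.) -/
def Ideal.IsRealLeftIdealT {R : Type*} [CommRing R] {n : ℕ}
    (I : Ideal (Matrix (Fin n) (Fin n) R)) : Prop :=
  ∀ (k : ℕ) (A : Fin k → Matrix (Fin n) (Fin n) R),
    (∑ i, (A i)ᵀ * A i) ∈ I → ∀ i, A i ∈ I

/-- Entrywise evaluation of a matrix polynomial at a real point. -/
noncomputable def evalMat {d n : ℕ} (a : Fin d → ℝ)
    (P : Matrix (Fin n) (Fin n) (MvPolynomial (Fin d) ℝ)) : Matrix (Fin n) (Fin n) ℝ :=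
  fun i j => eval a (P i j)

/-!
The matrix polynomials `B` with `B(a) v = 0` form a real left ideal, since
`vᵀ (∑ Bᵢ(a)ᵀ Bᵢ(a)) v = ∑ |Bᵢ(a) v|²`. Conversely, let `I` be maximal among the real left ideals
of `Mₙ(A)` that miss `Q`. The scalars `a` with `a Q ∈ I` form a prime ideal `J` with `A / J`
formally real, and no multiple `s Q` with `s ∉ J` lies in `I` modulo `J`: if all entries of
`W = s Q - T` lie in `J` and `T ∈ I`, then `Wᵀ W ∈ I`, so `W ∈ I`. A linear functional over the
semireal field `k = Frac (A / J)` therefore separates `Q` from `I`, and its values at the matrix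
units in a suitable row give `v ∈ kⁿ` with `I v = 0` and `Q v ≠ 0`.

For `A = ℝ[x]` this is a solution in `k` of a system `g = 0`, `h ≠ 0` of real polynomials. It moves
to `ℝ` by the Artin–Lang principle. Embed `k` in a real closed field `K`. If `R ⊆ K` is relatively
algebraically closed and `t ∈ K \ R`, then `t` has the same order type over `R` as the germ of the
identity in some ultrapower `R^U`, so that a relatively algebraically closed subfield of `K`
containing `R(t)` embeds in `R^U` over `R`; solutions in `R^U` descend to `R` coordinatewise. The
coordinates of the solution are eliminated in this way one at a time.
-/

open scoped Polynomial

theorem exists_consecutive_root_s3 {R : Type*} [CommRing R] [IsDomain R] [LinearOrder R] {f : R[X]}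
    {a b : R} (hf : f ≠ 0) (hab : a < b) (hb : f.eval b = 0) :
    ∃ c ∈ Set.Ioc a b, f.eval c = 0 ∧ ∀ x ∈ Set.Ioo a c, f.eval x ≠ 0 := by
  classical
  let T := f.roots.toFinset.filter (· ∈ Set.Ioc a b)
  have hmem : ∀ {x}, x ∈ T ↔ f.eval x = 0 ∧ x ∈ Set.Ioc a b := by simp [T, hf]
  have hT : T.Nonempty := ⟨b, hmem.2 ⟨hb, hab, le_rfl⟩⟩
  obtain ⟨hroot, hc⟩ := hmem.1 (T.min'_mem hT)
  refine ⟨T.min' hT, hc, hroot, fun x hx h0 => ?_⟩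
  exact (T.min'_le x (hmem.2 ⟨h0, hx.1, hx.2.le.trans hc.2⟩)).not_gt hx.2

/-- Ordered fields whose polynomials satisfy the intermediate value property. This is one of the
equivalent descriptions of real closed ordered fields, chosen because it passes directly to
relatively algebraically closed subfields and to ultrapowers. -/
class HasPolynomialIVP_s3 (K : Type*) [Field K] [LinearOrder K] : Prop where
  exists_root_of_eval_mul_neg : ∀ {f : K[X]} {a b : K}, a < b → f.eval a * f.eval b < 0 →
    ∃ c ∈ Set.Ioo a b, f.eval c = 0

namespace HasPolynomialIVP_s3

open Polynomial (derivative)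

variable {K : Type*} [Field K] [LinearOrder K] [IsStrictOrderedRing K] [HasPolynomialIVP_s3 K]
  {f : K[X]} {a b c : K}

theorem eval_mul_eval_pos (hf : ∀ c ∈ Set.uIcc a b, f.eval c ≠ 0) :
    0 < f.eval a * f.eval b := by
  wlog hab : a ≤ b generalizing a b
  · rw [mul_comm]
    exact this (Set.uIcc_comm a b ▸ hf) (le_of_not_ge hab)
  rw [Set.uIcc_of_le hab] at hf
  rcases hab.eq_or_lt with rfl | hlt
  · exact mul_self_pos.2 (hf a (Set.left_mem_Icc.2 le_rfl))
  by_contra! hneg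
  have hne := mul_ne_zero (hf a (Set.left_mem_Icc.2 hab)) (hf b (Set.right_mem_Icc.2 hab))
  obtain ⟨c, hc, hroot⟩ := exists_root_of_eval_mul_neg hlt (hneg.lt_of_ne hne)
  exact hf c (Set.Ioo_subset_Icc_self hc) hroot

theorem sign_eval_eq (hf : ∀ c ∈ Set.uIcc a b, f.eval c ≠ 0) :
    SignType.sign (f.eval a) = SignType.sign (f.eval b) := by
  rcases mul_pos_iff.1 (eval_mul_eval_pos hf) with ⟨ha, hb⟩ | ⟨ha, hb⟩
  · rw [sign_pos ha, sign_pos hb]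
  · rw [sign_neg ha, sign_neg hb]

theorem exists_derivative_root_of_eq_mul {g : K[X]} {m n : ℕ} (hab : a < b)
    (hg : ∀ c ∈ Set.uIcc a b, g.eval c ≠ 0)
    (hf : f = (Polynomial.X - Polynomial.C a) ^ (m + 1) *
      ((Polynomial.X - Polynomial.C b) ^ (n + 1) * g)) :
    ∃ c ∈ Set.Ioo a b, (derivative f).eval c = 0 := by
  set h : K[X] := ((m : K[X]) + 1) * (Polynomial.X - Polynomial.C b) * g +
    ((n : K[X]) + 1) * (Polynomial.X - Polynomial.C a) * g +
    (Polynomial.X - Polynomial.C a) * (Polynomial.X - Polynomial.C b) * derivative g with hh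
  have hfactor : derivative f =
      (Polynomial.X - Polynomial.C a) ^ m * (Polynomial.X - Polynomial.C b) ^ n * h := by
    rw [hf]
    simp [Polynomial.derivative_mul, Polynomial.derivative_pow, hh]
    ring
  have hneg : h.eval a * h.eval b < 0 := by
    have hpos : 0 < ((m : K) + 1) * ((n : K) + 1) * (b - a) ^ 2 * (g.eval a * g.eval b) :=
      mul_pos (mul_pos (by positivity) (pow_pos (sub_pos.2 hab) 2)) (eval_mul_eval_pos hg)
    have heq : h.eval a * h.eval b =
        -(((m : K) + 1) * ((n : K) + 1) * (b - a) ^ 2 * (g.eval a * g.eval b)) := by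
      simp [hh]
      ring
    linarith
  obtain ⟨c, hc, hroot⟩ := exists_root_of_eval_mul_neg hab hneg
  exact ⟨c, hc, by simp [hfactor, hroot]⟩

theorem exists_derivative_root (hab : a < b) (ha : f.eval a = 0) (hb : f.eval b = 0) :
    ∃ c ∈ Set.Ioo a b, (derivative f).eval c = 0 := by
  rcases eq_or_ne f 0 with rfl | hf
  · obtain ⟨c, hc⟩ := exists_between hab
    exact ⟨c, hc, by simp⟩
  obtain ⟨b', hb', hroot, hno⟩ := exists_consecutive_root_s3 hf hab hb
  obtain ⟨q, hq, hqa⟩ := f.exists_eq_pow_rootMultiplicity_mul_and_not_dvd hf a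
  obtain ⟨m, hm⟩ := Nat.exists_eq_add_one_of_ne_zero
    ((Polynomial.rootMultiplicity_pos hf).2 ha).ne'
  have hq0 : q ≠ 0 := by rintro rfl; simp at hqa
  have hqb : q.eval b' = 0 := by
    rw [hq] at hroot
    simpa [sub_ne_zero.2 hb'.1.ne'] using hroot
  obtain ⟨g, hg, hgb⟩ := q.exists_eq_pow_rootMultiplicity_mul_and_not_dvd hq0 b'
  obtain ⟨n, hn⟩ := Nat.exists_eq_add_one_of_ne_zero
    ((Polynomial.rootMultiplicity_pos hq0).2 hqb).ne'
  rw [Polynomial.dvd_iff_isRoot, Polynomial.IsRoot] at hqa hgb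
  have hfg : f = (Polynomial.X - Polynomial.C a) ^ (m + 1) *
      ((Polynomial.X - Polynomial.C b') ^ (n + 1) * g) := by
    rw [← hm, ← hn, ← hg, ← hq]
  have hgne : ∀ c ∈ Set.uIcc a b', g.eval c ≠ 0 := by
    rw [Set.uIcc_of_le hb'.1.le]
    rintro c ⟨hac, hcb⟩ h0
    rcases hac.eq_or_lt with rfl | hac
    · exact hqa (by rw [hg]; simp [h0])
    rcases hcb.eq_or_lt with rfl | hcb
    · exact hgb h0
    exact hno c ⟨hac, hcb⟩ (by rw [hfg]; simp [h0])
  obtain ⟨c, hc, hc0⟩ := exists_derivative_root_of_eq_mul hb'.1 hgne hfg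
  exact ⟨c, ⟨hc.1, hc.2.trans_le hb'.2⟩, hc0⟩

theorem eq_of_root_of_derivative_ne_zero (hf : ∀ c ∈ Set.Ioo a b, (derivative f).eval c ≠ 0)
    {x y : K} (hx : x ∈ Set.Icc a b) (hy : y ∈ Set.Icc a b) (hx0 : f.eval x = 0)
    (hy0 : f.eval y = 0) : x = y := by
  by_contra hne
  wlog hxy : x < y generalizing x y
  · exact this hy hx hy0 hx0 (Ne.symm hne) ((not_lt.1 hxy).lt_of_ne (Ne.symm hne))
  obtain ⟨c, hc, hc0⟩ := exists_derivative_root hxy hx0 hy0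
  exact hf c (Set.Ioo_subset_Ioo hx.1 hy.2 hc) hc0

theorem eval_mul_eval_neg_of_root (hf : ∀ c ∈ Set.Ioo a b, (derivative f).eval c ≠ 0)
    (hc : c ∈ Set.Ioo a b) (hc0 : f.eval c = 0) : f.eval a * f.eval b < 0 := by
  obtain ⟨g, rfl⟩ := Polynomial.dvd_iff_isRoot.2 hc0
  have hg : ∀ x ∈ Set.uIcc a b, g.eval x ≠ 0 := by
    rw [Set.uIcc_of_le (hc.1.trans hc.2).le]
    intro x hx h0
    obtain rfl := eq_of_root_of_derivative_ne_zero hf hx (Set.Ioo_subset_Icc_self hc)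
      (by simp [h0]) hc0
    exact hf x hc (by simp [h0])
  have hpos := mul_pos (mul_pos (sub_pos.2 hc.1) (sub_pos.2 hc.2)) (eval_mul_eval_pos hg)
  simp only [Polynomial.eval_mul, Polynomial.eval_sub, Polynomial.eval_X, Polynomial.eval_C]
  linarith

end HasPolynomialIVP_s3

/-- Two elements of ordered extensions of `S` have the same order type over `S` if every polynomial
over `S` has the same sign at both; equivalently, they have the same quantifier-free type over `S`
in the language of ordered rings. -/
def SameOrderType (S : Type*) [CommRing S] {K M : Type*} [CommRing K] [LinearOrder K] [Algebra S K]
    [CommRing M] [LinearOrder M] [Algebra S M] (α : K) (β : M) : Prop :=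
  ∀ p : S[X], SignType.sign (Polynomial.aeval α p) = SignType.sign (Polynomial.aeval β p)

/-- Every element of `K` of degree less than `n` over `S` already lies in `S`; this is the induction
hypothesis when order embeddings are extended by elements of increasing degree. -/
def RootClosedBelow (S K : Type*) [Field S] [Field K] [Algebra S K] (n : ℕ) : Prop :=
  ∀ x : K, IsIntegral S x → (minpoly S x).natDegree < n → x ∈ Set.range (algebraMap S K)

theorem RootClosedBelow.mono {S K : Type*} [Field S] [Field K] [Algebra S K] {m n : ℕ}
    (h : RootClosedBelow S K n) (hmn : m ≤ n) : RootClosedBelow S K m :=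
  fun x hx hdeg => h x hx (hdeg.trans_le hmn)

theorem RootClosedBelow.mem_range {S K : Type*} [Field S] [Field K] [Algebra S K] {n : ℕ}
    (h : RootClosedBelow S K n) {r : S[X]} (hr : r ≠ 0) (hdeg : r.natDegree < n) {x : K}
    (hx : Polynomial.aeval x r = 0) : x ∈ Set.range (algebraMap S K) :=
  h x (isAlgebraic_iff_isIntegral.1 ⟨r, hr, hx⟩)
    ((Polynomial.natDegree_le_of_dvd (minpoly.dvd S x hx) hr).trans_lt hdeg)

theorem RootClosedBelow.aeval_ne_zero {S K : Type*} [Field S] [LinearOrder S] [Field K]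
    [LinearOrder K] [Algebra S K] (hSK : StrictMono (algebraMap S K)) {n : ℕ}
    (h : RootClosedBelow S K n) {r : S[X]} (hr : r ≠ 0) (hdeg : r.natDegree < n) {u v : S}
    (hr0 : ∀ s ∈ Set.Ioo u v, r.eval s ≠ 0) {x : K}
    (hx : x ∈ Set.Ioo (algebraMap S K u) (algebraMap S K v)) : Polynomial.aeval x r ≠ 0 := by
  intro h0
  obtain ⟨s, rfl⟩ := h.mem_range hr hdeg h0
  rw [Polynomial.aeval_algebraMap_apply, Polynomial.coe_aeval_eq_eval, map_eq_zero] at h0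
  exact hr0 s ⟨hSK.lt_iff_lt.1 hx.1, hSK.lt_iff_lt.1 hx.2⟩ h0

namespace SameOrderType

variable {S K M : Type*} [CommRing S] [CommRing K] [LinearOrder K] [Algebra S K]
  [CommRing M] [LinearOrder M] [Algebra S M] {α : K} {β : M}

theorem symm (h : SameOrderType S α β) : SameOrderType S β α :=
  fun p => (h p).symm

theorem aeval_eq_zero_iff (h : SameOrderType S α β) {p : S[X]} :
    Polynomial.aeval α p = 0 ↔ Polynomial.aeval β p = 0 := by
  rw [← sign_eq_zero_iff, h p, sign_eq_zero_iff]

theorem mem_range_iff (h : SameOrderType S α β) :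
    α ∈ Set.range (algebraMap S K) ↔ β ∈ Set.range (algebraMap S M) := by
  refine exists_congr fun s => ?_
  have hs := h.aeval_eq_zero_iff (p := Polynomial.X - Polynomial.C s)
  rw [map_sub, map_sub, Polynomial.aeval_X, Polynomial.aeval_X, Polynomial.aeval_C,
    Polynomial.aeval_C, sub_eq_zero, sub_eq_zero] at hs
  rw [eq_comm, hs, eq_comm]

end SameOrderType

section OrderType

variable {S K M : Type*} [Field S] [LinearOrder S]
  [Field K] [LinearOrder K] [IsStrictOrderedRing K] [Algebra S K]
  [Field M] [LinearOrder M] [Algebra S M]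

open Polynomial (derivative)

theorem RootClosedBelow.sign_aeval_eq [HasPolynomialIVP_s3 K] (hSK : StrictMono (algebraMap S K))
    {n : ℕ} (h : RootClosedBelow S K n) {r : S[X]} (hr : r ≠ 0) (hdeg : r.natDegree < n) {u v : S}
    (hr0 : ∀ s ∈ Set.Ioo u v, r.eval s ≠ 0) {x : K}
    (hx : x ∈ Set.Ioo (algebraMap S K u) (algebraMap S K v)) {s : S} (hs : s ∈ Set.Ioo u v) :
    SignType.sign (Polynomial.aeval x r) = SignType.sign (r.eval s) := by
  have hs' : algebraMap S K s ∈ Set.Ioo (algebraMap S K u) (algebraMap S K v) :=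
    ⟨hSK hs.1, hSK hs.2⟩
  rw [← hSK.sign_comp, ← Polynomial.eval_map_algebraMap, ← Polynomial.eval_map_apply]
  refine HasPolynomialIVP_s3.sign_eval_eq fun c hc => ?_
  rw [Polynomial.eval_map_algebraMap]
  exact h.aeval_ne_zero hSK hr hdeg hr0 (Set.ordConnected_Ioo.uIcc_subset hx hs' hc)

theorem RootClosedBelow.eval_mul_eval_neg [HasPolynomialIVP_s3 K] (hSK : StrictMono (algebraMap S K))
    {f : S[X]} (h : RootClosedBelow S K f.natDegree) {u v : S} (hf : derivative f ≠ 0)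
    (hf0 : ∀ s ∈ Set.Ioo u v, (derivative f).eval s ≠ 0) {α : K} (hα : Polynomial.aeval α f = 0)
    (hαuv : α ∈ Set.Ioo (algebraMap S K u) (algebraMap S K v)) : f.eval u * f.eval v < 0 := by
  have hdeg : (derivative f).natDegree < f.natDegree :=
    Polynomial.natDegree_derivative_lt fun h0 => hf (Polynomial.derivative_of_natDegree_zero h0)
  have hneg := HasPolynomialIVP_s3.eval_mul_eval_neg_of_root (f := f.map (algebraMap S K))
    (fun c hc => by
      rw [Polynomial.derivative_map, Polynomial.eval_map_algebraMap]
      exact h.aeval_ne_zero hSK hf hdeg hf0 hc) hαuv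
    (by rwa [Polynomial.eval_map_algebraMap])
  rw [Polynomial.eval_map_apply, Polynomial.eval_map_apply, ← map_mul] at hneg
  exact hSK.lt_iff_lt.1 (by rwa [map_zero])

theorem RootClosedBelow.eq_of_aeval_eq_zero [HasPolynomialIVP_s3 K]
    (hSK : StrictMono (algebraMap S K)) {f : S[X]} (h : RootClosedBelow S K f.natDegree) {u v : S}
    (hf : derivative f ≠ 0) (hf0 : ∀ s ∈ Set.Ioo u v, (derivative f).eval s ≠ 0) {x y : K}
    (hx : x ∈ Set.Ioo (algebraMap S K u) (algebraMap S K v)) (hx0 : Polynomial.aeval x f = 0)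
    (hy : y ∈ Set.Ioo (algebraMap S K u) (algebraMap S K v)) (hy0 : Polynomial.aeval y f = 0) :
    x = y := by
  have hdeg : (derivative f).natDegree < f.natDegree :=
    Polynomial.natDegree_derivative_lt fun h0 => hf (Polynomial.derivative_of_natDegree_zero h0)
  rw [← Polynomial.eval_map_algebraMap] at hx0 hy0
  refine HasPolynomialIVP_s3.eq_of_root_of_derivative_ne_zero (fun c hc => ?_)
    (Set.Ioo_subset_Icc_self hx) (Set.Ioo_subset_Icc_self hy) hx0 hy0
  rw [Polynomial.derivative_map, Polynomial.eval_map_algebraMap]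
  exact h.aeval_ne_zero hSK hf hdeg hf0 hc

theorem exists_aeval_eq_zero_mem_Ioo [HasPolynomialIVP_s3 K] [HasPolynomialIVP_s3 M]
    (hSK : StrictMono (algebraMap S K)) (hSM : StrictMono (algebraMap S M)) {f : S[X]}
    (h : RootClosedBelow S K f.natDegree) {u v : S} (hf : derivative f ≠ 0)
    (hf0 : ∀ s ∈ Set.Ioo u v, (derivative f).eval s ≠ 0) {α : K} (hα : Polynomial.aeval α f = 0)
    (hαuv : α ∈ Set.Ioo (algebraMap S K u) (algebraMap S K v)) :
    ∃ β ∈ Set.Ioo (algebraMap S M u) (algebraMap S M v), Polynomial.aeval β f = 0 := by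
  have hneg := hSM (h.eval_mul_eval_neg hSK hf hf0 hα hαuv)
  rw [map_mul, map_zero, ← Polynomial.eval_map_apply, ← Polynomial.eval_map_apply] at hneg
  have huv : u < v := hSK.lt_iff_lt.1 (hαuv.1.trans hαuv.2)
  simpa only [Polynomial.eval_map_algebraMap] using
    HasPolynomialIVP_s3.exists_root_of_eval_mul_neg (hSM huv) hneg

variable [IsStrictOrderedRing S]

theorem abs_algebraMap_eq (hSK : StrictMono (algebraMap S K)) (s : S) :
    |algebraMap S K s| = algebraMap S K |s| := by
  rw [abs, abs, hSK.monotone.map_sup, map_neg]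

theorem exists_algebraMap_le_abs_aeval (hSK : StrictMono (algebraMap S K)) {α : K}
    (hα : ∀ s, algebraMap S K s < |α|) (f : S[X]) (hf : f ≠ 0) :
    ∃ s > 0, algebraMap S K s ≤ |Polynomial.aeval α f| := by
  induction hn : f.natDegree using Nat.strong_induction_on generalizing f with
  | _ n ih =>
    have hdiv := congrArg (Polynomial.aeval α) f.divX_mul_X_add
    simp only [map_add, map_mul, Polynomial.aeval_X, Polynomial.aeval_C] at hdiv
    set c := f.coeff 0
    by_cases hq : f.divX = 0
    · have hc : c ≠ 0 := by
        rintro hc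
        exact hf (by rw [Polynomial.divX_eq_zero_iff.1 hq, show f.coeff 0 = 0 from hc, map_zero])
      refine ⟨|c|, abs_pos.2 hc, ?_⟩
      rw [← hdiv, hq, map_zero, zero_mul, zero_add, abs_algebraMap_eq hSK]
    have hdeg : f.divX.natDegree < n := by
      rw [Polynomial.natDegree_divX_eq_natDegree_tsub_one, ← hn]
      refine Nat.sub_one_lt fun h0 => hq ?_
      rw [Polynomial.divX_eq_zero_iff, ← Polynomial.eq_C_of_natDegree_eq_zero h0]
    obtain ⟨s, hs, hle⟩ := ih _ hdeg _ hq rfl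
    refine ⟨s, hs, ?_⟩
    have hmul : algebraMap S K (s + |c|) ≤ |Polynomial.aeval α f.divX * α| := by
      calc algebraMap S K (s + |c|) = algebraMap S K s * algebraMap S K ((s + |c|) / s) := by
            rw [← map_mul, mul_div_cancel₀ _ hs.ne']
        _ ≤ |Polynomial.aeval α f.divX| * |α| := mul_le_mul hle (hα _).le
            (by simpa using hSK.monotone (show 0 ≤ (s + |c|) / s by positivity)) (abs_nonneg _)
        _ = |Polynomial.aeval α f.divX * α| := (abs_mul _ _).symm
    have htri := abs_sub_abs_le_abs_sub (Polynomial.aeval α f.divX * α) (-algebraMap S K c)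
    rw [sub_neg_eq_add, hdiv, abs_neg, abs_algebraMap_eq hSK] at htri
    rw [map_add] at hmul
    linarith

theorem exists_abs_lt_algebraMap (hSK : StrictMono (algebraMap S K)) {α : K}
    (hα : IsAlgebraic S α) : ∃ s, |α| < algebraMap S K s := by
  obtain ⟨f, hf, hroot⟩ := hα
  by_contra! hbound
  obtain ⟨s, hs, hle⟩ := exists_algebraMap_le_abs_aeval hSK
    (fun s => (hSK (lt_add_one s)).trans_le (hbound _)) f hf
  rw [hroot, abs_zero, ← map_zero (algebraMap S K)] at hle
  exact (hSK hs).not_ge hle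

theorem exists_Ioo_forall_eval_ne_zero (hSK : StrictMono (algebraMap S K)) {α : K}
    (hα : IsAlgebraic S α) (hαS : α ∉ Set.range (algebraMap S K)) {g : S[X]} (hg : g ≠ 0) :
    ∃ u v : S, α ∈ Set.Ioo (algebraMap S K u) (algebraMap S K v) ∧
      ∀ s ∈ Set.Ioo u v, g.eval s ≠ 0 := by
  classical
  obtain ⟨b, hb⟩ := exists_abs_lt_algebraMap hSK hα
  rw [abs_lt] at hb
  let lower := insert (-b) (g.roots.toFinset.filter (algebraMap S K · < α))
  let upper := insert b (g.roots.toFinset.filter (α < algebraMap S K ·))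
  have hlower : lower.Nonempty := Finset.insert_nonempty _ _
  have hupper : upper.Nonempty := Finset.insert_nonempty _ _
  have hlt : ∀ s ∈ lower, algebraMap S K s < α := by simp [lower, hb.1]
  have hgt : ∀ s ∈ upper, α < algebraMap S K s := by simp [upper, hb.2]
  refine ⟨lower.max' hlower, upper.min' hupper,
    ⟨hlt _ (lower.max'_mem hlower), hgt _ (upper.min'_mem hupper)⟩, fun s hs h0 => ?_⟩
  rcases lt_or_gt_of_ne fun h => hαS ⟨s, h⟩ with h | h
  · exact (lower.le_max' s (by simp [lower, hg, h0, h])).not_gt hs.1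
  · exact (upper.min'_le s (by simp [upper, hg, h0, h])).not_gt hs.2

variable [IsStrictOrderedRing M]

theorem exists_sameOrderType_of_rootClosedBelow [HasPolynomialIVP_s3 K] [HasPolynomialIVP_s3 M]
    (hSK : StrictMono (algebraMap S K)) (hSM : StrictMono (algebraMap S M)) {α : K}
    (hα : IsIntegral S α) (hαS : α ∉ Set.range (algebraMap S K))
    (hK : RootClosedBelow S K (minpoly S α).natDegree)
    (hM : RootClosedBelow S M (minpoly S α).natDegree) : ∃ β : M, SameOrderType S α β := by
  set f := minpoly S α
  have hαf : Polynomial.aeval α f = 0 := minpoly.aeval S α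
  have hf' : derivative f ≠ 0 := by
    rw [Ne, Polynomial.derivative_eq_zero]
    exact (minpoly.natDegree_pos hα).ne'
  obtain ⟨u, v, hαuv, hf0⟩ := exists_Ioo_forall_eval_ne_zero hSK hα.isAlgebraic hαS hf'
  obtain ⟨β, hβuv, hβf⟩ := exists_aeval_eq_zero_mem_Ioo (M := M) hSK hSM hK hf' hf0 hαf hαuv
  refine ⟨β, fun p => ?_⟩
  rw [← Polynomial.aeval_modByMonic_eq_self_of_root hαf,
    ← Polynomial.aeval_modByMonic_eq_self_of_root hβf]
  have hrdeg : (p %ₘ f).natDegree < f.natDegree :=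
    Polynomial.natDegree_modByMonic_lt p (minpoly.monic hα) (minpoly.ne_one S α)
  generalize p %ₘ f = r at hrdeg
  rcases eq_or_ne r 0 with rfl | hr
  · simp
  obtain ⟨u', v', hαuv', hr0⟩ := exists_Ioo_forall_eval_ne_zero hSK hα.isAlgebraic hαS hr
  have hαI : α ∈ Set.Ioo (algebraMap S K (u ⊔ u')) (algebraMap S K (v ⊓ v')) := by
    rw [hSK.monotone.map_sup, hSK.monotone.map_inf]
    exact ⟨max_lt hαuv.1 hαuv'.1, lt_min hαuv.2 hαuv'.2⟩
  have hsub : Set.Ioo (u ⊔ u') (v ⊓ v') ⊆ Set.Ioo u v :=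
    Set.Ioo_subset_Ioo le_sup_left inf_le_left
  have hsub' : Set.Ioo (u ⊔ u') (v ⊓ v') ⊆ Set.Ioo u' v' :=
    Set.Ioo_subset_Ioo le_sup_right inf_le_right
  obtain ⟨β', hβ'I, hβ'f⟩ := exists_aeval_eq_zero_mem_Ioo (M := M) hSK hSM hK hf'
    (fun s hs => hf0 s (hsub hs)) hαf hαI
  obtain rfl : β' = β := hM.eq_of_aeval_eq_zero hSM hf' hf0
    (Set.Ioo_subset_Ioo (hSM.monotone le_sup_left) (hSM.monotone inf_le_left) hβ'I) hβ'f hβuv hβf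
  obtain ⟨s, hs⟩ := exists_between (hSK.lt_iff_lt.1 (hαI.1.trans hαI.2))
  have hrI := fun s hs => hr0 s (hsub' hs)
  rw [hK.sign_aeval_eq hSK hr hrdeg hrI hαI hs, hM.sign_aeval_eq hSM hr hrdeg hrI hβ'I hs]

theorem rootClosedBelow_of_forall_sameOrderType [HasPolynomialIVP_s3 K] [HasPolynomialIVP_s3 M]
    (hSK : StrictMono (algebraMap S K)) (hSM : StrictMono (algebraMap S M))
    (hmax : ∀ (α : K) (β : M), SameOrderType S α β → α ∈ Set.range (algebraMap S K)) (n : ℕ) :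
    RootClosedBelow S K n ∧ RootClosedBelow S M n := by
  induction n with
  | zero =>
    exact ⟨fun _ _ h => absurd h (Nat.not_lt_zero _), fun _ _ h => absurd h (Nat.not_lt_zero _)⟩
  | succ n ih =>
    constructor <;> intro x hx hdeg <;> by_contra hxS
    · have hle := Nat.lt_succ_iff.1 hdeg
      obtain ⟨β, hβ⟩ := exists_sameOrderType_of_rootClosedBelow hSK hSM hx hxS
        (ih.1.mono hle) (ih.2.mono hle)
      exact hxS (hmax x β hβ)
    · have hle := Nat.lt_succ_iff.1 hdeg
      obtain ⟨α, hα⟩ := exists_sameOrderType_of_rootClosedBelow hSM hSK hx hxS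
        (ih.2.mono hle) (ih.1.mono hle)
      exact hxS (hα.mem_range_iff.2 (hmax α x hα.symm))

theorem isIntegrallyClosedIn_of_forall_sameOrderType [HasPolynomialIVP_s3 K] [HasPolynomialIVP_s3 M]
    (hSK : StrictMono (algebraMap S K)) (hSM : StrictMono (algebraMap S M))
    (hmax : ∀ (α : K) (β : M), SameOrderType S α β → α ∈ Set.range (algebraMap S K)) :
    IsIntegrallyClosedIn S K :=
  isIntegrallyClosedIn_iff.2 ⟨hSK.injective, fun {x} hx =>
    (rootClosedBelow_of_forall_sameOrderType hSK hSM hmax _).1 x hx (Nat.lt_succ_self _)⟩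

end OrderType

section OrderLift

open IntermediateField
open scoped IntermediateField.algebraAdjoinAdjoin

theorem SameOrderType.exists_algHom_adjoin {S K M : Type*} [Field S] [Field K] [LinearOrder K]
    [IsStrictOrderedRing K] [Algebra S K] [Field M] [LinearOrder M] [IsStrictOrderedRing M]
    [Algebra S M] {α : K} {β : M} (h : SameOrderType S α β) :
    ∃ ψ : S⟮α⟯ →ₐ[S] M, ∀ x, SignType.sign (ψ x) = SignType.sign (x : K) := by
  let π : S[X] →ₐ[S] Algebra.adjoin S {α} :=
    Polynomial.aeval ⟨α, Algebra.self_mem_adjoin_singleton S α⟩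
  have hπ : ∀ p, (π p : K) = Polynomial.aeval α p := fun p =>
    (Polynomial.aeval_algHom_apply (Algebra.adjoin S {α}).val _ p).symm
  have hπ_surj : Function.Surjective π := by
    rintro ⟨x, hx⟩
    rw [Algebra.adjoin_singleton_eq_range_aeval] at hx
    obtain ⟨p, rfl⟩ := hx
    exact ⟨p, Subtype.ext (hπ p)⟩
  let φ : Algebra.adjoin S {α} →ₐ[S] M := AlgHom.liftOfSurjective π hπ_surj (Polynomial.aeval β)
    fun p hp => h.aeval_eq_zero_iff.1 (by rw [← hπ]; exact congrArg Subtype.val hp)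
  have hφ : ∀ x, SignType.sign (φ x) = SignType.sign (x : K) := fun x => by
    obtain ⟨p, rfl⟩ := hπ_surj x
    rw [show φ (π p) = Polynomial.aeval β p from AlgHom.liftOfSurjective_apply .., ← h p, hπ]
  have hφ_inj : Function.Injective φ := (injective_iff_map_eq_zero φ).2 fun x hx => by
    rw [← sign_eq_zero_iff, hφ, sign_eq_zero_iff] at hx
    exact Subtype.ext hx
  refine ⟨IsFractionRing.liftAlgHom hφ_inj, fun x => ?_⟩
  obtain ⟨a, b, -, rfl⟩ := IsFractionRing.div_surjective (Algebra.adjoin S {α}) x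
  rw [map_div₀, IsFractionRing.liftAlgHom_apply, IsFractionRing.liftAlgHom_apply,
    IsFractionRing.lift_algebraMap, IsFractionRing.lift_algebraMap]
  change signHom (φ a / φ b) = signHom ((a : K) / (b : K))
  rw [map_div₀, map_div₀]
  exact congrArg₂ _ (hφ a) (hφ b)

variable {F K M : Type*} [Field F] [Field K] [LinearOrder K] [Algebra F K]
  [Field M] [LinearOrder M] [Algebra F M]

/-- The partial embedding `L` of `K` into `M` is order preserving (stated through signs, which is
how it is inherited from `SameOrderType`). -/
def IsOrderLift (L : Lifts F K M) : Prop :=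
  ∀ x : L.carrier, SignType.sign (L.emb x) = SignType.sign (x : K)

theorem IsOrderLift.exists_maximal_le {L₀ : Lifts F K M} (h₀ : IsOrderLift L₀) :
    ∃ L, L₀ ≤ L ∧ Maximal IsOrderLift L := by
  refine zorn_le_nonempty₀ {L : Lifts F K M | IsOrderLift L} (fun c hc hch L hL => ?_) L₀ h₀
  refine ⟨Lifts.union c hch, fun x => ?_, fun L' hL' => Lifts.le_union c hch hL'⟩
  have : Nonempty c := ⟨⟨L, hL⟩⟩
  have hdir : Directed (· ≤ ·) fun i : c => i.1.carrier :=
    hch.directedOn.directed_val.mono_comp _ fun _ _ h => h.1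
  have hx := (Lifts.carrier_union c hch).le x.2
  rw [← SetLike.mem_coe, coe_iSup_of_directed hdir, Set.mem_iUnion] at hx
  obtain ⟨i, hi⟩ := hx
  obtain ⟨hle, hemb⟩ := Lifts.le_union c hch i.2
  exact (congrArg SignType.sign (hemb ⟨x, hi⟩)).trans (hc i.2 ⟨x, hi⟩)

variable [IsStrictOrderedRing K] [IsStrictOrderedRing M]

theorem IsOrderLift.strictMono {L : Lifts F K M} (hL : IsOrderLift L) : StrictMono L.emb := by
  intro x y hxy
  have h := (hL (y - x)).trans (sign_pos (sub_pos.2 hxy))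
  rw [sign_eq_one_iff, map_sub] at h
  exact sub_pos.1 h

theorem exists_le_isOrderLift (L : Lifts F K M) [Algebra L.carrier M]
    (hL : ∀ x, algebraMap L.carrier M x = L.emb x) {α : K} {β : M}
    (h : SameOrderType L.carrier α β) :
    ∃ L' : Lifts F K M, L ≤ L' ∧ IsOrderLift L' ∧ α ∈ L'.carrier := by
  obtain ⟨ψ, hψ⟩ := h.exists_algHom_adjoin
  refine ⟨⟨L.carrier⟮α⟯.restrictScalars F, { (ψ : L.carrier⟮α⟯ →+* M) with commutes' := ?_ }⟩,
    ⟨fun x hx => L.carrier⟮α⟯.algebraMap_mem ⟨x, hx⟩, fun x => ?_⟩, hψ,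
    mem_adjoin_simple_self L.carrier α⟩
  · intro s
    exact (ψ.commutes (algebraMap F L.carrier s)).trans ((hL _).trans (L.emb.commutes s))
  · exact (ψ.commutes x).trans (hL x)

theorem isIntegrallyClosedIn_of_maximal_isOrderLift [HasPolynomialIVP_s3 K] [HasPolynomialIVP_s3 M]
    {L : Lifts F K M} (hL : Maximal IsOrderLift L) : IsIntegrallyClosedIn L.carrier K := by
  let _ : Algebra L.carrier M := (L.emb : L.carrier →+* M).toAlgebra
  refine isIntegrallyClosedIn_of_forall_sameOrderType (fun _ _ h => h) hL.prop.strictMono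
    fun α β h => ?_
  obtain ⟨L', hle, hL', hα⟩ := exists_le_isOrderLift L (fun _ => rfl) h
  exact ⟨⟨α, (hL.le_of_ge hL' hle).1 hα⟩, rfl⟩

theorem SameOrderType.exists_isIntegrallyClosedIn_algHom [HasPolynomialIVP_s3 K] [HasPolynomialIVP_s3 M]
    {t : K} {τ : M} (h : SameOrderType F t τ) :
    ∃ L : IntermediateField F K, t ∈ L ∧ IsIntegrallyClosedIn L K ∧ Nonempty (L →ₐ[F] M) := by
  obtain ⟨ψ, hψ⟩ := h.exists_algHom_adjoin
  obtain ⟨L, hle, hL⟩ := IsOrderLift.exists_maximal_le (L₀ := ⟨F⟮t⟯, ψ⟩) hψ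
  exact ⟨L.carrier, hle.1 (mem_adjoin_simple_self F t),
    isIntegrallyClosedIn_of_maximal_isOrderLift hL, ⟨L.emb⟩⟩

end OrderLift

section Ultrapower

variable {ι k R : Type*}

/-- Germs of functions into a `k`-algebra, with `k` embedded as constant functions. -/
noncomputable instance germAlgebra [CommSemiring k] [Semiring R] [Algebra k R] (l : Filter ι) :
    Algebra k (l.Germ R) where
  algebraMap := (Filter.Germ.coeRingHom l).comp (algebraMap k (ι → R))
  commutes' c x := x.inductionOn fun f => congrArg _ (Algebra.commutes c f)
  smul_def' c x := x.inductionOn fun f => congrArg _ (Algebra.smul_def c f)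

/-- The quotient map from families to germs as a homomorphism of algebras. -/
def germMkAlgHom (k : Type*) [CommSemiring k] [Semiring R] [Algebra k R] (l : Filter ι) :
    (ι → R) →ₐ[k] l.Germ R :=
  { Filter.Germ.coeRingHom l with commutes' := fun _ => rfl }

theorem germMkAlgHom_surjective [CommSemiring k] [Semiring R] [Algebra k R] (l : Filter ι) :
    Function.Surjective (germMkAlgHom k l : (ι → R) →ₐ[k] l.Germ R) :=
  fun x => x.inductionOn fun f => ⟨f, rfl⟩

instance germ_hasPolynomialIVP [Field R] [LinearOrder R] [HasPolynomialIVP_s3 R] (U : Ultrafilter ι) :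
    HasPolynomialIVP_s3 ((U : Filter ι).Germ R) where
  exists_root_of_eval_mul_neg {f a b} hab hneg := by
    obtain ⟨F, rfl⟩ := Polynomial.map_surjective (Filter.Germ.coeRingHom (U : Filter ι))
      (germMkAlgHom_surjective (k := R) _) f
    induction a using Filter.Germ.inductionOn with | _ a
    induction b using Filter.Germ.inductionOn with | _ b
    have heval (c : ι → R) : (F.map (Filter.Germ.coeRingHom (U : Filter ι))).eval
        (c : (U : Filter ι).Germ R) = (F.eval c : ι → R) :=
      Polynomial.eval_map_apply (Filter.Germ.coeRingHom (U : Filter ι)) c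
    have hcoord (c : ι → R) (x : ι) :
        F.eval c x = (F.map (Pi.evalRingHom (fun _ => R) x)).eval (c x) :=
      (Polynomial.eval_map_apply (Pi.evalRingHom (fun _ => R) x) c).symm
    rw [heval, heval] at hneg
    have hroot : ∀ᶠ x in (U : Filter ι), ∃ c ∈ Set.Ioo (a x) (b x),
        (F.map (Pi.evalRingHom (fun _ => R) x)).eval c = 0 := by
      filter_upwards [Filter.Germ.coe_lt.1 hab, Filter.Germ.coe_lt.1 hneg] with x hx hx'
      refine HasPolynomialIVP_s3.exists_root_of_eval_mul_neg hx ?_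
      rwa [← hcoord, ← hcoord]
    obtain ⟨c, hc⟩ := hroot.choice
    refine ⟨c, ⟨Filter.Germ.coe_lt.2 (hc.mono fun x hx => hx.1.1),
      Filter.Germ.coe_lt.2 (hc.mono fun x hx => hx.1.2)⟩, ?_⟩
    rw [heval]
    exact Filter.Germ.coe_eq.2 (hc.mono fun x hx => (hcoord c x).trans hx.2)

/-- The polynomial system `g = 0`, `h ≠ 0` over `k` has a solution in the `k`-algebra `A`. -/
def HasSolution {κ : Type*} [CommSemiring k] (g : κ → MvPolynomial ι k) (h : MvPolynomial ι k)
    (A : Type*) [CommSemiring A] [Algebra k A] : Prop :=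
  ∃ z : ι → A, (∀ i, MvPolynomial.aeval z (g i) = 0) ∧ MvPolynomial.aeval z h ≠ 0

theorem HasSolution.map {κ A B : Type*} [CommSemiring k] [CommSemiring A] [Algebra k A]
    [CommSemiring B] [Algebra k B] {g : κ → MvPolynomial ι k} {h : MvPolynomial ι k}
    (hA : HasSolution g h A) {φ : A →ₐ[k] B} (hφ : Function.Injective φ) : HasSolution g h B := by
  obtain ⟨z, hg, hh⟩ := hA
  refine ⟨fun i => φ (z i), fun i => ?_, ?_⟩
  · rw [← comp_aeval_apply, hg, map_zero]
  · rwa [← comp_aeval_apply, map_ne_zero_iff φ hφ]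

theorem HasSolution.of_germ {κ X : Type*} [Finite κ] [CommSemiring k] [CommSemiring R] [Algebra k R]
    {g : κ → MvPolynomial ι k} {h : MvPolynomial ι k} {U : Ultrafilter X}
    (hU : HasSolution g h ((U : Filter X).Germ R)) : HasSolution g h R := by
  obtain ⟨z, hg, hh⟩ := hU
  choose y hy using fun i => germMkAlgHom_surjective (k := k) (U : Filter X) (z i)
  obtain rfl : (fun i => germMkAlgHom k (U : Filter X) (y i)) = z := funext hy
  have hcoord (p : MvPolynomial ι k) (x : X) :
      MvPolynomial.aeval y p x = MvPolynomial.aeval (fun i => y i x) p :=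
    comp_aeval_apply y (Pi.evalAlgHom k (fun _ => R) x) p
  have hg' : ∀ᶠ x in (U : Filter X), ∀ i, MvPolynomial.aeval (fun j => y j x) (g i) = 0 := by
    refine Filter.eventually_all.2 fun i => ?_
    have hi := hg i
    rw [← comp_aeval_apply] at hi
    exact (Filter.Germ.coe_eq.1 hi).mono fun x hx => (hcoord _ x).symm.trans hx
  have hh' : ∃ᶠ x in (U : Filter X), MvPolynomial.aeval (fun j => y j x) h ≠ 0 := by
    refine fun h0 => hh ?_
    rw [← comp_aeval_apply]
    exact Filter.Germ.coe_eq.2 (h0.mono fun x hx => (hcoord h x).trans (not_not.1 hx))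
  obtain ⟨x, hhx, hgx⟩ := (hh'.and_eventually hg').exists
  exact ⟨fun i => y i x, hgx, hhx⟩

end Ultrapower

section OrderTypeUltrafilter

theorem mem_range_algebraMap_of_aeval_eq_zero {R K : Type*} [Field R] [Field K]
    [Algebra R K] [IsIntegrallyClosedIn R K] {p : R[X]} (hp : p ≠ 0) {x : K}
    (hx : Polynomial.aeval x p = 0) : x ∈ Set.range (algebraMap R K) :=
  IsIntegrallyClosedIn.algebraMap_eq_of_integral (isAlgebraic_iff_isIntegral.1 ⟨p, hp, hx⟩)

variable {R K : Type*} [Field R] [LinearOrder R] [Field K] [LinearOrder K]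
  [Algebra R K] [IsIntegrallyClosedIn R K] [HasPolynomialIVP_s3 K]

theorem HasPolynomialIVP_s3.of_isIntegrallyClosedIn (hRK : StrictMono (algebraMap R K)) :
    HasPolynomialIVP_s3 R where
  exists_root_of_eval_mul_neg {f a b} hab hneg := by
    have hneg' := hRK hneg
    rw [map_mul, map_zero, ← Polynomial.eval_map_apply, ← Polynomial.eval_map_apply] at hneg'
    obtain ⟨c, hc, hroot⟩ := exists_root_of_eval_mul_neg (hRK hab) hneg'
    have hf : f ≠ 0 := by
      rintro rfl
      simp at hneg
    rw [Polynomial.eval_map_algebraMap] at hroot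
    obtain ⟨c, rfl⟩ := mem_range_algebraMap_of_aeval_eq_zero hf hroot
    rw [Polynomial.aeval_algebraMap_apply, Polynomial.coe_aeval_eq_eval, map_eq_zero] at hroot
    exact ⟨c, ⟨hRK.lt_iff_lt.1 hc.1, hRK.lt_iff_lt.1 hc.2⟩, hroot⟩

variable [IsStrictOrderedRing R] [IsStrictOrderedRing K]

theorem exists_forall_sign_eval_eq (hRK : StrictMono (algebraMap R K)) {t : K}
    (ht : t ∉ Set.range (algebraMap R K)) (T : Finset R[X]) :
    ∃ c, ∀ p ∈ T, SignType.sign (p.eval c) = SignType.sign (Polynomial.aeval t p) := by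
  classical
  let roots := T.biUnion fun p => p.roots.toFinset
  obtain ⟨c, hlower, hupper⟩ := Order.exists_between_finsets
    (roots.filter (algebraMap R K · < t)) (roots.filter (t < algebraMap R K ·)) fun x hx y hy =>
      hRK.lt_iff_lt.1 ((Finset.mem_filter.1 hx).2.trans (Finset.mem_filter.1 hy).2)
  refine ⟨c, fun p hp => ?_⟩
  rcases eq_or_ne p 0 with rfl | hp0
  · simp
  rw [← hRK.sign_comp, ← Polynomial.eval_map_apply, ← Polynomial.eval_map_algebraMap]
  refine HasPolynomialIVP_s3.sign_eval_eq fun x hx hroot => ?_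
  rw [Polynomial.eval_map_algebraMap] at hroot
  obtain ⟨s, rfl⟩ := mem_range_algebraMap_of_aeval_eq_zero hp0 hroot
  rw [Polynomial.aeval_algebraMap_apply, Polynomial.coe_aeval_eq_eval, map_eq_zero] at hroot
  have hs : s ∈ roots := Finset.mem_biUnion.2 ⟨p, hp, by simpa [hp0] using hroot⟩
  rcases lt_or_gt_of_ne fun h => ht ⟨s, h⟩ with hst | hst
  · have hsc := hRK (hlower s (Finset.mem_filter.2 ⟨hs, hst⟩))
    exact (lt_min hsc hst).not_ge hx.1
  · have hcs := hRK (hupper s (Finset.mem_filter.2 ⟨hs, hst⟩))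
    exact (max_lt hcs hst).not_ge hx.2

theorem exists_ultrafilter_sameOrderType (hRK : StrictMono (algebraMap R K)) {t : K}
    (ht : t ∉ Set.range (algebraMap R K)) :
    ∃ U : Ultrafilter R, SameOrderType R t ((id : R → R) : (U : Filter R).Germ R) := by
  classical
  obtain ⟨U, hU⟩ := Ultrafilter.exists_ultrafilter_of_finite_inter_nonempty
    (Set.range fun p : R[X] =>
      {c | SignType.sign (p.eval c) = SignType.sign (Polynomial.aeval t p)}) fun T hT => by
    rw [← Set.image_univ, Finset.subset_set_image_iff] at hT
    obtain ⟨T, -, rfl⟩ := hT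
    obtain ⟨c, hc⟩ := exists_forall_sign_eval_eq hRK ht T
    exact ⟨c, by simpa using hc⟩
  refine ⟨U, fun p => ?_⟩
  have hp : ∀ᶠ c in (U : Filter R),
    SignType.sign (p.eval c) = SignType.sign (Polynomial.aeval t p) := hU ⟨p, rfl⟩
  have heval : Polynomial.aeval ((id : R → R) : (U : Filter R).Germ R) p =
      ((fun c => p.eval c : R → R) : (U : Filter R).Germ R) := by
    refine (Polynomial.aeval_algHom_apply (germMkAlgHom R (U : Filter R)) id p).trans
      (congrArg _ (funext fun c => ?_))
    exact (Polynomial.aeval_algHom_apply (Pi.evalAlgHom R (fun _ => R) c) id p).symm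
  rw [heval]
  rcases lt_trichotomy (Polynomial.aeval t p) 0 with h | h | h
  · rw [sign_neg h] at hp ⊢
    exact (sign_neg (Filter.Germ.coe_lt.2 (hp.mono fun c => sign_eq_neg_one_iff.1))).symm
  · rw [h, sign_zero] at hp ⊢
    exact (sign_eq_zero_iff.2 (Filter.Germ.coe_eq.2 (hp.mono fun c => sign_eq_zero_iff.1))).symm
  · rw [sign_pos h] at hp ⊢
    exact (sign_pos (Filter.Germ.coe_lt.2 (hp.mono fun c => sign_eq_one_iff.1))).symm

end OrderTypeUltrafilter

section ArtinLang

variable {k K ι κ : Type*} [Field k] [Field K] [LinearOrder K] [IsStrictOrderedRing K]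
  [HasPolynomialIVP_s3 K] [Algebra k K] [Finite κ]

theorem exists_intermediateField_forall_hasSolution (R : IntermediateField k K)
    [IsIntegrallyClosedIn R K] (t : K) :
    ∃ S : IntermediateField k K, R ≤ S ∧ t ∈ S ∧ IsIntegrallyClosedIn S K ∧
      ∀ (g : κ → MvPolynomial ι k) (h : MvPolynomial ι k),
        HasSolution g h S → HasSolution g h R := by
  have hRK : StrictMono (algebraMap R K) := fun _ _ h => h
  by_cases ht : t ∈ Set.range (algebraMap R K)
  · obtain ⟨t, rfl⟩ := ht
    exact ⟨R, le_rfl, t.2, inferInstance, fun _ _ h => h⟩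
  have : HasPolynomialIVP_s3 R := .of_isIntegrallyClosedIn hRK
  obtain ⟨U, hU⟩ := exists_ultrafilter_sameOrderType hRK ht
  obtain ⟨L, htL, hL, ⟨φ⟩⟩ := hU.exists_isIntegrallyClosedIn_algHom
  have : IsScalarTower k R ((U : Filter R).Germ R) := .of_algebraMap_eq fun _ => rfl
  refine ⟨L.restrictScalars k, fun x hx => L.algebraMap_mem ⟨x, hx⟩, htL, hL, fun g h hS => ?_⟩
  have hφ : Function.Injective (φ.restrictScalars k) := φ.injective
  exact (hS.map (A := L.restrictScalars k) hφ).of_germ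

theorem HasSolution.of_isIntegrallyClosedIn_intermediateField [Finite ι]
    {g : κ → MvPolynomial ι k} {h : MvPolynomial ι k} (hK : HasSolution g h K)
    (R : IntermediateField k K) [IsIntegrallyClosedIn R K] : HasSolution g h R := by
  obtain ⟨z, hg, hh⟩ := hK
  have := Fintype.ofFinite ι
  suffices ∀ (T : Finset ι) (R : IntermediateField k K), IsIntegrallyClosedIn R K →
      (∀ i ∉ T, z i ∈ R) → HasSolution g h R from this Finset.univ R inferInstance (by simp)
  classical
  intro T
  induction T using Finset.induction_on with
  | empty =>
    intro R _ hz
    have hval (p : MvPolynomial ι k) :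
        (MvPolynomial.aeval (fun i => (⟨z i, hz i (by simp)⟩ : R)) p : K) =
          MvPolynomial.aeval z p := comp_aeval_apply _ R.val p
    refine ⟨fun i => ⟨z i, hz i (by simp)⟩, fun i => Subtype.ext ((hval _).trans (hg i)), ?_⟩
    exact fun h0 => hh ((hval h).symm.trans (congrArg Subtype.val h0))
  | insert i T hi ih =>
    intro R _ hz
    obtain ⟨S, hRS, hiS, hS, hdescend⟩ :=
      exists_intermediateField_forall_hasSolution (ι := ι) (κ := κ) R (z i)
    refine hdescend g h (ih S hS fun j hj => ?_)
    rcases eq_or_ne j i with rfl | hji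
    · exact hiS
    · exact hRS (hz j (by simp [hji, hj]))

theorem HasSolution.of_isIntegrallyClosedIn [Finite ι] [IsIntegrallyClosedIn k K]
    {g : κ → MvPolynomial ι k} {h : MvPolynomial ι k} (hK : HasSolution g h K) :
    HasSolution g h k := by
  have hbot : IsIntegrallyClosedIn (⊥ : IntermediateField k K) K := by
    refine isIntegrallyClosedIn_iff.2 ⟨Subtype.val_injective, fun {x} hx => ?_⟩
    obtain ⟨y, rfl⟩ := IsIntegrallyClosedIn.algebraMap_eq_of_integral (R := k)
      (isIntegral_trans x hx)
    exact ⟨algebraMap k _ y, rfl⟩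
  exact (hK.of_isIntegrallyClosedIn_intermediateField ⊥).map
    (φ := (IntermediateField.botEquiv k K : _ →ₐ[k] k)) (IntermediateField.botEquiv k K).injective

end ArtinLang

section SumsOfSquares

variable {F A B : Type*} [NonUnitalNonAssocSemiring A] [NonUnitalNonAssocSemiring B] [FunLike F A B]
  [NonUnitalRingHomClass F A B]

theorem isSumSq_map_s3 (f : F) {a : A} (ha : IsSumSq a) : IsSumSq (f a) := by
  induction ha with
  | zero => exact map_zero f ▸ IsSumSq.zero
  | sq_add x _ ih => exact map_add f _ _ ▸ map_mul f x x ▸ ih.sq_add (f x)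

theorem exists_isSumSq_map_eq {f : F} (hf : Function.Surjective f) {b : B} (hb : IsSumSq b) :
    ∃ a, IsSumSq a ∧ f a = b := by
  induction hb with
  | zero => exact ⟨0, IsSumSq.zero, map_zero f⟩
  | sq_add y _ ih =>
    obtain ⟨a, ha, rfl⟩ := ih
    obtain ⟨x, rfl⟩ := hf y
    exact ⟨x * x + a, ha.sq_add x, by rw [map_add, map_mul]⟩

theorem isSemireal_of_ringHom_s3 {A B : Type*} [NonAssocSemiring A] [NonAssocSemiring B] [IsSemireal B]
    (f : A →+* B) : IsSemireal A where
  one_add_ne_zero hs h0 := IsSemireal.one_add_ne_zero (isSumSq_map_s3 f hs) <| by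
    rw [← map_one f, ← map_add, h0, map_zero]

theorem isSumSq_inv_mul {k : Type*} [Field k] {a b : k} (ha : IsSumSq a) (hb : IsSumSq b) :
    IsSumSq (a⁻¹ * b) := by
  rcases eq_or_ne a 0 with rfl | h0
  · simp
  · rw [show a⁻¹ * b = a⁻¹ * a⁻¹ * (a * b) by field_simp]
    exact (IsSumSq.mul_self _).mul (ha.mul hb)

end SumsOfSquares

section MaximalSemireal

open IntermediateField

/-- The field `S` is semireal and, inside its extension `Ω`, cannot be enlarged to a semireal field
by adjoining one element `β`. The latter is expressed by writing `-1` as a sum of squares of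
polynomials in `β`. -/
structure IsMaximalSemireal_s3 (S Ω : Type*) [Field S] [Field Ω] [Algebra S Ω] : Prop where
  isSemireal : IsSemireal S
  exists_isSumSq_aeval_eq_neg_one : ∀ β ∉ Set.range (algebraMap S Ω),
    ∃ q : S[X], IsSumSq q ∧ Polynomial.aeval β q = -1

variable {k Ω : Type*} [Field k] [Field Ω] [Algebra k Ω]

theorem isSemireal_iSup_of_directed {ι : Type*} [Nonempty ι] {S : ι → IntermediateField k Ω}
    (hdir : Directed (· ≤ ·) S) (hS : ∀ i, IsSemireal (S i)) :
    IsSemireal (⨆ i, S i : IntermediateField k Ω) := by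
  have hmem (x : Ω) : x ∈ (⨆ i, S i) ↔ ∃ i, x ∈ S i := by
    rw [← SetLike.mem_coe, coe_iSup_of_directed hdir, Set.mem_iUnion]
    rfl
  have hdescend (r : (⨆ i, S i : IntermediateField k Ω)) (hr : IsSumSq r) :
      ∃ i, ∃ s : S i, IsSumSq s ∧ (s : Ω) = r := by
    induction hr with
    | zero => exact ⟨Classical.arbitrary ι, 0, IsSumSq.zero, rfl⟩
    | sq_add x _ ih =>
      obtain ⟨i, s, hs, hsr⟩ := ih
      obtain ⟨j, hj⟩ := (hmem x).1 x.2
      obtain ⟨l, hil, hjl⟩ := hdir i j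
      refine ⟨l, ⟨x, hjl hj⟩ * ⟨x, hjl hj⟩ + inclusion hil s,
        (isSumSq_map_s3 (inclusion hil) hs).sq_add _, ?_⟩
      push_cast
      rw [← hsr]
      rfl
  refine .of_not_isSumSq_neg_one fun h => ?_
  obtain ⟨i, s, hs, hneg⟩ := hdescend _ h
  obtain rfl : s = -1 := Subtype.ext hneg
  have := hS i
  exact IsSemireal.not_isSumSq_neg_one _ hs

theorem exists_maximal_isSemireal (k Ω : Type*) [Field k] [Field Ω] [Algebra k Ω] [IsSemireal k] :
    ∃ S : IntermediateField k Ω, Maximal (fun S : IntermediateField k Ω => IsSemireal S) S := by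
  have hbot : IsSemireal (⊥ : IntermediateField k Ω) :=
    isSemireal_of_ringHom_s3 (botEquiv k Ω : _ →+* k)
  obtain ⟨S, -, hS⟩ := zorn_le_nonempty₀ {S : IntermediateField k Ω | IsSemireal S}
    (fun c hc hchain T hT => by
      have : Nonempty c := ⟨T, hT⟩
      refine ⟨⨆ S : c, S, isSemireal_iSup_of_directed hchain.directed fun S => hc S.2,
        fun S hS => le_iSup (fun S : c => (S : IntermediateField k Ω)) ⟨S, hS⟩⟩) ⊥ hbot
  exact ⟨S, hS⟩

theorem aeval_adjoinSimple_gen_surjective {β : Ω} (hβ : IsAlgebraic k β) :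
    Function.Surjective (Polynomial.aeval (R := k) (AdjoinSimple.gen k β)) := by
  intro x
  have hx : (x : Ω) ∈ Algebra.adjoin k {β} :=
    adjoin_simple_toSubalgebra_of_isAlgebraic hβ ▸ x.2
  rw [Algebra.adjoin_singleton_eq_range_aeval] at hx
  obtain ⟨p, hp⟩ := hx
  refine ⟨p, Subtype.ext (Eq.trans ?_ hp)⟩
  exact (Polynomial.aeval_algebraMap_apply Ω (AdjoinSimple.gen k β) p).symm

theorem exists_isMaximalSemireal (k Ω : Type*) [Field k] [Field Ω] [Algebra k Ω] [IsSemireal k]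
    [Algebra.IsAlgebraic k Ω] : ∃ S : IntermediateField k Ω, IsMaximalSemireal_s3 S Ω := by
  obtain ⟨S, hS⟩ := exists_maximal_isSemireal k Ω
  refine ⟨S, hS.prop, fun β hβ => ?_⟩
  have hneg : IsSumSq (-1 : S⟮β⟯) := by
    by_contra hneg
    have hle : S ≤ S⟮β⟯.restrictScalars k := fun x hx => S⟮β⟯.algebraMap_mem ⟨x, hx⟩
    have hge := hS.le_of_ge (isSemireal_iff_not_isSumSq_neg_one.2 hneg) hle
    exact hβ ⟨⟨β, hge (mem_adjoin_simple_self S β)⟩, rfl⟩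
  have hβ : IsAlgebraic S β := (Algebra.IsAlgebraic.isAlgebraic (R := k) β).tower_top S
  obtain ⟨q, hq, hqβ⟩ := exists_isSumSq_map_eq (aeval_adjoinSimple_gen_surjective hβ) hneg
  refine ⟨q, hq, ?_⟩
  have hmap := Polynomial.aeval_algebraMap_apply Ω (AdjoinSimple.gen S β) q
  rwa [hqβ, map_neg, map_one, AdjoinSimple.algebraMap_gen] at hmap

end MaximalSemireal

section SquareRoot

variable {S Ω : Type*} [CommRing S] [Nontrivial S] [CommRing Ω] [Algebra S Ω]

theorem exists_aeval_eq_add_mul {a : S} {β : Ω} (hβ : β * β = algebraMap S Ω a) (p : S[X]) :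
    ∃ x y : S, Polynomial.aeval β p = algebraMap S Ω x + algebraMap S Ω y * β := by
  have hmonic := Polynomial.monic_X_pow_sub_C a two_ne_zero
  have hroot : Polynomial.aeval β (Polynomial.X ^ 2 - Polynomial.C a) = 0 := by
    simp [pow_two, hβ]
  have hdeg : (p %ₘ (Polynomial.X ^ 2 - Polynomial.C a)).natDegree ≤ 1 := by
    have := Polynomial.natDegree_modByMonic_lt p hmonic (by
      intro h
      simpa using congrArg Polynomial.natDegree h)
    rw [Polynomial.natDegree_X_pow_sub_C] at this
    lia
  obtain ⟨y, x, hxy⟩ := Polynomial.exists_eq_X_add_C_of_natDegree_le_one hdeg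
  refine ⟨x, y, ?_⟩
  rw [← Polynomial.aeval_modByMonic_eq_self_of_root hroot, hxy]
  simp [add_comm]

theorem exists_aeval_eq_of_isSumSq {a : S} {β : Ω} (hβ : β * β = algebraMap S Ω a) {q : S[X]}
    (hq : IsSumSq q) : ∃ u v w : S, IsSumSq u ∧ IsSumSq v ∧
      Polynomial.aeval β q = algebraMap S Ω (u + a * v) + algebraMap S Ω w * β := by
  induction hq with
  | zero => exact ⟨0, 0, 0, IsSumSq.zero, IsSumSq.zero, by simp⟩
  | sq_add p _ ih =>
    obtain ⟨u, v, w, hu, hv, huvw⟩ := ih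
    obtain ⟨x, y, hp⟩ := exists_aeval_eq_add_mul hβ p
    refine ⟨x * x + u, y * y + v, 2 * (x * y) + w, hu.sq_add _, hv.sq_add _, ?_⟩
    rw [map_add, map_mul, hp, huvw]
    simp only [map_add, map_mul, ← hβ, map_ofNat]
    ring

end SquareRoot

section Descent

theorem natDegree_ne_zero_of_eval_mul_neg {R : Type*} [CommRing R] [LinearOrder R]
    [IsStrictOrderedRing R] {h : R[X]} {a b : R} (hneg : h.eval a * h.eval b < 0) :
    h.natDegree ≠ 0 := by
  intro h0
  rw [Polynomial.eq_C_of_natDegree_eq_zero h0, Polynomial.eval_C, Polynomial.eval_C] at hneg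
  exact hneg.not_ge (mul_self_nonneg _)

variable {S : Type*} [Field S]

theorem exists_isSumSq_dvd_sub_natDegree_le {h q : S[X]} (hd : h.natDegree ≠ 0) (hq : IsSumSq q) :
    ∃ r : S[X], IsSumSq r ∧ h ∣ q - r ∧ r.natDegree ≤ 2 * (h.natDegree - 1) := by
  induction hq with
  | zero => exact ⟨0, IsSumSq.zero, by simp, by simp⟩
  | @sq_add p s _ ih =>
    obtain ⟨r, hr, hdvd, hdeg⟩ := ih
    refine ⟨p % h * (p % h) + r, hr.sq_add _, ?_, ?_⟩
    · have hmod : h ∣ p - p % h :=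
        ⟨p / h, by rw [EuclideanDomain.mod_eq_sub_mul_div, sub_sub_cancel]⟩
      rw [show p * p + s - (p % h * (p % h) + r) = (p - p % h) * (p + p % h) + (s - r) by ring]
      exact dvd_add (hmod.mul_right _) hdvd
    · have hlt := Polynomial.natDegree_mod_lt p hd
      refine (Polynomial.natDegree_add_le _ _).trans (max_le ?_ hdeg)
      refine Polynomial.natDegree_mul_le.trans ?_
      lia

variable [LinearOrder S] [IsStrictOrderedRing S]

theorem mem_Ioo_of_irreducible_of_eval_eq_zero {f : S[X]} (hf : Irreducible f) {a b c : S}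
    (hab : a < b) (hneg : f.eval a * f.eval b < 0) (hc : f.eval c = 0) : c ∈ Set.Ioo a b := by
  obtain ⟨g, rfl⟩ := Polynomial.dvd_iff_isRoot.2 hc
  have hg : IsUnit g := (hf.isUnit_or_isUnit rfl).resolve_left (Polynomial.not_isUnit_X_sub_C c)
  obtain ⟨u, -, rfl⟩ := Polynomial.isUnit_iff.1 hg
  simp only [Polynomial.eval_mul, Polynomial.eval_sub, Polynomial.eval_X, Polynomial.eval_C,
    mul_mul_mul_comm _ u] at hneg
  rcases mul_neg_iff.1 (neg_of_mul_neg_left hneg (mul_self_nonneg u)) with ⟨ha, hb⟩ | ⟨ha, hb⟩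
  · linarith
  · exact ⟨sub_neg.1 ha, sub_pos.1 hb⟩

/- If `h h' = 1 + q` with `q` a sum of squares of degree at most `2 (deg h - 1)`, then `h'` changes
sign along with `h` and has smaller degree. -/
theorem not_dvd_one_add_isSumSq {h q : S[X]} {a b : S} (hneg : h.eval a * h.eval b < 0)
    (hq : IsSumSq q) : ¬ h ∣ 1 + q := by
  induction hN : h.natDegree using Nat.strong_induction_on generalizing h q with
  | _ N ih =>
    subst hN
    intro hdvd
    have hd := natDegree_ne_zero_of_eval_mul_neg hneg
    obtain ⟨r, hr, hqr, hdeg⟩ := exists_isSumSq_dvd_sub_natDegree_le hd hq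
    obtain ⟨h', hh'⟩ : h ∣ 1 + r := by
      convert! dvd_sub hdvd hqr using 1
      ring
    have hpos (c : S) : 0 < h.eval c * h'.eval c := by
      have hrc : 0 ≤ r.eval c := (isSumSq_map_s3 (Polynomial.evalRingHom c) hr).nonneg
      rw [← Polynomial.eval_mul, ← hh', Polynomial.eval_add, Polynomial.eval_one]
      positivity
    have hneg' : h'.eval a * h'.eval b < 0 := by
      by_contra! hnonneg
      have hprod := mul_pos (hpos a) (hpos b)
      have := mul_nonpos_of_nonpos_of_nonneg hneg.le hnonneg
      linarith
    have hlt : h'.natDegree < h.natDegree := by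
      have hmul := congrArg Polynomial.natDegree hh'
      have hle : (1 + r).natDegree ≤ 2 * (h.natDegree - 1) :=
        (Polynomial.natDegree_add_le _ _).trans (max_le (by simp) hdeg)
      rw [hmul, Polynomial.natDegree_mul (by rintro rfl; simp at hneg)
        (by rintro rfl; simp at hneg')] at hle
      lia
    exact ih _ hlt hneg' hr rfl (Dvd.intro_left h hh'.symm)

end Descent

namespace IsMaximalSemireal_s3

variable {S Ω : Type*} [Field S] [Field Ω] [Algebra S Ω]

theorem isSumSq_or_isSumSq_neg [IsAlgClosed Ω] (hS : IsMaximalSemireal_s3 S Ω) (a : S) :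
    IsSumSq a ∨ IsSumSq (-a) := by
  obtain ⟨β, hβ⟩ := IsAlgClosed.exists_eq_mul_self (algebraMap S Ω a)
  by_cases hmem : β ∈ Set.range (algebraMap S Ω)
  · obtain ⟨c, rfl⟩ := hmem
    rw [← map_mul] at hβ
    rw [(algebraMap S Ω).injective hβ]
    exact .inl (IsSumSq.mul_self c)
  obtain ⟨q, hq, hqβ⟩ := hS.exists_isSumSq_aeval_eq_neg_one β hmem
  obtain ⟨u, v, w, hu, hv, huvw⟩ := exists_aeval_eq_of_isSumSq hβ.symm hq
  obtain rfl : w = 0 := by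
    by_contra hw
    refine hmem ⟨(-1 - (u + a * v)) / w, ?_⟩
    rw [map_div₀, div_eq_iff ((map_ne_zero _).2 hw), map_sub, map_neg, map_one]
    linear_combination hqβ.symm.trans huvw
  have huv : 1 + u = -a * v := by
    refine (algebraMap S Ω).injective ?_
    simp only [map_zero, zero_mul, add_zero, map_add, map_mul] at huvw
    simp only [map_add, map_mul, map_neg, map_one]
    linear_combination huvw.symm.trans hqβ
  have := hS.isSemireal
  have hv0 : v ≠ 0 := by
    rintro rfl
    exact IsSemireal.one_add_ne_zero hu (by rw [huv, mul_zero])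
  rw [show -a = v⁻¹ * (1 + u) by rw [huv]; field_simp]
  exact .inr (isSumSq_inv_mul hv (IsSumSq.one.add hu))

theorem exists_linearOrder [IsAlgClosed Ω] (hS : IsMaximalSemireal_s3 S Ω) :
    ∃ _ : LinearOrder S, IsStrictOrderedRing S := by
  classical
  have := hS.isSemireal
  let C : RingCone S :=
    { Subsemiring.sumSq S with
      eq_zero_of_mem_of_neg_mem' := fun {a} ha hneg => by
        replace ha : IsSumSq a := Subsemiring.mem_sumSq.1 ha
        replace hneg : IsSumSq (-a) := Subsemiring.mem_sumSq.1 hneg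
        by_contra h0
        refine IsSemireal.not_isSumSq_neg_one S ?_
        rw [show (-1 : S) = a⁻¹ * -a by field_simp]
        exact isSumSq_inv_mul ha hneg }
  have : HasMemOrNegMem C := ⟨fun a =>
    (hS.isSumSq_or_isSumSq_neg a).imp Subsemiring.mem_sumSq.2 Subsemiring.mem_sumSq.2⟩
  let order : LinearOrder S := LinearOrder.mkOfAddGroupCone C
  have : IsOrderedRing S := IsOrderedRing.mkOfCone C
  exact ⟨order, IsOrderedRing.toIsStrictOrderedRing S⟩

variable [LinearOrder S] [IsStrictOrderedRing S]

theorem exists_root_of_irreducible [IsAlgClosed Ω] (hS : IsMaximalSemireal_s3 S Ω) {f : S[X]}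
    (hf : Irreducible f) {a b : S} (hneg : f.eval a * f.eval b < 0) : ∃ c, f.eval c = 0 := by
  obtain ⟨β, hβ⟩ := IsAlgClosed.exists_aeval_eq_zero Ω f hf.degree_pos.ne'
  by_cases hmem : β ∈ Set.range (algebraMap S Ω)
  · obtain ⟨c, rfl⟩ := hmem
    rw [Polynomial.aeval_algebraMap_apply, Polynomial.coe_aeval_eq_eval, map_eq_zero] at hβ
    exact ⟨c, hβ⟩
  obtain ⟨q, hq, hqβ⟩ := hS.exists_isSumSq_aeval_eq_neg_one β hmem
  have hdvd : minpoly S β ∣ 1 + q := minpoly.dvd S β (by rw [map_add, map_one, hqβ, add_neg_cancel])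
  have hint : IsIntegral S β := isAlgebraic_iff_isIntegral.1 ⟨f, hf.ne_zero, hβ⟩
  have hassoc := (minpoly.irreducible hint).associated_of_dvd hf (minpoly.dvd S β hβ)
  exact absurd (hassoc.symm.dvd.trans hdvd) (not_dvd_one_add_isSumSq hneg hq)

theorem hasPolynomialIVP [IsAlgClosed Ω] (hS : IsMaximalSemireal_s3 S Ω) : HasPolynomialIVP_s3 S where
  exists_root_of_eval_mul_neg {f a b} hab hneg := by
    induction f using WfDvdMonoid.induction_on_irreducible with
    | zero => simp at hneg
    | unit f hf =>
      exact absurd (Polynomial.natDegree_eq_zero_of_isUnit hf)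
        (natDegree_ne_zero_of_eval_mul_neg hneg)
    | mul g f _ hf ih =>
      rw [Polynomial.eval_mul, Polynomial.eval_mul, mul_mul_mul_comm] at hneg
      rcases mul_neg_iff.1 hneg with ⟨-, hg⟩ | ⟨hfneg, -⟩
      · obtain ⟨c, hc, hroot⟩ := ih hg
        exact ⟨c, hc, by rw [Polynomial.eval_mul, hroot, mul_zero]⟩
      · obtain ⟨c, hroot⟩ := hS.exists_root_of_irreducible hf hfneg
        exact ⟨c, mem_Ioo_of_irreducible_of_eval_eq_zero hf hab hfneg hroot,
          by rw [Polynomial.eval_mul, hroot, zero_mul]⟩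

end IsMaximalSemireal_s3

universe u in
theorem exists_hasPolynomialIVP_algebra (k : Type u) [Field k] [IsSemireal k] :
    ∃ (K : Type u) (_ : Field K) (_ : LinearOrder K) (_ : IsStrictOrderedRing K) (_ : Algebra k K),
      HasPolynomialIVP_s3 K := by
  obtain ⟨S, hS⟩ := exists_isMaximalSemireal k (AlgebraicClosure k)
  obtain ⟨order, hring⟩ := hS.exists_linearOrder
  exact ⟨S, inferInstance, order, hring, inferInstance, hS.hasPolynomialIVP⟩

section RealPoints

theorem mem_range_algebraMap_real_of_isAlgebraic {K : Type*} [Field K] [IsSemireal K] [Algebra ℝ K]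
    {x : K} (hx : IsAlgebraic ℝ x) : x ∈ Set.range (algebraMap ℝ K) := by
  have := IntermediateField.isAlgebraic_adjoin_simple hx.isIntegral
  rcases Real.nonempty_algEquiv_or (IntermediateField.adjoin ℝ {x}) with ⟨⟨e⟩⟩ | ⟨⟨e⟩⟩
  · refine ⟨e (IntermediateField.AdjoinSimple.gen ℝ x), ?_⟩
    have h := e.symm.commutes (e (IntermediateField.AdjoinSimple.gen ℝ x))
    rw [Algebra.algebraMap_self_apply, AlgEquiv.symm_apply_apply] at h
    exact congrArg Subtype.val h.symm
  · have : IsSemireal ℂ :=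
      isSemireal_of_ringHom_s3 ((algebraMap (IntermediateField.adjoin ℝ {x}) K).comp e.symm.toRingHom)
    exact absurd (Complex.I_mul_I ▸ IsSumSq.mul_self Complex.I) (IsSemireal.not_isSumSq_neg_one ℂ)

instance isIntegrallyClosedIn_real {K : Type*} [Field K] [IsSemireal K] [Algebra ℝ K] :
    IsIntegrallyClosedIn ℝ K :=
  isIntegrallyClosedIn_iff.2 ⟨(algebraMap ℝ K).injective, fun hx =>
    mem_range_algebraMap_real_of_isAlgebraic hx.isAlgebraic⟩

theorem HasSolution.real {k ι κ : Type*} [Field k] [IsSemireal k] [Algebra ℝ k] [Finite ι]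
    [Finite κ] {g : κ → MvPolynomial ι ℝ} {h : MvPolynomial ι ℝ} (hk : HasSolution g h k) :
    HasSolution g h ℝ := by
  obtain ⟨K, _, _, _, _, _⟩ := exists_hasPolynomialIVP_algebra k
  let algebra : Algebra ℝ K := ((algebraMap k K).comp (algebraMap ℝ k)).toAlgebra
  have : IsScalarTower ℝ k K := .of_algebraMap_eq fun _ => rfl
  exact (hk.map (φ := IsScalarTower.toAlgHom ℝ k K)
    (algebraMap k K).injective).of_isIntegrallyClosedIn

end RealPoints

section Separation

open scoped nonZeroDivisors

theorem exists_dual_eq_zero_and_ne_zero {R : Type*} (K : Type*) {E V : Type*} [CommRing R] [Field K]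
    [Algebra R K] [IsFractionRing R K] [AddCommGroup E] [Module R E] [AddCommGroup V] [Module R V]
    [Module K V] [IsScalarTower R K V] (f : E →ₗ[R] V) [IsLocalizedModule R⁰ f]
    {N : Submodule R E} {u : E} (hu : ∀ s ∈ R⁰, s • u ∉ N) :
    ∃ F : Module.Dual K V, (∀ t ∈ N, F (f t) = 0) ∧ F (f u) ≠ 0 := by
  have hmem : f u ∉ N.localized' K R⁰ f := by
    intro h
    obtain ⟨t, ht, s, hts⟩ := (Submodule.mem_localized' K R⁰ f N (f u)).1 h
    rw [IsLocalizedModule.mk'_eq_iff, Submonoid.smul_def, ← map_smul] at hts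
    obtain ⟨c, hc⟩ := IsLocalizedModule.exists_of_eq (S := R⁰) hts
    refine hu (c * s) (c * s).2 ?_
    rw [mul_smul]
    exact hc ▸ N.smul_mem c ht
  obtain ⟨F, hFu, hF⟩ := Submodule.exists_le_ker_of_notMem hmem
  refine ⟨F, fun t ht => hF ?_, hFu⟩
  rw [Submodule.localized'_eq_span]
  exact Submodule.subset_span (Set.mem_image_of_mem f ht)

theorem isLocalizedModule_mapMatrix {R K ι κ : Type*} [CommRing R] [CommRing K] [Algebra R K]
    [Finite ι] [Finite κ] (S : Submonoid R) [IsLocalization S K] :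
    IsLocalizedModule S ((Algebra.linearMap R K).mapMatrix (m := ι) (n := κ)) :=
  inferInstanceAs (IsLocalizedModule S (.pi fun i : ι =>
    (.pi fun j : κ => Algebra.linearMap R K ∘ₗ .proj j) ∘ₗ .proj i))

theorem dual_matrix_apply {K ι κ : Type*} [CommSemiring K] [Fintype ι] [Fintype κ] [DecidableEq ι]
    [DecidableEq κ] (F : Module.Dual K (Matrix ι κ K)) (M : Matrix ι κ K) :
    F M = ∑ i, (M *ᵥ fun j => F (single i j 1)) i := by
  have hsingle (i : ι) (j : κ) : F (single i j (M i j)) = M i j * F (single i j 1) := by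
    rw [← smul_eq_mul, ← map_smul, smul_single, smul_eq_mul, mul_one]
  conv_lhs => rw [matrix_eq_sum_single M]
  simp only [map_sum, hsingle]
  rfl

theorem exists_mulVec_eq_zero_and_ne_zero {R : Type*} (K : Type*) {ι : Type*} [CommRing R] [Field K]
    [Algebra R K] [IsFractionRing R K] [Fintype ι] [DecidableEq ι]
    {N : Ideal (Matrix ι ι R)} {Q : Matrix ι ι R} (hQ : ∀ s ∈ R⁰, s • Q ∉ N) :
    ∃ v : ι → K, (∀ M ∈ N, M.map (algebraMap R K) *ᵥ v = 0) ∧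
      Q.map (algebraMap R K) *ᵥ v ≠ 0 := by
  have := isLocalizedModule_mapMatrix (K := K) (ι := ι) (κ := ι) R⁰
  obtain ⟨F, hN, hFQ⟩ := exists_dual_eq_zero_and_ne_zero K (N := N.restrictScalars R)
    (Algebra.linearMap R K).mapMatrix hQ
  rw [dual_matrix_apply] at hFQ
  obtain ⟨i, -, hi⟩ := Finset.exists_ne_zero_of_sum_ne_zero hFQ
  refine ⟨fun j => F (single i j 1), fun M hM => funext fun r => ?_, fun h => hi (congrFun h i)⟩
  have hrow := hN _ (N.mul_mem_left (single i r 1) hM)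
  rw [dual_matrix_apply, Finset.sum_eq_single i] at hrow
  · simpa [mulVec, dotProduct] using hrow
  · intro j _ hj
    simp [mulVec, dotProduct, single_mul_apply_of_ne _ _ _ _ _ hj]
  · simp

end Separation

section FormallyReal

open scoped nonZeroDivisors

theorem exists_mul_self_mul_eq_algebraMap {R : Type*} (K : Type*) [CommRing R] [CommRing K]
    [Algebra R K] (S : Submonoid R) [IsLocalization S K] {x : K} (hx : IsSumSq x) :
    ∃ b ∈ S, ∃ c, IsSumSq c ∧ algebraMap R K (b * b) * x = algebraMap R K c := by
  induction hx with
  | zero => exact ⟨1, S.one_mem, 0, IsSumSq.zero, by simp⟩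
  | sq_add y _ ih =>
    obtain ⟨b, hb, c, hc, hbc⟩ := ih
    obtain ⟨⟨p, s⟩, hps⟩ := IsLocalization.surj S y
    refine ⟨b * s, S.mul_mem hb s.2, b * p * (b * p) + s * s * c,
      ((IsSumSq.mul_self _).mul hc).sq_add _, ?_⟩
    simp only [map_mul, map_add] at hbc ⊢
    linear_combination
      algebraMap R K b ^ 2 * (y * algebraMap R K s + algebraMap R K p) * hps +
        algebraMap R K s ^ 2 * hbc

theorem isSemireal_of_isFractionRing (R K : Type*) [CommRing R] [IsFormallyReal R] [Field K]
    [Algebra R K] [IsFractionRing R K] : IsSemireal K where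
  one_add_ne_zero {x} hx h0 := by
    obtain ⟨b, hb, c, hc, hbc⟩ := exists_mul_self_mul_eq_algebraMap K R⁰ hx
    have hsum : b * b + c = 0 := by
      refine IsFractionRing.injective R K ?_
      rw [map_add, ← hbc, map_zero, ← mul_one_add, h0, mul_zero]
    have hbb : b * b = 0 := IsFormallyReal.eq_zero_of_add_right (.mul_self b) hc hsum
    have : Nontrivial R := (algebraMap R K).domain_nontrivial
    exact zero_notMem_nonZeroDivisors (hbb ▸ R⁰.mul_mem hb hb)

theorem exists_eq_sum_mul_self {R : Type*} [AddCommMonoid R] [Mul R] {c : R} (hc : IsSumSq c) :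
    ∃ (k : ℕ) (a : Fin k → R), c = ∑ i, a i * a i := by
  induction hc with
  | zero => exact ⟨0, Fin.elim0, by simp⟩
  | sq_add b _ ih =>
    obtain ⟨k, a, rfl⟩ := ih
    exact ⟨k + 1, Fin.cons b a, by simp [Fin.sum_univ_succ]⟩

end FormallyReal

section RealLeftIdeals

open scoped nonZeroDivisors

universe u

variable {A : Type u} [CommRing A] {n : ℕ} {I : Ideal (Matrix (Fin n) (Fin n) A)}
  {Q : Matrix (Fin n) (Fin n) A}

theorem isRealLeftIdealT_mem (hI : I.IsRealLeftIdealT) {W : Matrix (Fin n) (Fin n) A}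
    (hW : Wᵀ * W ∈ I) : W ∈ I :=
  hI 1 (fun _ => W) (by simpa using hW) 0

theorem isRealLeftIdealT_comap_smul (hI : I.IsRealLeftIdealT) (b : A) :
    Ideal.IsRealLeftIdealT (Submodule.comap (DistribSMul.toLinearMap _ _ b) I) := by
  intro k B hB
  refine hI k (fun i => b • B i) ?_
  convert! I.smul_of_tower_mem b (Submodule.mem_comap.1 hB) using 1
  simp [Finset.smul_sum]

/-- The ideal of scalars `a` with `a • Q ∈ I`, for a left ideal `I` of a matrix ring. -/
def scalarColon (I : Ideal (Matrix (Fin n) (Fin n) A)) (Q : Matrix (Fin n) (Fin n) A) : Ideal A :=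
  (I.restrictScalars A).colon {Q}

theorem mem_scalarColon {a : A} : a ∈ scalarColon I Q ↔ a • Q ∈ I :=
  Submodule.mem_colon_singleton

theorem exists_maximal_isRealLeftIdealT_notMem (hI : I.IsRealLeftIdealT) (hQ : Q ∉ I) :
    ∃ I', I ≤ I' ∧ Maximal (fun I' => I'.IsRealLeftIdealT ∧ Q ∉ I') I' := by
  refine zorn_le_nonempty₀ {I' | I'.IsRealLeftIdealT ∧ Q ∉ I'} (fun c hc hchain N hN => ?_) I
    ⟨hI, hQ⟩
  have hmem {M} : M ∈ sSup c ↔ ∃ I' ∈ c, M ∈ I' :=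
    Submodule.mem_sSup_of_directed ⟨N, hN⟩ hchain.directedOn
  refine ⟨sSup c, ⟨fun k B hB i => ?_, fun hQc => ?_⟩, fun I' hI' => le_sSup hI'⟩
  · obtain ⟨I', hI', hB⟩ := hmem.1 hB
    exact hmem.2 ⟨I', hI', (hc hI').1 k B hB i⟩
  · obtain ⟨I', hI', hQ'⟩ := hmem.1 hQc
    exact (hc hI').2 hQ'

theorem isFormallyReal_quotient_scalarColon (hI : I.IsRealLeftIdealT) :
    IsFormallyReal (A ⧸ scalarColon I Q) := by
  refine .of_eq_zero_of_eq_zero_of_mul_self_add fun {s x} hs h0 => ?_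
  obtain ⟨c, hc, rfl⟩ := exists_isSumSq_map_eq Ideal.Quotient.mk_surjective hs
  obtain ⟨b, rfl⟩ := Ideal.Quotient.mk_surjective x
  obtain ⟨k, a, rfl⟩ := exists_eq_sum_mul_self hc
  rw [← map_mul, ← map_add, Ideal.Quotient.eq_zero_iff_mem, mem_scalarColon] at h0
  rw [Ideal.Quotient.eq_zero_iff_mem, mem_scalarColon]
  refine hI (k + 1) (Fin.cons (b • Q) fun i => a i • Q) ?_ 0
  convert! I.mul_mem_left Qᵀ h0 using 1
  simp [Fin.sum_univ_succ, add_smul, mul_add, Finset.sum_smul, Finset.mul_sum, smul_smul]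

theorem mul_mem_of_forall_mem_scalarColon {W : Matrix (Fin n) (Fin n) A}
    (hW : ∀ i j, W i j ∈ scalarColon I Q) : W * Q ∈ I := by
  rw [matrix_eq_sum_single W, Finset.sum_mul]
  refine sum_mem fun i _ => Finset.sum_mul _ _ Q ▸ sum_mem fun j _ => ?_
  have hsingle : single i j (W i j) * Q = single i j 1 * W i j • Q := by
    rw [mul_smul_comm, ← smul_mul_assoc, smul_single, smul_eq_mul, mul_one]
  exact hsingle ▸ I.mul_mem_left _ (mem_scalarColon.1 (hW i j))

theorem mem_scalarColon_of_forall_sub_mem (hI : I.IsRealLeftIdealT) {s : A}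
    {T : Matrix (Fin n) (Fin n) A} (hT : T ∈ I) (hs : ∀ i j, (s • Q - T) i j ∈ scalarColon I Q) :
    s ∈ scalarColon I Q := by
  have hsq : (s • Q - T)ᵀ * (s • Q - T) ∈ I := by
    rw [mul_sub, mul_smul_comm]
    exact I.sub_mem (I.smul_of_tower_mem s (mul_mem_of_forall_mem_scalarColon fun i j => hs j i))
      (I.mul_mem_left _ hT)
  exact mem_scalarColon.2 ((I.sub_mem_iff_left hT).1 (isRealLeftIdealT_mem hI hsq))

theorem isPrime_scalarColon (hI : Maximal (fun I => I.IsRealLeftIdealT ∧ Q ∉ I) I) :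
    (scalarColon I Q).IsPrime := by
  refine ⟨fun htop => hI.prop.2 ?_, fun {a b} hab => or_iff_not_imp_right.2 fun hb => ?_⟩
  · rw [← one_smul A Q, ← mem_scalarColon, htop]
    exact Submodule.mem_top
  · have hle : I ≤ Submodule.comap (DistribSMul.toLinearMap _ _ b) I :=
      fun M hM => I.smul_of_tower_mem b hM
    have hge := hI.le_of_ge ⟨isRealLeftIdealT_comap_smul hI.prop.1 b, mt mem_scalarColon.2 hb⟩ hle
    refine mem_scalarColon.2 (hge ?_)
    rwa [mem_scalarColon, mul_comm, mul_smul] at hab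

theorem exists_isSemireal_mulVec_of_maximal
    (hI : Maximal (fun I => I.IsRealLeftIdealT ∧ Q ∉ I) I) :
    ∃ (k : Type u) (_ : Field k) (_ : IsSemireal k) (π : A →+* k) (v : Fin n → k),
      (∀ M ∈ I, M.map π *ᵥ v = 0) ∧ Q.map π *ᵥ v ≠ 0 := by
  have := isPrime_scalarColon hI
  have := isFormallyReal_quotient_scalarColon hI.prop.1 (Q := Q)
  let π := Ideal.Quotient.mk (scalarColon I Q)
  have hsurj : Function.Surjective (π.mapMatrix (m := Fin n)) :=
    fun M => ⟨M.map (Function.surjInv Ideal.Quotient.mk_surjective),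
      Matrix.ext fun i j => Function.surjInv_eq _ (M i j)⟩
  have hsep : ∀ s ∈ (A ⧸ scalarColon I Q)⁰, s • π.mapMatrix Q ∉ I.map π.mapMatrix := by
    intro s hs hmem
    obtain ⟨s, rfl⟩ := Ideal.Quotient.mk_surjective s
    obtain ⟨T, hT, hTs⟩ := (Ideal.mem_map_iff_of_surjective _ hsurj).1 hmem
    refine nonZeroDivisors.ne_zero hs (Ideal.Quotient.eq_zero_iff_mem.2 ?_)
    refine mem_scalarColon_of_forall_sub_mem hI.prop.1 hT fun i j => ?_
    rw [← Ideal.Quotient.eq_zero_iff_mem]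
    have hentry : π (T i j) = π s * π (Q i j) := congrFun (congrFun hTs i) j
    simp [π, hentry]
  obtain ⟨v, hv, hQv⟩ := exists_mulVec_eq_zero_and_ne_zero (FractionRing (A ⧸ scalarColon I Q)) hsep
  refine ⟨_, _, isSemireal_of_isFractionRing (A ⧸ scalarColon I Q) _,
    (algebraMap _ (FractionRing _)).comp π, v, fun M hM => ?_, ?_⟩
  · exact hv _ (Ideal.mem_map_of_mem _ hM)
  · exact hQv

theorem exists_isSemireal_mulVec_of_notMem (hI : I.IsRealLeftIdealT) (hQ : Q ∉ I) :
    ∃ (k : Type u) (_ : Field k) (_ : IsSemireal k) (π : A →+* k) (v : Fin n → k),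
      (∀ M ∈ I, M.map π *ᵥ v = 0) ∧ Q.map π *ᵥ v ≠ 0 := by
  obtain ⟨I', hle, hI'⟩ := exists_maximal_isRealLeftIdealT_notMem hI hQ
  obtain ⟨k, hk, hsemireal, π, v, hv, hQv⟩ := exists_isSemireal_mulVec_of_maximal hI'
  exact ⟨k, hk, hsemireal, π, v, fun M hM => hv M (hle hM), hQv⟩

end RealLeftIdeals

section Transfer

variable {σ R ι : Type*} [CommSemiring R] [Fintype ι]

/-- The entries of `M v` for a matrix polynomial `M` and a vector of indeterminates `v`: polynomials
in the variables `Sum.inl s` of `M` and the coordinates `Sum.inr j` of `v`. -/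
noncomputable def mulVecForm (M : Matrix ι ι (MvPolynomial σ R)) (i : ι) : MvPolynomial (σ ⊕ ι) R :=
  (M.map (rename Sum.inl) *ᵥ fun j => X (Sum.inr j)) i

theorem aeval_mulVecForm {S : Type*} [CommSemiring S] [Algebra R S]
    (M : Matrix ι ι (MvPolynomial σ R)) (i : ι) (z : σ ⊕ ι → S) :
    MvPolynomial.aeval z (mulVecForm M i) =
      (M.map (MvPolynomial.aeval (z ∘ Sum.inl)) *ᵥ (z ∘ Sum.inr)) i := by
  simp [mulVecForm, mulVec, dotProduct, aeval_rename]

theorem exists_real_mulVec_of_isSemireal {k σ κ ι : Type*} [Field k] [IsSemireal k] [Finite σ]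
    [Finite κ] [Fintype ι] {P : κ → Matrix ι ι (MvPolynomial σ ℝ)}
    {Q : Matrix ι ι (MvPolynomial σ ℝ)} (π : MvPolynomial σ ℝ →+* k) {v : ι → k}
    (hP : ∀ i, (P i).map π *ᵥ v = 0) (hQ : Q.map π *ᵥ v ≠ 0) :
    ∃ (a : σ → ℝ) (w : ι → ℝ), (∀ i, (P i).map (eval a) *ᵥ w = 0) ∧ Q.map (eval a) *ᵥ w ≠ 0 := by
  let algebra : Algebra ℝ k := (π.comp MvPolynomial.C).toAlgebra
  let φ : MvPolynomial σ ℝ →ₐ[ℝ] k := { π with commutes' := fun _ => rfl }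
  have hπ : ⇑(MvPolynomial.aeval fun s => π (X s)) = π :=
    congrArg DFunLike.coe (aeval_unique φ).symm
  obtain ⟨r, hr⟩ := Function.ne_iff.1 hQ
  have hsol : HasSolution (fun p : κ × ι => mulVecForm (P p.1) p.2) (mulVecForm Q r) k :=
    ⟨Sum.elim (fun s => π (X s)) v, fun p => by
      simp only [aeval_mulVecForm, Sum.elim_comp_inl, Sum.elim_comp_inr, hπ, hP, Pi.zero_apply], by
      rwa [aeval_mulVecForm, Sum.elim_comp_inl, Sum.elim_comp_inr, hπ]⟩
  obtain ⟨z, hzP, hzQ⟩ := hsol.real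
  refine ⟨z ∘ Sum.inl, z ∘ Sum.inr, fun i => funext fun j => ?_, fun h => hzQ ?_⟩
  · exact (aeval_mulVecForm (P i) j z).symm.trans (hzP (i, j))
  · exact (aeval_mulVecForm Q r z).trans (congrFun h r)

end Transfer

section VanishingIdeal

variable {A B ι : Type*} [CommRing A] [CommRing B] [Fintype ι] [DecidableEq ι]

/-- The left ideal of the matrices over `A` that annihilate the vector `v` after their entries are
mapped to `B`, for instance by evaluation at a point. -/
def vanishingLeftIdeal (f : A →+* B) (v : ι → B) : Ideal (Matrix ι ι A) where
  carrier := {M | M.map f *ᵥ v = 0}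
  add_mem' {M N} hM hN := by
    simp_all only [Set.mem_ofPred_eq, Matrix.map_add f (map_add f), add_mulVec, add_zero]
  zero_mem' := by simp
  smul_mem' M N hN := by
    simp_all only [Set.mem_ofPred_eq, smul_eq_mul, Matrix.map_mul, ← mulVec_mulVec, mulVec_zero]

theorem mem_vanishingLeftIdeal {f : A →+* B} {v : ι → B} {M : Matrix ι ι A} :
    M ∈ vanishingLeftIdeal f v ↔ M.map f *ᵥ v = 0 :=
  Iff.rfl

theorem isRealLeftIdealT_vanishingLeftIdeal [LinearOrder B] [IsStrictOrderedRing B] {n : ℕ}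
    (f : A →+* B) (v : Fin n → B) : (vanishingLeftIdeal f v).IsRealLeftIdealT := by
  intro k M hM
  have hsq (N : Matrix (Fin n) (Fin n) A) :
      (N.map f *ᵥ v) ⬝ᵥ (N.map f *ᵥ v) = v ⬝ᵥ (f.mapMatrix (Nᵀ * N) *ᵥ v) := by
    rw [RingHom.mapMatrix_apply, Matrix.map_mul, ← mulVec_mulVec, transpose_map,
      dotProduct_mulVec v, vecMul_transpose]
  have hsum : ∑ i, ((M i).map f *ᵥ v) ⬝ᵥ ((M i).map f *ᵥ v) = 0 := by
    simp only [hsq, ← dotProduct_sum, ← sum_mulVec, ← map_sum]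
    rw [RingHom.mapMatrix_apply, mem_vanishingLeftIdeal.1 hM, dotProduct_zero]
  have hnonneg (i) : 0 ≤ ((M i).map f *ᵥ v) ⬝ᵥ ((M i).map f *ᵥ v) :=
    Finset.sum_nonneg fun j _ => mul_self_nonneg _
  intro i
  exact dotProduct_self_eq_zero.1
    ((Finset.sum_eq_zero_iff_of_nonneg fun i _ => hnonneg i).1 hsum i (Finset.mem_univ i))

end VanishingIdeal

/-- **Matricial Real Nullstellensatz (Theorem D).** -/
theorem matricial_real_nullstellensatz (d n m : ℕ)
    (P : Fin m → Matrix (Fin n) (Fin n) (MvPolynomial (Fin d) ℝ))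
    (Q : Matrix (Fin n) (Fin n) (MvPolynomial (Fin d) ℝ)) :
    (∀ (a : Fin d → ℝ) (v : Fin n → ℝ),
        (∀ i, (evalMat a (P i)).mulVec v = 0) → (evalMat a Q).mulVec v = 0) ↔
      (∀ I : Ideal (Matrix (Fin n) (Fin n) (MvPolynomial (Fin d) ℝ)),
        I.IsRealLeftIdealT → (∀ i, P i ∈ I) → Q ∈ I) := by
  constructor
  · intro H I hI hP
    by_contra hQ
    obtain ⟨k, _, _, π, v, hv, hQv⟩ := exists_isSemireal_mulVec_of_notMem hI hQ
    obtain ⟨a, w, hPw, hQw⟩ := exists_real_mulVec_of_isSemireal π (fun i => hv _ (hP i)) hQv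
    exact hQw (H a w hPw)
  · intro H a v hPv
    exact H (vanishingLeftIdeal (eval a) v) (isRealLeftIdealT_vanishingLeftIdeal (eval a) v) hPv
end
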